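/- Let V be a finite-dimensional real vector space and let G be a virtually solvable subgroup of GL(V). Then there exists a closed virtually solvable subgroup H of GL(V) containing G such that: (1) H has finitely many connected components and each connected component of H meets G; (2) (syndeticity) there exists a compact subset K ⊆ H such that H = K·G, i.e., every element of H is a product k·g with k ∈ K and g ∈ G. -/

import Mathlib

/-!
# Syndetic hulls of virtually solvable linear groups

Up to finite index, `G` is triangular over `ℂ`: there is a normal subgroup `Γ` of finite index in
`G` which generates a real algebra `S` that is commutative modulo a nilpotent ideal `J`
(`exists_commIdeal_pow`, a Lie–Kolchin–Mal'cev theorem deduced from `exists_eigenvector`). An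
overgroup `Q` of `Γ` is built inside the units of `S`, which form a closed solvable group.

*Unipotent part.* Let `N` be the Zariski closure of the group of those elements of `Γ` that are
congruent to `1` modulo `J`. Every element of `N` is the exponential of an element of the Lie
algebra of `N`, so `N` is connected, and the unipotent elements of `Γ` are cocompact in `N`
(`exists_compact_zarHull`). As commutators of `Γ` are unipotent, `M = N Γ` is abelian modulo `N`.

*Semisimple part.* Each unit `x` factors uniquely as `ell x * exp (hyp x)`, with commuting factors,
where `ell x` generates a bounded group and `hyp x` has real eigenvalues. A one-parameter group
`exp (t a)` whose generator has real eigenvalues is an exponential polynomial with real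
exponents, so that a polynomial condition which holds at all integers `t` holds for all real `t`
(`ExpPoly.eq_zero_of_zeros`, by Rolle's theorem). The two factors of an element normalizing `N`
therefore normalize `N`, and one-parameter groups commute modulo `N` when their time-one maps do.
The elliptic parts need more care: multiplying `x` by an element of `N` changes `ell x` only by a
conjugation within `N` (`NilIdeal.ell_mul`), so a subalgebra `D` of minimal dimension meeting every
coset of `N` in `M` centralizes the elliptic parts of the elements of `M` that it contains
(`TriGroup.exists_red`).

*The hull.* Let `E` be the group generated by the elliptic parts of the elements of `D ∩ M`, let `X`
be the set of the `hyp δ` for these elements, and let `Q` be generated by `N`, `E` and the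
one-parameter groups `exp (t X)`. Then `Q` contains `Γ`, is abelian modulo `N`, and equals
`N exp (span X) E`. Commuting semisimple elliptic elements generate a bounded group
(`exists_bound`), so `E` has compact closure; the vector group `span X` has the elements of `X` as
a spanning set, and `exp (hyp δ) = (ell δ)⁻¹ δ` lies in `E M`. This makes `Γ` cocompact in `Q`
(`TriGroup.Red.exists_compact`). A compact commutative linear group is a finite union of translates
of a connected group, and every translate of `N exp (span X)` by an element of `E` meets `Γ`; hence
`Q` is covered by finitely many connected sets meeting `Γ` (`TriGroup.Red.exists_components`).
Finally, `Q` does not change if `D ∩ M` is replaced by `M`, so it is normalized by `G`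
(`TriGroup.Red.conj_Q`), and `H` is the closure of `Q G` (`exists_hull`).
-/

set_option linter.unusedSectionVars false

namespace SyndeticHull
open Filter Topology Polynomial

/-! ### Exponential polynomials -/

section ExpPoly
variable {E F G : Type*} [NormedAddCommGroup E] [NormedSpace ℝ E]
  [NormedAddCommGroup F] [NormedSpace ℝ F] [NormedAddCommGroup G] [NormedSpace ℝ G]

/-- Vector-valued exponential polynomials with real exponents, i.e. functions of `t` which are
sums of terms `t ^ k * exp (l * t) • v`.  They are encoded through the triangular system of linear
differential equations `f' = l f + g` that they satisfy. -/
inductive ExpPoly : (ℝ → E) → Prop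
  | zero : ExpPoly (fun _ => 0)
  | step (l : ℝ) (f g : ℝ → E) (h : ∀ t, HasDerivAt f (l • f t + g t) t) (hg : ExpPoly g) :
      ExpPoly f

lemma ExpPoly.shift {f : ℝ → E} (hf : ExpPoly f) (m : ℝ) :
    ∃ h, ExpPoly h ∧ ∀ t, HasDerivAt f (m • f t + h t) t := by
  induction hf with
  | zero => exact ⟨fun _ => 0, .zero, fun t => by simpa using hasDerivAt_const t (0 : E)⟩
  | step l f g h hg ih =>
    obtain ⟨h1, hh1, hd⟩ := ih
    refine ⟨fun t => (l - m) • f t + g t, .step l _ h1 (fun t => ?_) hh1, fun t => ?_⟩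
    · refine (((h t).const_smul (l - m)).add (hd t)).congr_deriv ?_
      module
    · refine (h t).congr_deriv ?_
      module

lemma ExpPoly.add {f g : ℝ → E} (hf : ExpPoly f) (hg : ExpPoly g) :
    ExpPoly (fun t => f t + g t) := by
  induction hf generalizing g with
  | zero => simpa using hg
  | step l f f1 h _ ih =>
    obtain ⟨g1, hg1, hd⟩ := hg.shift l
    refine .step l _ _ (fun t => ?_) (ih hg1)
    refine ((h t).add (hd t)).congr_deriv ?_
    module

lemma ExpPoly.clm {f : ℝ → E} (hf : ExpPoly f) (L : E →L[ℝ] F) : ExpPoly (fun t => L (f t)) := by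
  induction hf with
  | zero => simpa using ExpPoly.zero
  | step l f g h _ ih =>
    refine .step l _ _ (fun t => ?_) ih
    exact (L.hasFDerivAt.comp_hasDerivAt t (h t)).congr_deriv (by simp)

lemma ExpPoly.scale {f : ℝ → E} (hf : ExpPoly f) (c : ℝ) : ExpPoly (fun t => f (c * t)) := by
  induction hf with
  | zero => exact ExpPoly.zero
  | step l f g h _ ih =>
    refine .step (c * l) _ _ (fun t => ?_) (ih.clm (c • ContinuousLinearMap.id ℝ E))
    have := (h (c * t)).scomp t ((hasDerivAt_id t).const_mul c)
    exact this.congr_deriv (by simp [mul_smul])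

lemma ExpPoly.const (v : E) : ExpPoly (fun _ => v) :=
  .step 0 _ _ (fun t => by simpa using hasDerivAt_const t v) .zero

lemma ExpPoly.bilin {f : ℝ → E} {g : ℝ → F} (hf : ExpPoly f) (hg : ExpPoly g)
    (b : E →L[ℝ] F →L[ℝ] G) : ExpPoly (fun t => b (f t) (g t)) := by
  induction hf generalizing g with
  | zero => simpa using ExpPoly.zero
  | step l f f1 h _ ih =>
    induction hg with
    | zero => simpa using ExpPoly.zero
    | step m g g1 h' hg' ih' =>
      refine .step (l + m) _ _ (fun t => ?_) ((ih (.step m g g1 h' hg')).add ih')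
      have := (b.hasFDerivAt.comp_hasDerivAt t (h t)).clm_apply (h' t)
      refine this.congr_deriv ?_
      simp
      module

lemma ExpPoly.continuous {f : ℝ → E} (hf : ExpPoly f) : Continuous f := by
  cases hf with
  | zero => exact continuous_const
  | step l f g h _ => exact continuous_iff_continuousAt.2 fun t => (h t).continuousAt

/-- Rolle's theorem, applied to `exp (-l t) f t`. -/
lemma ExpPoly.eq_zero_of_zeros {f : ℝ → ℝ} (hf : ExpPoly f) (hz : ∀ a, ∃ t > a, f t = 0) (t : ℝ) :
    f t = 0 := by
  induction hf generalizing t with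
  | zero => rfl
  | step l f g h _ ih =>
    have hF : ∀ t, HasDerivAt (fun t => Real.exp (-l * t) * f t) (Real.exp (-l * t) * g t) t := by
      intro t
      have h1 : HasDerivAt (fun t => Real.exp (-l * t)) (Real.exp (-l * t) * (-l)) t := by
        simpa using ((hasDerivAt_id t).const_mul (-l)).exp
      refine (h1.mul (h t)).congr_deriv ?_
      simp only [smul_eq_mul]
      ring
    have hg0 : ∀ t, g t = 0 := by
      refine ih fun a => ?_
      obtain ⟨t1, h1, z1⟩ := hz a
      obtain ⟨t2, h2, z2⟩ := hz t1
      obtain ⟨c, hc, hc'⟩ := exists_hasDerivAt_eq_zero h2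
        (fun x _ => (hF x).continuousAt.continuousWithinAt) (by simp [z1, z2]) (fun x _ => hF x)
      refine ⟨c, h1.trans hc.1, ?_⟩
      simpa [Real.exp_ne_zero] using hc'
    obtain ⟨t0, -, z0⟩ := hz 0
    have := is_const_of_deriv_eq_zero (fun t => (hF t).differentiableAt)
      (fun t => by rw [(hF t).deriv, hg0 t, mul_zero]) t t0
    simpa [z0, Real.exp_ne_zero] using this

lemma ExpPoly.eq_zero_of_nat {f : ℝ → E} (hf : ExpPoly f) (hz : ∀ n : ℕ, f n = 0) (t : ℝ) :
    f t = 0 := by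
  by_contra hne
  obtain ⟨L, -, hL⟩ := exists_dual_vector ℝ (f t) (norm_ne_zero_iff.2 hne)
  have h0 := (hf.clm L).eq_zero_of_zeros (fun a => by
    obtain ⟨n, hn⟩ := exists_nat_gt a
    exact ⟨n, hn, by simp [hz n]⟩) t
  rw [h0] at hL
  exact hne (norm_eq_zero.1 (by simpa using hL.symm))

end ExpPoly

/-! ### The exponential in a real Banach algebra -/

open NormedSpace

section Exp
variable {B : Type*} [NormedRing B] [NormedAlgebra ℝ B] [CompleteSpace B]

lemma exp_add' {x y : B} (h : Commute x y) : exp (x + y) = exp x * exp y := by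
  let := NormedAlgebra.restrictScalars ℚ ℝ B
  exact exp_add_of_commute h

lemma continuous_exp' : Continuous (exp : B → B) := by
  let := NormedAlgebra.restrictScalars ℚ ℝ B
  exact exp_continuous

lemma exp_nsmul' (n : ℕ) (x : B) : exp (n • x) = exp x ^ n := by
  let := NormedAlgebra.restrictScalars ℚ ℝ B
  exact exp_nsmul n x

lemma exp_conj' (y : Bˣ) (x : B) : exp (y * x * ↑y⁻¹ : B) = y * exp x * ↑y⁻¹ := by
  let := NormedAlgebra.restrictScalars ℚ ℝ B
  exact exp_units_conj y x

lemma map_exp' {B' : Type*} [NormedRing B'] [NormedAlgebra ℝ B'] [CompleteSpace B']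
    (f : B →ₐ[ℝ] B') (hf : Continuous f) (x : B) : f (exp x) = exp (f x) := by
  let := NormedAlgebra.restrictScalars ℚ ℝ B
  let := NormedAlgebra.restrictScalars ℚ ℝ B'
  exact map_exp f hf x

lemma exp_mul_exp_neg (x : B) : exp x * exp (-x) = 1 := by
  rw [← exp_add' (Commute.refl x).neg_right, add_neg_cancel, exp_zero]

lemma exp_neg_mul_exp (x : B) : exp (-x) * exp x = 1 := by
  simpa using exp_mul_exp_neg (-x)

/-- The exponential, as an element of the group of units. -/
noncomputable def expU (x : B) : Bˣ := ⟨exp x, exp (-x), exp_mul_exp_neg x, exp_neg_mul_exp x⟩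

@[simp] lemma val_expU (x : B) : (expU x : B) = exp x := rfl

@[simp] lemma val_inv_expU (x : B) : ((expU x)⁻¹ : Bˣ) = exp (-x) := rfl

lemma expU_neg (x : B) : expU (-x) = (expU x)⁻¹ := Units.ext rfl

lemma expU_zero : expU (0 : B) = 1 := Units.ext exp_zero

lemma expU_add {x y : B} (h : Commute x y) : expU (x + y) = expU x * expU y := Units.ext (exp_add' h)

lemma expU_nsmul (n : ℕ) (x : B) : expU (n • x) = expU x ^ n :=
  Units.ext (by simpa using exp_nsmul' n x)

lemma expU_zsmul (n : ℤ) (x : B) : expU (n • x) = expU x ^ n := by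
  obtain ⟨k, rfl | rfl⟩ := n.eq_nat_or_neg
  · simpa using expU_nsmul k x
  · simpa [expU_neg] using expU_nsmul k x

lemma expU_conj (y : Bˣ) (x : B) : expU (y * x * ↑y⁻¹ : B) = y * expU x * y⁻¹ :=
  Units.ext (by simpa using exp_conj' y x)

lemma expU_commute {x y : B} (h : Commute x y) : Commute (expU x) (expU y) := by
  rw [Commute, SemiconjBy, ← expU_add h, ← expU_add h.symm, add_comm]

lemma continuous_expU : Continuous (expU : B → Bˣ) :=
  Units.continuous_iff.2 ⟨continuous_exp', continuous_exp'.comp continuous_neg⟩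

lemma hasDerivAt_expt (a : B) (t : ℝ) : HasDerivAt (fun u : ℝ => exp (u • a)) (a * exp (t • a)) t :=
  hasDerivAt_exp_smul_const' a t

lemma commute_expt (a : B) (t : ℝ) : Commute a (exp (t • a)) :=
  ((Commute.refl a).smul_right t).exp_right

lemma hasDerivAt_expt_mul (a c : B) (t : ℝ) :
    HasDerivAt (fun u : ℝ => exp (u • a) * c) (a * (exp (t • a) * c)) t := by
  rw [← mul_assoc]
  exact (hasDerivAt_expt a t).mul_const c

/-- Uniqueness for the linear differential equation `F' = A F`. -/
lemma eq_exp_of_ode {F : ℝ → B} {a : B} (h0 : F 0 = 1) (h : ∀ t, HasDerivAt F (a * F t) t) (t : ℝ) :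
    F t = exp (t • a) := by
  have hd : ∀ t, HasDerivAt (fun u : ℝ => exp (u • (-a)) * F u) 0 t := by
    intro t
    have hc := (commute_expt (-a) t).eq
    refine ((hasDerivAt_expt (-a) t).mul (h t)).congr_deriv ?_
    rw [hc]
    noncomm_ring
  have := is_const_of_deriv_eq_zero (fun t => (hd t).differentiableAt) (fun t => (hd t).deriv) t 0
  simp only [zero_smul, h0, smul_neg, neg_zero, exp_zero, one_mul] at this
  calc F t = exp (t • a) * (exp (-(t • a)) * F t) := by
        rw [← mul_assoc, exp_mul_exp_neg, one_mul]
    _ = _ := by rw [this, mul_one]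

lemma exp_mul_eigen {a b : B} {l : ℝ} (h : a * b = l • b) (t : ℝ) :
    exp (t • a) * b = Real.exp (l * t) • b := by
  have hd : ∀ t, HasDerivAt (fun u : ℝ => Real.exp (-l * u) • (exp (u • a) * b)) 0 t := by
    intro t
    have h1 : HasDerivAt (fun t => Real.exp (-l * t)) (Real.exp (-l * t) * (-l)) t := by
      simpa using ((hasDerivAt_id t).const_mul (-l)).exp
    refine (h1.smul (hasDerivAt_expt_mul a b t)).congr_deriv ?_
    rw [← mul_assoc, (commute_expt a t).eq, mul_assoc, h, mul_smul_comm]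
    module
  have := is_const_of_deriv_eq_zero (fun t => (hd t).differentiableAt) (fun t => (hd t).deriv) t 0
  simp only [zero_smul, exp_zero, one_mul, mul_zero, Real.exp_zero, one_smul] at this
  nth_rw 2 [← this]
  rw [smul_smul, ← Real.exp_add]
  simp

/-- `a` is of real type if the one-parameter group it generates is an exponential polynomial with
real exponents, i.e. if all its eigenvalues are real. -/
def RealType (a : B) : Prop := ExpPoly (fun t : ℝ => exp (t • a))

lemma ExpPoly.mul {f g : ℝ → B} (hf : ExpPoly f) (hg : ExpPoly g) : ExpPoly (fun t => f t * g t) :=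
  hf.bilin hg (ContinuousLinearMap.mul ℝ B)

lemma RealType.smul {a : B} (ha : RealType a) (c : ℝ) : RealType (c • a) := by
  have := ExpPoly.scale ha c
  simpa [RealType, smul_smul, mul_comm] using this

lemma RealType.neg {a : B} (ha : RealType a) : RealType (-a) := by
  simpa using ha.smul (-1)

lemma RealType.add {a b : B} (ha : RealType a) (hb : RealType b) (h : Commute a b) :
    RealType (a + b) := by
  have := ExpPoly.mul ha hb
  unfold RealType
  convert this using 2 with t
  rw [smul_add, exp_add' ((h.smul_left t).smul_right t)]

lemma expPoly_of_multiset (a : B) (s : Multiset ℝ) (c : B)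
    (h : aeval a (s.map (fun l => X - C l)).prod * c = 0) :
    ExpPoly (fun t : ℝ => exp (t • a) * c) := by
  induction s using Multiset.induction_on generalizing c with
  | empty =>
    have : c = 0 := by simpa using h
    simpa [this] using ExpPoly.zero
  | cons l s ih =>
    have h1 : ExpPoly (fun t : ℝ => exp (t • a) * (a * c - l • c)) := by
      apply ih
      rw [Multiset.map_cons, Multiset.prod_cons, mul_comm, map_mul, mul_assoc] at h
      rw [← h]
      congr 1
      simp [sub_mul, Algebra.smul_def]
    refine .step l _ _ (fun t => ?_) h1
    refine (hasDerivAt_expt_mul a c t).congr_deriv ?_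
    rw [← mul_assoc a, (commute_expt a t).eq]
    simp [mul_sub, mul_assoc]

lemma realType_of_multiset (a : B) (s : Multiset ℝ)
    (h : aeval a (s.map (fun l => X - C l)).prod = 0) : RealType a := by
  have := expPoly_of_multiset a s 1 (by rw [h, zero_mul])
  simpa [RealType] using this

lemma realType_of_nilpotent {a : B} {K : ℕ} (h : a ^ K = 0) : RealType a :=
  realType_of_multiset a (Multiset.replicate K 0) (by simp [h])

lemma realType_zero : RealType (0 : B) := realType_of_nilpotent (K := 1) (by simp)

/-- A bounded orbit of a one-parameter group of real type is constant. -/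
lemma mul_eq_zero_of_bounded {a : B} {f : ℝ → B} (hf : ExpPoly f) (c : B)
    (hfc : ∀ t, f t = exp (t • a) * c) (hb : ∃ C, ∀ t : ℝ, ‖exp (t • a) * c‖ ≤ C) : a * c = 0 := by
  induction hf generalizing c with
  | zero =>
    have : c = 0 := by simpa using (hfc 0).symm
    simp [this]
  | step l f g h _ ih =>
    obtain ⟨C, hC⟩ := hb
    have hswap : ∀ (t : ℝ) (c : B), exp (t • a) * (a * c) = a * (exp (t • a) * c) := by
      intro t c
      rw [← mul_assoc, ← mul_assoc, (commute_expt a t).eq]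
    have hbd : ∀ t : ℝ, ‖exp (t • a) * (a * c)‖ ≤ ‖a‖ * C := fun t => by
      rw [hswap]
      exact (norm_mul_le _ _).trans (by gcongr; exact hC t)
    have hk : a * (a * c - l • c) = 0 := by
      refine ih _ (fun t => ?_) ⟨‖a‖ * C + ‖l‖ * C, fun t => ?_⟩
      · have h2 := hasDerivAt_expt_mul a c t
        have h1 := h t
        rw [show f = fun t => exp (t • a) * c from funext hfc] at h1
        have := h1.unique h2
        rw [mul_sub, hswap, ← this, mul_smul_comm]
        simp
      · rw [mul_sub, mul_smul_comm]
        refine (norm_sub_le _ _).trans (add_le_add (hbd t) ?_)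
        rw [norm_smul]
        gcongr
        exact hC t
    by_cases hl : l = 0
    · subst hl
      rw [zero_smul, sub_zero] at hk
      -- here `exp (t a) c = c + t (a c)`
      have hd : ∀ t, HasDerivAt (fun u : ℝ => exp (u • a) * c - u • (a * c)) 0 t := by
        intro t
        refine ((hasDerivAt_expt_mul a c t).sub ((hasDerivAt_id t).smul_const (a * c))).congr_deriv ?_
        rw [← hswap, exp_mul_eigen (l := 0) (by simpa using hk)]
        simp
      have hlin : ∀ t : ℝ, exp (t • a) * c = c + t • (a * c) := fun t => by
        have := is_const_of_deriv_eq_zero (fun t => (hd t).differentiableAt)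
          (fun t => (hd t).deriv) t 0
        simp only [zero_smul, exp_zero, one_mul, sub_zero] at this
        exact sub_eq_iff_eq_add.1 this
      by_contra hne
      have hpos : 0 < ‖a * c‖ := norm_pos_iff.2 hne
      obtain ⟨n, hn⟩ := exists_nat_gt ((C + ‖c‖) / ‖a * c‖)
      have h1 : ‖(n : ℝ) • (a * c)‖ ≤ C + ‖c‖ := by
        have : (n : ℝ) • (a * c) = exp ((n : ℝ) • a) * c - c := by rw [hlin]; abel
        rw [this]
        exact (norm_sub_le _ _).trans (by gcongr; exact hC _)
      rw [div_lt_iff₀ hpos] at hn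
      rw [norm_smul] at h1
      simp at h1
      linarith
    · have hb' : a * (a * c) = l • (a * c) := by
        rw [mul_sub, mul_smul_comm] at hk
        exact sub_eq_zero.1 hk
      by_contra hne
      have hpos : 0 < ‖a * c‖ := norm_pos_iff.2 hne
      obtain ⟨n, hn⟩ := exists_nat_gt (‖a‖ * C / ‖a * c‖)
      rw [div_lt_iff₀ hpos] at hn
      have h1 := hbd (n / l)
      rw [exp_mul_eigen hb', mul_div_cancel₀ _ hl, norm_smul, Real.norm_of_nonneg (Real.exp_nonneg _)]
        at h1
      have h2 : (n : ℝ) ≤ Real.exp n := by linarith [Real.add_one_le_exp (n : ℝ)]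
      nlinarith

lemma RealType.eq_zero_of_bounded {a : B} (ha : RealType a)
    (hb : ∃ C, ∀ m : ℤ, ‖exp ((m : ℝ) • a)‖ ≤ C) : a = 0 := by
  obtain ⟨C, hC⟩ := hb
  have hcont : Continuous fun t : ℝ => exp (t • a) := continuous_exp'.comp (by fun_prop)
  obtain ⟨C', hC'⟩ := isCompact_Icc.exists_bound_of_continuousOn
    (s := Set.Icc (0 : ℝ) 1) hcont.continuousOn
  have := mul_eq_zero_of_bounded (a := a) ha 1 (fun t => by simp) ⟨C * C', fun t => ?_⟩
  · simpa using this
  · have h1 : t • a = (⌊t⌋ : ℝ) • a + Int.fract t • a := by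
      rw [← add_smul, Int.floor_add_fract]
    rw [mul_one, h1, exp_add' (((Commute.refl a).smul_left _).smul_right _)]
    refine (norm_mul_le _ _).trans ?_
    have h2 := hC' (Int.fract t) ⟨Int.fract_nonneg t, (Int.fract_lt_one t).le⟩
    have h3 := hC ⌊t⌋
    exact mul_le_mul h3 h2 (norm_nonneg _) ((norm_nonneg _).trans h3)

end Exp

/-! ### The logarithm of a unipotent element -/

section Log
variable {B : Type*} [NormedRing B] [NormedAlgebra ℝ B] [CompleteSpace B]

/-- The logarithm of `x`, as a polynomial in `x - 1`; meaningful when `(x - 1) ^ K = 0`. -/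
noncomputable def lg (K : ℕ) (x : B) : B :=
  ∑ i ∈ Finset.range K, ((-1) ^ i / (i + 1) : ℝ) • (x - 1) ^ (i + 1)

lemma hasDerivAt_exp_comp {w : ℝ → B} {w' : B} {t : ℝ} (hw : HasDerivAt w w' t)
    (hc : ∀ u, Commute (w t) (w u)) : HasDerivAt (fun u => exp (w u)) (exp (w t) * w') t := by
  have h0 : HasFDerivAt (exp : B → B) (1 : B →L[ℝ] B) (w t - w t) := by
    rw [sub_self]; exact hasFDerivAt_exp_zero
  have h1 := (h0.comp_hasDerivAt t (hw.sub_const (w t))).const_mul (exp (w t))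
  refine (h1.congr_of_eventuallyEq (Eventually.of_forall fun u => ?_)).congr_deriv (by simp)
  simp only [Function.comp]
  rw [← exp_add' ((hc u).sub_right (Commute.refl _)), add_sub_cancel]

lemma exp_lg {K : ℕ} {x : B} (hx : (x - 1) ^ K = 0) : exp (lg K x) = x := by
  set y := x - 1 with hy
  let w : ℝ → B := fun t => ∑ i ∈ Finset.range K, ((-1) ^ i / (i + 1) * t ^ (i + 1) : ℝ) • y ^ (i + 1)
  let w' : ℝ → B := fun t => ∑ i ∈ Finset.range K, ((-1) ^ i * t ^ i : ℝ) • y ^ (i + 1)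
  have hw : ∀ t, HasDerivAt w (w' t) t := fun t => by
    refine HasDerivAt.fun_sum fun i _ => HasDerivAt.smul_const ?_ _
    refine ((hasDerivAt_pow (i + 1) t).const_mul ((-1) ^ i / (i + 1) : ℝ)).congr_deriv ?_
    have : (i + 1 : ℝ) ≠ 0 := by positivity
    push_cast
    field_simp
  have hyw : ∀ t, Commute y (w t) := fun t =>
    Commute.sum_right _ _ _ fun i _ => ((Commute.refl y).pow_right _).smul_right _
  have hyw' : ∀ t, Commute y (w' t) := fun t =>
    Commute.sum_right _ _ _ fun i _ => ((Commute.refl y).pow_right _).smul_right _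
  have hww : ∀ t u, Commute (w t) (w u) := fun t u =>
    Commute.sum_right _ _ _ fun i _ => ((hyw t).symm.pow_right _).smul_right _
  have hgeo : ∀ t : ℝ, w' t * (1 + t • y) = y := fun t => by
    have h1 : w' t = y * ∑ i ∈ Finset.range K, (-(t • y)) ^ i := by
      rw [Finset.mul_sum]
      refine Finset.sum_congr rfl fun i _ => ?_
      rw [← neg_smul, _root_.smul_pow, neg_pow t, mul_smul_comm, pow_succ']
    have h2 := geom_sum_mul_neg (-(t • y)) K
    rw [sub_neg_eq_add] at h2
    rw [h1, mul_assoc, h2, ← neg_smul, _root_.smul_pow, hx]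
    simp
  have hd : ∀ t, HasDerivAt (fun t : ℝ => exp (-w t) * (1 + t • y)) 0 t := fun t => by
    have h1 := hasDerivAt_exp_comp (hw t).neg (fun u => ((hww t u).neg_left).neg_right)
    have h2 : HasDerivAt (fun t : ℝ => 1 + t • y) y t := by
      simpa using ((hasDerivAt_id t).smul_const y).const_add 1
    refine (h1.mul h2).congr_deriv ?_
    simp only [Pi.neg_apply]
    rw [mul_assoc, neg_mul, hgeo]
    simp
  have := is_const_of_deriv_eq_zero (fun t => (hd t).differentiableAt) (fun t => (hd t).deriv) 1 0
  have hw0 : w 0 = 0 := by simp [w]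
  have hw1 : w 1 = lg K x := by simp [w, lg, hy]
  simp only [hw0, hw1, neg_zero, exp_zero, zero_smul, add_zero, mul_one, one_smul] at this
  have hx1 : (1 : B) + y = x := by rw [hy]; abel
  rw [hx1] at this
  calc exp (lg K x) = exp (lg K x) * (exp (-lg K x) * x) := by rw [this, mul_one]
    _ = x := by rw [← mul_assoc, exp_mul_exp_neg, one_mul]

lemma eq_of_exp_eq {a b : B} (ha : RealType a) (hb : RealType b) (hc : Commute a b)
    (h : exp a = exp b) : a = b := by
  refine sub_eq_zero.1 (RealType.eq_zero_of_bounded (a := a - b) ?_ ⟨‖(1 : B)‖, fun m => ?_⟩)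
  · rw [sub_eq_add_neg]; exact ha.add hb.neg hc.neg_right
  · have h1 : expU (a - b) = 1 := by
      refine Units.ext ?_
      rw [sub_eq_add_neg, val_expU, exp_add' hc.neg_right, h, exp_mul_exp_neg]; rfl
    have h2 : expU ((m : ℝ) • (a - b)) = 1 := by
      rw [Int.cast_smul_eq_zsmul, expU_zsmul, h1, one_zpow]
    rw [← val_expU, h2]; simp

lemma lg_pow {K : ℕ} {x : B} (hx : (x - 1) ^ K = 0) : (lg K x) ^ K = 0 := by
  have h1 : lg K x = (x - 1) * ∑ i ∈ Finset.range K, ((-1) ^ i / (i + 1) : ℝ) • (x - 1) ^ i := by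
    rw [lg, Finset.mul_sum]
    exact Finset.sum_congr rfl fun i _ => by rw [mul_smul_comm, pow_succ']
  have h2 : Commute (x - 1) (∑ i ∈ Finset.range K, ((-1) ^ i / (i + 1) : ℝ) • (x - 1) ^ i) :=
    Commute.sum_right _ _ _ fun i _ => ((Commute.refl _).pow_right _).smul_right _
  rw [h1, h2.mul_pow, hx, zero_mul]

lemma commute_lg {K : ℕ} {x y : B} (h : Commute y x) : Commute y (lg K x) :=
  Commute.sum_right _ _ _ fun _ _ =>
    ((h.sub_right (Commute.one_right y)).pow_right _).smul_right _

lemma lg_exp {K : ℕ} {a : B} (ha : a ^ K = 0) (ha' : (exp a - 1) ^ K = 0) :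
    lg K (exp a) = a := by
  refine eq_of_exp_eq (realType_of_nilpotent (lg_pow ha')) (realType_of_nilpotent ha)
    (commute_lg (Commute.refl a).exp_right).symm (exp_lg ha')

end Log

/-! ### The multiplicative Jordan decomposition in a commutative algebra -/

section Defs
variable {B : Type*} [NormedRing B] [NormedAlgebra ℝ B]

/-- A unit is elliptic if the group it generates is bounded. -/
def Elliptic (e : Bˣ) : Prop := ∃ C : ℝ, ∀ m : ℤ, ‖((e ^ m : Bˣ) : B)‖ ≤ C

/-- `b` is killed by a real polynomial all of whose roots are positive real numbers. -/
def PosSplit (b : B) : Prop :=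
  ∃ s : Multiset ℝ, (∀ r ∈ s, 0 < r) ∧ aeval b (s.map (fun l => X - C l)).prod = 0

/-- `b` is semisimple: it is killed by a squarefree polynomial. -/
def Semis (b : B) : Prop := ∃ q : ℝ[X], Squarefree q ∧ aeval b q = 0

end Defs

section Calculus
variable {R : Type*} [NormedCommRing R] [NormedAlgebra ℝ R]

/-- The evaluation of real polynomials on a finite set of complex numbers. -/
noncomputable def ev (Z : Finset ℂ) : ℝ[X] →ₐ[ℝ] (Z → ℂ) := AlgHom.pi fun z => aeval (z : ℂ)

@[simp] lemma ev_apply (Z : Finset ℂ) (p : ℝ[X]) (z : Z) : ev Z p z = aeval (z : ℂ) p := rfl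

/-- Lagrange interpolation with real coefficients. -/
lemma mem_range_ev {Z : Finset ℂ} (hZ : ∀ z ∈ Z, starRingEnd ℂ z ∈ Z) {f : ℂ → ℂ}
    (hf : ∀ z, f (starRingEnd ℂ z) = starRingEnd ℂ (f z)) :
    (fun z : Z => f z) ∈ (ev Z).range := by
  classical
  let p : ℂ[X] := Lagrange.interpolate Z id f
  have hp : ∀ z ∈ Z, p.eval z = f z := fun z hz =>
    Lagrange.eval_interpolate_at_node (v := id) f (Set.injOn_id _) hz
  let q : ℝ[X] := ∑ i ∈ Finset.range (p.natDegree + 1), monomial i (p.coeff i).re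
  refine ⟨q, funext fun z => ?_⟩
  have h1 := hp z z.2
  have h2 : starRingEnd ℂ (p.eval (starRingEnd ℂ (z : ℂ))) = f z := by
    rw [hp _ (hZ z z.2), hf, Complex.conj_conj]
  have h3 : ∀ i : ℕ, ((p.coeff i).re : ℂ) = (p.coeff i + starRingEnd ℂ (p.coeff i)) / 2 := fun i => by
    rw [Complex.add_conj]; simp
  change aeval (z : ℂ) q = f z
  rw [eval_eq_sum_range] at h1 h2
  simp only [map_sum, map_mul, map_pow, Complex.conj_conj] at h2
  simp only [q, map_sum, aeval_monomial, Complex.coe_algebraMap, h3]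
  rw [← mul_right_inj' (two_ne_zero' ℂ), two_mul (f z)]
  nth_rw 1 [← h1]
  rw [← h2, ← Finset.sum_add_distrib, Finset.mul_sum]
  exact Finset.sum_congr rfl fun i _ => by ring

/-- The polynomial functional calculus of an element killed by the squarefree polynomial `P`. -/
lemma exists_calculus {s : R} {P : ℝ[X]} (hP : Squarefree P) (hs : aeval s P = 0) {Z : Finset ℂ}
    (hZ : ∀ z, aeval z P = 0 → z ∈ Z) :
    ∃ F : (ev Z).range →ₐ[ℝ] R, ∀ p h, F ⟨ev _ p, h⟩ = aeval s p := by
  have hker : RingHom.ker (ev Z).rangeRestrict.toRingHom ≤ RingHom.ker (aeval s).toRingHom := by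
    intro p hp
    have hp' : ∀ z ∈ Z, aeval z p = 0 := fun z hz => by
      have := congrArg Subtype.val (RingHom.mem_ker.1 hp)
      exact congrFun this ⟨z, hz⟩
    have hdvd : P ∣ p := by
      rw [← map_dvd_map' (algebraMap ℝ ℂ)]
      by_cases h0 : p = 0
      · simp [h0]
      have hsep : (P.map (algebraMap ℝ ℂ)).Separable :=
        (PerfectField.separable_iff_squarefree.2 hP).map
      refine (IsAlgClosed.splits _).dvd_of_roots_le_roots (hsep.ne_zero) ?_
      rw [Multiset.le_iff_subset (nodup_roots hsep)]
      intro z hz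
      rw [mem_roots (by simpa [Polynomial.map_eq_zero] using h0), IsRoot.def, eval_map_algebraMap]
      refine hp' z (hZ z ?_)
      rw [← eval_map_algebraMap]
      exact (mem_roots'.1 hz).2
    obtain ⟨r, rfl⟩ := hdvd
    change aeval s (P * r) = 0
    simp [hs]
  refine ⟨AlgHom.liftOfSurjective (ev Z).rangeRestrict (ev Z).rangeRestrict_surjective (aeval s) hker,
    fun p h => ?_⟩
  exact AlgHom.liftOfSurjective_apply _ _ _ hker p

end Calculus

section Comm
variable {R : Type*} [NormedCommRing R] [NormedAlgebra ℝ R]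

lemma aeval_nilpotent_of_sub {a b : R} (h : IsNilpotent (a - b)) (p : ℝ[X])
    (ha : aeval a p = 0) : IsNilpotent (aeval b p) := by
  obtain ⟨c, hc⟩ : a - b ∣ aeval a p - aeval b p := by
    simpa [aeval_def, eval_map] using sub_dvd_eval_sub a b (p.map (algebraMap ℝ R))
  rw [ha, zero_sub] at hc
  rw [← neg_neg (aeval b p), hc, isNilpotent_neg_iff]
  exact (Commute.all _ _).isNilpotent_mul_right h

lemma posSplit_of_nilpotent {b : R} (s : Multiset ℝ) (hs : ∀ r ∈ s, 0 < r)
    (h : IsNilpotent (aeval b (s.map (fun l => X - C l)).prod)) : PosSplit b := by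
  obtain ⟨k, hk⟩ := h
  refine ⟨k • s, fun r hr => hs r (Multiset.mem_of_mem_nsmul hr), ?_⟩
  rw [Multiset.map_nsmul, Multiset.prod_nsmul, map_pow, hk]

variable [FiniteDimensional ℝ R] [CompleteSpace R]

lemma exists_semisimple_part (x : R) : ∃ s : R, IsNilpotent (x - s) ∧ Squarefree (minpoly ℝ s) := by
  obtain ⟨y, k, hy, -, hk⟩ := exists_squarefree_dvd_pow_of_ne_zero (minpoly.ne_zero_of_finite ℝ x)
  have hnil : IsNilpotent (aeval x y) := by
    obtain ⟨r, hr⟩ := hk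
    refine ⟨k, ?_⟩
    rw [← map_pow, hr, map_mul, minpoly.aeval, zero_mul]
  have hunit : IsUnit (aeval x (derivative y)) := by
    obtain ⟨a, b, hab⟩ := PerfectField.separable_iff_squarefree.2 hy
    have h1 : aeval x b * aeval x (derivative y) = 1 - aeval x a * aeval x y := by
      have := congrArg (aeval x) hab
      simp only [map_add, map_mul, map_one] at this
      rw [← this]; ring
    refine isUnit_of_mul_isUnit_right (x := aeval x b) ?_
    rw [h1]
    exact ((Commute.all _ _).isNilpotent_mul_left hnil).isUnit_one_sub
  obtain ⟨s, ⟨h1, h2⟩, -⟩ := existsUnique_nilpotent_sub_and_aeval_eq_zero hnil hunit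
  exact ⟨s, h1, hy.squarefree_of_dvd (minpoly.dvd ℝ s h2)⟩

lemma minpoly_eval_zero_ne {s : R} (hs : IsUnit s) : (minpoly ℝ s).coeff 0 ≠ 0 := by
  intro h
  obtain ⟨Q, hQ⟩ := X_dvd_iff.2 h
  have hne := minpoly.ne_zero_of_finite ℝ s
  have h0 : aeval s Q = 0 := by
    have := minpoly.aeval ℝ s
    rw [hQ, map_mul, aeval_X] at this
    exact (hs.mul_right_eq_zero).1 this
  have hQ0 : Q ≠ 0 := by rintro rfl; simp at hQ; exact hne hQ
  have h1 := natDegree_le_of_dvd (minpoly.dvd ℝ s h0) hQ0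
  rw [hQ, natDegree_X_mul hQ0] at h1
  omega

/-- The multiplicative Jordan decomposition `x = e * exp d` in a commutative algebra. The semisimple
part `s` of `x` has squarefree minimal polynomial; the elliptic factor `e` and the real part of `d` come from
`z / |z|` and `log |z|` applied to `s` by interpolation on its roots. -/
theorem jordan_comm (x : Rˣ) : ∃ (e : Rˣ) (d : R), x = e * expU d ∧ Elliptic e ∧ RealType d ∧
    PosSplit (exp d) ∧ Semis (e : R) ∧ (PosSplit (x : R) → e = 1) := by
  classical
  obtain ⟨s, hn, hsq⟩ := exists_semisimple_part (x : R)
  have hs : IsUnit s := by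
    have := (isNilpotent_neg_iff.2 hn).isUnit_add_left_of_commute x.isUnit (Commute.all _ _)
    simpa using this
  set P := minpoly ℝ s with hP
  have hP0 : P.map (algebraMap ℝ ℂ) ≠ 0 := by
    simpa [Polynomial.map_eq_zero] using hsq.ne_zero
  obtain ⟨Z, hmemZ⟩ : ∃ Z : Finset ℂ, ∀ z, z ∈ Z ↔ aeval z P = 0 :=
    ⟨(P.map (algebraMap ℝ ℂ)).roots.toFinset, fun z => by
      rw [Multiset.mem_toFinset, mem_roots hP0, IsRoot.def, eval_map_algebraMap]⟩
  have hconj : ∀ z ∈ Z, starRingEnd ℂ z ∈ Z := fun z hz => by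
    rw [hmemZ] at hz ⊢
    rw [aeval_conj, hz, map_zero]
  have hz0 : ∀ z ∈ Z, z ≠ 0 := by
    rintro z hz rfl
    rw [hmemZ] at hz
    refine minpoly_eval_zero_ne hs ?_
    simpa [← hP, aeval_def, eval₂_at_zero] using hz
  let T := (ev Z).range
  obtain ⟨F, hF⟩ : ∃ F : T →ₐ[ℝ] R, ∀ p h, F ⟨ev _ p, h⟩ = aeval s p :=
    exists_calculus hsq (minpoly.aeval ℝ s) fun z hz => (hmemZ z).2 hz
  have : CompleteSpace T := FiniteDimensional.complete ℝ T
  have hFc : Continuous F := F.toLinearMap.continuous_of_finiteDimensional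
  let mk (f : ℂ → ℂ) (hf : ∀ z, f (starRingEnd ℂ z) = starRingEnd ℂ (f z)) : T :=
    ⟨fun z : Z => f z, mem_range_ev hconj hf⟩
  have habs : ∀ z : ℂ, ‖starRingEnd ℂ z‖ = ‖z‖ := Complex.norm_conj
  let uT : T := mk (fun z => z / (‖z‖ : ℂ)) (fun z => by simp)
  let vT : T := mk (fun z => (‖z‖ : ℂ) / z) (fun z => by simp)
  let aT : T := mk (fun z => (‖z‖ : ℂ)) (fun z => by simp)
  let lT : T := mk (fun z => ((Real.log ‖z‖ : ℝ) : ℂ)) (fun z => by simp)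
  let iT : T := mk id (fun z => rfl)
  have huv : uT * vT = 1 := by
    ext z
    change ((z : ℂ) / (‖(z : ℂ)‖ : ℂ)) * ((‖(z : ℂ)‖ : ℂ) / z) = 1
    have h1 := hz0 z z.2
    have h2 : (‖(z : ℂ)‖ : ℂ) ≠ 0 := by simpa using h1
    field_simp
  have hia : iT = uT * aT := by
    ext z
    change (z : ℂ) = ((z : ℂ) / (‖(z : ℂ)‖ : ℂ)) * (‖(z : ℂ)‖ : ℂ)
    have h2 : (‖(z : ℂ)‖ : ℂ) ≠ 0 := by simpa using hz0 z z.2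
    field_simp
  have hexp : exp lT = aT := by
    apply Subtype.ext
    have h1 : T.val (exp lT) = exp (T.val lT) := map_exp' T.val continuous_subtype_val lT
    refine h1.trans (funext fun z => ?_)
    let := NormedAlgebra.restrictScalars ℚ ℝ ℂ
    rw [Pi.coe_exp, ← Complex.exp_eq_exp_ℂ]
    change Complex.exp ((Real.log ‖(z : ℂ)‖ : ℝ) : ℂ) = (‖(z : ℂ)‖ : ℂ)
    rw [← Complex.ofReal_exp, Real.exp_log (by simpa using hz0 z z.2)]
  have hFi : F iT = s := by
    have h1 : ev Z X = fun z : Z => id (z : ℂ) := funext fun z => by simp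
    have h2 : iT = ⟨ev Z X, AlgHom.mem_range_self _ _⟩ := Subtype.ext h1.symm
    rw [h2, hF, aeval_X]
  -- real-valued functions on `Z` give elements killed by real split polynomials
  have hreal : ∀ (r : ℂ → ℝ) (f : T), (∀ z : Z, f.1 z = (r z : ℂ)) →
      aeval (F f) ((Z.val.map r).map (fun l => X - C l)).prod = 0 := by
    intro r f hf
    have h1 : aeval f ((Z.val.map r).map (fun l => X - C l)).prod = 0 := by
      apply Subtype.ext
      funext z
      let χ : T →ₐ[ℝ] ℂ := (Pi.evalAlgHom ℝ (fun _ : Z => ℂ) z).comp T.val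
      change χ _ = 0
      rw [← aeval_algHom_apply, map_multiset_prod]
      refine Multiset.prod_eq_zero ?_
      simp only [Multiset.map_map, Multiset.mem_map]
      refine ⟨z, z.2, ?_⟩
      simp only [Function.comp, map_sub, aeval_X, aeval_C]
      change f.1 z - _ = 0
      rw [hf]; simp
    rw [aeval_algHom_apply, h1, map_zero]
  let uU : Tˣ := ⟨uT, vT, huv, by rw [mul_comm, huv]⟩
  let e : Rˣ := Units.map F.toMonoidHom uU
  have he : (e : R) = F uT := rfl
  let ds := F lT
  have hds : exp ds = F aT := by rw [← hexp, map_exp' F hFc]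
  have hsed : s = e * exp ds := by rw [← hFi, hia, map_mul, hds, he]
  -- the unipotent part
  obtain ⟨sU, hsU⟩ := hs
  let m : R := ↑sU⁻¹ * (x - s)
  have hm : IsNilpotent m := (Commute.all _ _).isNilpotent_mul_left hn
  obtain ⟨K, hK⟩ := hm
  have hK' : (1 + m - 1) ^ K = 0 := by simpa using hK
  let w := lg K (1 + m)
  have hw : exp w = 1 + m := exp_lg hK'
  have hwn : w ^ K = 0 := lg_pow hK'
  have hxs : (x : R) = s * (1 + m) := by
    rw [mul_add, mul_one, ← mul_assoc, ← hsU, Units.mul_inv, one_mul, hsU]; ring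
  have hdsr : RealType ds := realType_of_multiset ds _ (hreal (fun z => Real.log ‖z‖) lT fun z => rfl)
  refine ⟨e, ds + w, Units.ext ?_, ?_, hdsr.add (realType_of_nilpotent hwn) (Commute.all _ _),
    ?_, ?_, ?_⟩
  · rw [Units.val_mul, val_expU, exp_add' (Commute.all _ _), ← mul_assoc, ← hsed, hw, hxs]
  · -- the powers of `u` are bounded by `1`
    have hL : Continuous F.toLinearMap := hFc
    let L : T →L[ℝ] R := ⟨F.toLinearMap, hL⟩
    refine ⟨‖L‖ * 1, fun k => ?_⟩
    have h1 : ((e ^ k : Rˣ) : R) = L ((uU ^ k : Tˣ) : T) := by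
      rw [← map_zpow]; rfl
    rw [h1]
    refine (L.le_opNorm _).trans ?_
    gcongr
    change ‖((uU ^ k : Tˣ) : T).1‖ ≤ 1
    refine (pi_norm_le_iff_of_nonneg zero_le_one).2 fun z => ?_
    let χ : T →ₐ[ℝ] ℂ := (Pi.evalAlgHom ℝ (fun _ : Z => ℂ) z).comp T.val
    change ‖χ ((uU ^ k : Tˣ) : T)‖ ≤ 1
    have h2 : χ ((uU ^ k : Tˣ) : T) = (((Units.map χ.toMonoidHom uU) ^ k : ℂˣ) : ℂ) := by
      rw [← map_zpow]; rfl
    rw [h2, Units.val_zpow_eq_zpow_val, norm_zpow]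
    have h3 : ‖((Units.map χ.toMonoidHom uU : ℂˣ) : ℂ)‖ = 1 := by
      change ‖(z : ℂ) / (‖(z : ℂ)‖ : ℂ)‖ = 1
      have h2 : ‖(z : ℂ)‖ ≠ 0 := by simpa using hz0 z z.2
      rw [norm_div, Complex.norm_real, norm_norm, div_self h2]
    rw [h3, one_zpow]
  · refine posSplit_of_nilpotent (Z.val.map fun z => ‖z‖) ?_ (aeval_nilpotent_of_sub
      (a := exp ds) ?_ _ (hds ▸ hreal (fun z => ‖z‖) aT fun z => rfl))
    · intro r hr
      obtain ⟨z, hz, rfl⟩ := Multiset.mem_map.1 hr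
      exact norm_pos_iff.2 (hz0 z hz)
    · have : exp ds - exp (ds + w) = exp ds * (-m) := by
        rw [exp_add' (Commute.all _ _), hw]; ring
      rw [this]
      exact (Commute.all _ _).isNilpotent_mul_left (isNilpotent_neg_iff.2 ⟨K, hK⟩)
  · obtain ⟨y, k, hy, -, r, hr⟩ :=
      exists_squarefree_dvd_pow_of_ne_zero (minpoly.ne_zero_of_finite ℝ uT)
    refine ⟨y, hy, ?_⟩
    have h1 : aeval uT y ^ k = 0 := by
      rw [← map_pow, hr, map_mul, minpoly.aeval, zero_mul]
    have h2 : aeval uT y = 0 := by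
      apply Subtype.ext
      funext z
      have h3 := congrFun (congrArg Subtype.val h1) z
      by_contra hne
      exact pow_ne_zero k hne h3
    rw [he, aeval_algHom_apply, h2, map_zero]
  · rintro ⟨q, hq, hq0⟩
    obtain ⟨k, hk⟩ := aeval_nilpotent_of_sub hn _ hq0
    rw [← map_pow] at hk
    have hdvd := minpoly.dvd ℝ s hk
    have hu1 : uT = 1 := by
      ext z
      change (z : ℂ) / (‖(z : ℂ)‖ : ℂ) = 1
      obtain ⟨r, hr⟩ := hdvd
      have h1 : aeval (z : ℂ) (q.map fun l => X - C l).prod = 0 := by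
        have := congrArg (aeval (z : ℂ)) hr
        rw [map_mul, ← hP, (hmemZ z).1 z.2, zero_mul, map_pow] at this
        exact eq_zero_of_pow_eq_zero this
      rw [map_multiset_prod, Multiset.prod_eq_zero_iff, Multiset.map_map, Multiset.mem_map] at h1
      obtain ⟨l, hl, h2⟩ := h1
      simp only [Function.comp, map_sub, aeval_X, aeval_C, Complex.coe_algebraMap] at h2
      have h3 : (z : ℂ) = (l : ℂ) := sub_eq_zero.1 h2
      have hpos := hq l hl
      rw [h3, Complex.norm_real, Real.norm_of_nonneg hpos.le, div_self]
      exact_mod_cast hpos.ne'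
    exact Units.ext (by rw [he, hu1, map_one]; rfl)

end Comm

/-! ### The multiplicative Jordan decomposition -/

section Jordan
variable {B : Type*} [NormedRing B] [NormedAlgebra ℝ B] [FiniteDimensional ℝ B] [CompleteSpace B]

lemma inv_mem_subalgebra (S : Subalgebra ℝ B) {x : Bˣ} (hx : (x : B) ∈ S) : (↑x⁻¹ : B) ∈ S := by
  have hinj : Function.Injective (LinearMap.mulLeft ℝ (⟨x, hx⟩ : S)) := by
    intro a b h
    have h1 : (x : B) * a = x * b := congrArg Subtype.val h
    exact Subtype.ext (by simpa using h1)
  obtain ⟨y, hy⟩ := LinearMap.injective_iff_surjective.1 hinj 1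
  have h1 : (x : B) * y = 1 := congrArg Subtype.val hy
  have h2 : (↑x⁻¹ : B) = y := by rw [← one_mul (y : B), ← Units.inv_mul x, mul_assoc, h1, mul_one]
  rw [h2]; exact y.2

lemma isClosed_subalgebra (S : Subalgebra ℝ B) : IsClosed (S : Set B) :=
  (Subalgebra.toSubmodule S).closed_of_finiteDimensional

lemma exp_mem' (S : Subalgebra ℝ B) {a : B} (ha : a ∈ S) : exp a ∈ S := by
  let := NormedAlgebra.restrictScalars ℚ ℝ B
  exact exp_mem (R := ℝ) (isClosed_subalgebra S) ha

lemma exists_jordan (x : Bˣ) : ∃ p : Bˣ × B, x = p.1 * expU p.2 ∧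
    (p.1 : B) ∈ Algebra.adjoin ℝ {(x : B)} ∧ p.2 ∈ Algebra.adjoin ℝ {(x : B)} ∧ Elliptic p.1 ∧
    RealType p.2 ∧ PosSplit (exp p.2) ∧ Semis (p.1 : B) ∧ (PosSplit (x : B) → p.1 = 1) := by
  let S := Algebra.adjoin ℝ {(x : B)}
  have hx : (x : B) ∈ S := Algebra.self_mem_adjoin_singleton ℝ _
  let : NormedCommRing S :=
    { (inferInstance : NormedRing S) with
      mul_comm := fun a b => Subtype.ext
        ((Algebra.commute_of_mem_adjoin_singleton_of_commute b.2
          (Algebra.commute_of_mem_adjoin_self a.2).symm)).eq }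
  have : CompleteSpace S := FiniteDimensional.complete ℝ S
  let xS : Sˣ := ⟨⟨x, hx⟩, ⟨↑x⁻¹, inv_mem_subalgebra S hx⟩, Subtype.ext (Units.mul_inv x),
    Subtype.ext (Units.inv_mul x)⟩
  have hmapexp : ∀ a : S, ((exp a : S) : B) = exp (a : B) := fun a =>
    map_exp' S.val continuous_subtype_val a
  obtain ⟨e, d, h1, ⟨C, h2⟩, h3, ⟨s, hs, h4⟩, ⟨q, hq, h5⟩, h6⟩ := jordan_comm xS
  refine ⟨(Units.map S.val.toMonoidHom e, d), Units.ext ?_, e.1.2, d.2, ⟨C, fun m => ?_⟩, ?_,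
    ⟨s, hs, ?_⟩, ⟨q, hq, ?_⟩, ?_⟩
  · have := congrArg (fun u : Sˣ => ((u : S) : B)) h1
    simp only [Units.val_mul, val_expU, MulMemClass.coe_mul, hmapexp] at this
    exact this
  · rw [← map_zpow]
    exact h2 m
  · have := ExpPoly.clm h3 (⟨S.val.toLinearMap, continuous_subtype_val⟩ : S →L[ℝ] B)
    unfold RealType
    convert this using 2 with t
    exact (hmapexp (t • d)).symm
  · have := congrArg S.val h4
    rwa [← aeval_algHom_apply, map_zero, Subalgebra.coe_val, hmapexp] at this
  · have := congrArg S.val h5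
    rwa [← aeval_algHom_apply, map_zero] at this
  · rintro ⟨s, hs, h⟩
    rw [h6 ⟨s, hs, ?_⟩]
    · simp
    · apply Subtype.ext
      have : S.val (aeval (xS : S) (s.map (fun l => X - Polynomial.C l)).prod) = 0 := by
        rw [← aeval_algHom_apply]; exact h
      exact this

/-- The elliptic part of `x`. -/
noncomputable def ell (x : Bˣ) : Bˣ := (exists_jordan x).choose.1

/-- The logarithm of the product of the hyperbolic and unipotent parts of `x`. -/
noncomputable def hyp (x : Bˣ) : B := (exists_jordan x).choose.2

lemma eq_ell_mul (x : Bˣ) : x = ell x * expU (hyp x) := (exists_jordan x).choose_spec.1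
lemma ell_mem_adjoin (x : Bˣ) : (ell x : B) ∈ Algebra.adjoin ℝ {(x : B)} :=
  (exists_jordan x).choose_spec.2.1
lemma hyp_mem_adjoin (x : Bˣ) : hyp x ∈ Algebra.adjoin ℝ {(x : B)} :=
  (exists_jordan x).choose_spec.2.2.1
lemma elliptic_ell (x : Bˣ) : Elliptic (ell x) := (exists_jordan x).choose_spec.2.2.2.1
lemma realType_hyp (x : Bˣ) : RealType (hyp x) := (exists_jordan x).choose_spec.2.2.2.2.1
lemma posSplit_hyp (x : Bˣ) : PosSplit (exp (hyp x)) := (exists_jordan x).choose_spec.2.2.2.2.2.1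
lemma semis_ell (x : Bˣ) : Semis (ell x : B) := (exists_jordan x).choose_spec.2.2.2.2.2.2.1
lemma ell_eq_one_of_posSplit {x : Bˣ} (h : PosSplit (x : B)) : ell x = 1 :=
  (exists_jordan x).choose_spec.2.2.2.2.2.2.2 h

lemma ell_mem {S : Subalgebra ℝ B} {x : Bˣ} (h : (x : B) ∈ S) : (ell x : B) ∈ S :=
  Algebra.adjoin_le (Set.singleton_subset_iff.2 h) (ell_mem_adjoin x)

lemma hyp_mem {S : Subalgebra ℝ B} {x : Bˣ} (h : (x : B) ∈ S) : hyp x ∈ S :=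
  Algebra.adjoin_le (Set.singleton_subset_iff.2 h) (hyp_mem_adjoin x)

lemma mem_centralizer_singleton {a b : B} (h : Commute a b) :
    b ∈ Subalgebra.centralizer ℝ {a} :=
  (Subalgebra.mem_centralizer_iff ℝ).2 fun g hg => by rw [Set.mem_singleton_iff.1 hg]; exact h.eq

lemma commute_of_mem_centralizer {a b : B} (h : b ∈ Subalgebra.centralizer ℝ {a}) :
    Commute a b := (Subalgebra.mem_centralizer_iff ℝ).1 h a rfl

lemma commute_ell {a : B} {x : Bˣ} (h : Commute a (x : B)) : Commute a (ell x : B) :=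
  commute_of_mem_centralizer (ell_mem (mem_centralizer_singleton h))

lemma commute_hyp {a : B} {x : Bˣ} (h : Commute a (x : B)) : Commute a (hyp x) :=
  commute_of_mem_centralizer (hyp_mem (mem_centralizer_singleton h))

lemma ell_commute_hyp (x : Bˣ) : Commute (ell x : B) (hyp x) :=
  commute_hyp (commute_ell (Commute.refl _)).symm

lemma Elliptic.mul {e f : Bˣ} (he : Elliptic e) (hf : Elliptic f) (h : Commute e f) :
    Elliptic (e * f) := by
  obtain ⟨C, hC⟩ := he
  obtain ⟨D, hD⟩ := hf
  refine ⟨C * D, fun m => ?_⟩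
  rw [h.mul_zpow, Units.val_mul]
  exact (norm_mul_le _ _).trans (mul_le_mul (hC m) (hD m) (norm_nonneg _)
    ((norm_nonneg _).trans (hC m)))

lemma Elliptic.inv {e : Bˣ} (he : Elliptic e) : Elliptic e⁻¹ := by
  obtain ⟨C, hC⟩ := he
  exact ⟨C, fun m => by rw [inv_zpow']; exact hC _⟩

lemma Elliptic.conj {e : Bˣ} (he : Elliptic e) (g : Bˣ) : Elliptic (g * e * g⁻¹) := by
  obtain ⟨C, hC⟩ := he
  refine ⟨‖(g : B)‖ * C * ‖(↑g⁻¹ : B)‖, fun m => ?_⟩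
  rw [conj_zpow, Units.val_mul, Units.val_mul]
  refine (norm_mul_le _ _).trans ?_
  gcongr
  refine (norm_mul_le _ _).trans ?_
  gcongr
  exact hC m

lemma RealType.conj {d : B} (hd : RealType d) (g : Bˣ) : RealType ((g : B) * d * ↑g⁻¹) := by
  have h1 := (ExpPoly.const (g : B)).mul (ExpPoly.mul hd (ExpPoly.const (↑g⁻¹ : B)))
  unfold RealType
  convert h1 using 2 with t
  rw [← mul_assoc, ← exp_conj', mul_smul_comm, smul_mul_assoc]

/-- Uniqueness of the Jordan decomposition. -/
lemma jordan_unique {x e : Bˣ} {d : B} (hx : x = e * expU d) (he : Elliptic e) (hd : RealType d)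
    (hc : Commute (e : B) d) : ell x = e ∧ hyp x = d := by
  have hex : Commute (e : B) (x : B) := by
    rw [hx, Units.val_mul, val_expU]; exact (Commute.refl _).mul_right hc.exp_right
  have hdx : Commute d (x : B) := by
    rw [hx, Units.val_mul, val_expU]; exact hc.symm.mul_right (Commute.refl d).exp_right
  have h1 : e * expU d = ell x * expU (hyp x) := hx.symm.trans (eq_ell_mul x)
  have h2 : Commute d (hyp x) := commute_hyp hdx
  have hee : Commute (ell x)⁻¹ e :=
    (Commute.inv_left (Units.ext (commute_ell hex).symm.eq))
  have h3 : (ell x)⁻¹ * e = expU (hyp x - d) := by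
    rw [sub_eq_add_neg, expU_add h2.symm.neg_right, expU_neg, inv_mul_eq_iff_eq_mul, ← mul_assoc,
      ← h1, mul_inv_cancel_right]
  have h4 : hyp x - d = 0 := by
    refine RealType.eq_zero_of_bounded ?_ ?_
    · rw [sub_eq_add_neg]; exact (realType_hyp x).add hd.neg h2.symm.neg_right
    · obtain ⟨C, hC⟩ := (elliptic_ell x).inv.mul he hee
      refine ⟨C, fun m => ?_⟩
      rw [← val_expU, Int.cast_smul_eq_zsmul, expU_zsmul, ← h3]
      exact hC m
  refine ⟨?_, sub_eq_zero.1 h4⟩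
  rw [h4, expU_zero, inv_mul_eq_one] at h3
  exact h3

lemma ell_conj_hyp_conj (g x : Bˣ) : ell (g * x * g⁻¹) = g * ell x * g⁻¹ ∧
    hyp (g * x * g⁻¹) = g * hyp x * ↑g⁻¹ := by
  refine jordan_unique ?_ ((elliptic_ell x).conj g) ((realType_hyp x).conj g) ?_
  · rw [expU_conj]
    nth_rw 1 [eq_ell_mul x]
    group
  · have := (ell_commute_hyp x).eq
    rw [Commute, SemiconjBy]
    simp only [Units.val_mul, mul_assoc, Units.inv_mul_cancel_left]
    rw [← mul_assoc (ell x : B), this, mul_assoc]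

lemma ell_conj (g x : Bˣ) : ell (g * x * g⁻¹) = g * ell x * g⁻¹ := (ell_conj_hyp_conj g x).1

lemma hyp_conj (g x : Bˣ) : hyp (g * x * g⁻¹) = g * hyp x * ↑g⁻¹ := (ell_conj_hyp_conj g x).2

end Jordan

/-! ### Polynomial hulls of unipotent groups -/

section Trotter
variable {B : Type*} [NormedRing B] [NormedAlgebra ℝ B] [CompleteSpace B]

lemma norm_one_add_pow_le (h : B) (m : ℕ) : ‖(1 + h) ^ m‖ ≤ ‖(1 : B)‖ * (1 + ‖h‖) ^ m := by
  induction m with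
  | zero => simp
  | succ m ih =>
    have : ‖(1 + h) ^ (m + 1)‖ ≤ ‖(1 + h) ^ m‖ * (1 + ‖h‖) := by
      rw [pow_succ, mul_add, mul_one, mul_add, mul_one]
      exact (norm_add_le _ _).trans (by gcongr; exact norm_mul_le _ _)
    refine this.trans ?_
    rw [pow_succ, ← mul_assoc]
    gcongr

lemma norm_pow_sub_pow_le {x y : B} {D : ℝ} (m : ℕ) (hx : ∀ i ≤ m, ‖x ^ i‖ ≤ D)
    (hy : ∀ i ≤ m, ‖y ^ i‖ ≤ D) : ‖x ^ m - y ^ m‖ ≤ m * (D * ‖x - y‖ * D) := by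
  have h := Finset.sum_range_sub (fun i => x ^ i * y ^ (m - i)) m
  simp only [Nat.sub_self, pow_zero, mul_one, one_mul, Nat.sub_zero] at h
  rw [← h]
  refine (norm_sum_le _ _).trans ?_
  have : ∀ i ∈ Finset.range m, ‖x ^ (i + 1) * y ^ (m - (i + 1)) - x ^ i * y ^ (m - i)‖ ≤
      D * ‖x - y‖ * D := by
    intro i hi
    have hi := Finset.mem_range.1 hi
    have e : m - i = (m - (i + 1)) + 1 := by omega
    rw [e, pow_succ, pow_succ', mul_assoc, ← mul_sub, ← sub_mul, ← mul_assoc]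
    have hD : 0 ≤ D := (norm_nonneg _).trans (hx 0 (Nat.zero_le _))
    refine (norm_mul_le _ _).trans (mul_le_mul ((norm_mul_le _ _).trans ?_) (hy _ (by omega))
      (norm_nonneg _) (by positivity))
    gcongr
    exact hx i hi.le
  exact (Finset.sum_le_sum this).trans (by simp)

lemma norm_pow_le_of_near {x : B} {C : ℝ} {m : ℕ} (hm : 0 < m)
    (h : ‖x - 1‖ ≤ C / m) (i : ℕ) (hi : i ≤ m) : ‖x ^ i‖ ≤ ‖(1 : B)‖ * Real.exp C := by
  have h1 := norm_one_add_pow_le (x - 1) i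
  rw [add_sub_cancel] at h1
  refine h1.trans ?_
  gcongr
  have hm' : (0 : ℝ) < m := by exact_mod_cast hm
  calc (1 + ‖x - 1‖) ^ i ≤ (1 + ‖x - 1‖) ^ m :=
        pow_le_pow_right₀ (by linarith [norm_nonneg (x - 1)]) hi
    _ ≤ (Real.exp (C / m)) ^ m := by
        gcongr
        linarith [Real.add_one_le_exp (C / m)]
    _ = Real.exp C := by
        rw [← Real.exp_nat_mul]; congr 1; field_simp

/-- The Lie–Trotter formula, for an arbitrary curve tangent to `a`. -/
lemma tendsto_pow_exp {c : ℝ → B} {a : B} (h0 : c 0 = 1) (hc : HasDerivAt c a 0) :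
    Tendsto (fun m : ℕ => c ((m : ℝ)⁻¹) ^ m) atTop (𝓝 (exp a)) := by
  have hinv : Tendsto (fun m : ℕ => ((m : ℝ)⁻¹)) atTop (𝓝[≠] 0) := by
    refine tendsto_nhdsWithin_iff.2 ⟨tendsto_inv_atTop_nhds_zero_nat, ?_⟩
    filter_upwards [eventually_gt_atTop 0] with m hm
    have : (m : ℝ) ≠ 0 := by exact_mod_cast hm.ne'
    simpa using this
  have key : ∀ f : ℝ → B, ∀ b, f 0 = 1 → HasDerivAt f b 0 →
      Tendsto (fun m : ℕ => (m : ℝ) • (f ((m : ℝ)⁻¹) - 1)) atTop (𝓝 b) := by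
    intro f b hf0 hf
    have := (hasDerivAt_iff_tendsto_slope.1 hf).comp hinv
    refine this.congr fun m => ?_
    simp [slope_def_module, hf0]
  have he : HasDerivAt (fun t : ℝ => exp (t • a)) a 0 := by
    simpa using hasDerivAt_expt a 0
  have h1 := key c a h0 hc
  have h2 := key _ a (by simp) he
  have h3 := (h1.sub h2).norm
  simp only [sub_self, norm_zero] at h3
  have bd : ∀ f : ℝ → B, Tendsto (fun m : ℕ => (m : ℝ) • (f ((m : ℝ)⁻¹) - 1)) atTop (𝓝 a) →
      ∀ᶠ m : ℕ in atTop, ‖f ((m : ℝ)⁻¹) - 1‖ ≤ (‖a‖ + 1) / m := by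
    intro f hf
    filter_upwards [hf.norm.eventually_lt_const (lt_add_one ‖a‖), eventually_gt_atTop 0] with m hm hm0
    have hm' : (0 : ℝ) < m := by exact_mod_cast hm0
    rw [norm_smul, Real.norm_of_nonneg hm'.le] at hm
    rw [le_div_iff₀ hm', mul_comm]; exact hm.le
  set D := ‖(1 : B)‖ * Real.exp (‖a‖ + 1)
  have h4 : Tendsto (fun m : ℕ => D * ‖(m : ℝ) • (c ((m : ℝ)⁻¹) - 1) -
      (m : ℝ) • (exp ((m : ℝ)⁻¹ • a) - 1)‖ * D) atTop (𝓝 0) := by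
    simpa using (h3.const_mul D).mul_const D
  rw [tendsto_iff_norm_sub_tendsto_zero]
  refine squeeze_zero' (Eventually.of_forall fun _ => norm_nonneg _) ?_ h4
  filter_upwards [bd c h1, bd (fun t => exp (t • a)) h2, eventually_gt_atTop 0] with m hm1 hm2 hm0
  have hm' : (0 : ℝ) < m := by exact_mod_cast hm0
  have e1 : exp a = exp ((m : ℝ)⁻¹ • a) ^ m := by
    rw [← exp_nsmul', ← Nat.cast_smul_eq_nsmul ℝ, smul_smul, mul_inv_cancel₀ hm'.ne', one_smul]
  rw [e1]
  refine (norm_pow_sub_pow_le m (norm_pow_le_of_near hm0 hm1)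
    (norm_pow_le_of_near hm0 hm2)).trans (le_of_eq ?_)
  rw [← smul_sub, sub_sub_sub_cancel_right, norm_smul, Real.norm_of_nonneg hm'.le]
  ring

end Trotter

section Zar
variable {B : Type*} [NormedRing B] [NormedAlgebra ℝ B] [CompleteSpace B]

/-- Noncommutative polynomial maps in one variable. -/
inductive NCPoly : (B → B) → Prop
  | const (c : B) : NCPoly (fun _ => c)
  | id : NCPoly (fun x => x)
  | add {f g : B → B} : NCPoly f → NCPoly g → NCPoly (fun x => f x + g x)
  | mul {f g : B → B} : NCPoly f → NCPoly g → NCPoly (fun x => f x * g x)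

lemma NCPoly.comp {f g : B → B} (hf : NCPoly f) (hg : NCPoly g) : NCPoly (fun x => f (g x)) := by
  induction hf with
  | const c => exact .const c
  | id => exact hg
  | add _ _ h1 h2 => exact h1.add h2
  | mul _ _ h1 h2 => exact h1.mul h2

lemma NCPoly.continuous {f : B → B} (hf : NCPoly f) : Continuous f := by
  induction hf with
  | const c => exact continuous_const
  | id => exact continuous_id
  | add _ _ h1 h2 => exact h1.add h2
  | mul _ _ h1 h2 => exact h1.mul h2

lemma NCPoly.expPoly {f : B → B} (hf : NCPoly f) {F : ℝ → B} (hF : ExpPoly F) :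
    ExpPoly (fun t => f (F t)) := by
  induction hf with
  | const c => exact .const c
  | id => exact hF
  | add _ _ h1 h2 => exact h1.add h2
  | mul _ _ h1 h2 => exact h1.mul h2

lemma NCPoly.smul {f : B → B} (hf : NCPoly f) (c : ℝ) : NCPoly (fun x => c • f x) := by
  have := (NCPoly.const (c • (1 : B))).mul hf
  simpa using this

lemma NCPoly.pow {f : B → B} (hf : NCPoly f) (n : ℕ) : NCPoly (fun x => f x ^ n) := by
  induction n with
  | zero => simpa using NCPoly.const (1 : B)
  | succ n ih => simpa only [pow_succ] using ih.mul hf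

lemma NCPoly.sum {ι : Type*} (s : Finset ι) {f : ι → B → B} (hf : ∀ i ∈ s, NCPoly (f i)) :
    NCPoly (fun x => ∑ i ∈ s, f i x) := by
  classical
  induction s using Finset.induction_on with
  | empty => simpa using NCPoly.const (0 : B)
  | insert a s ha ih =>
    simp only [Finset.sum_insert ha]
    exact (hf a (Finset.mem_insert_self _ _)).add
      (ih fun i hi => hf i (Finset.mem_insert_of_mem hi))

lemma NCPoly.sub_const (c : B) : NCPoly (fun x => x - c) := by
  simpa only [sub_eq_add_neg] using NCPoly.id.add (NCPoly.const (-c))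

lemma NCPoly.lg (K : ℕ) : NCPoly (lg K : B → B) :=
  NCPoly.sum _ fun _ _ => ((NCPoly.sub_const 1).pow _).smul _

/-- The Zariski closure of a subset of `B`. -/
def Zar (S : Set B) : Set B :=
  {x | ∀ g : B → B, NCPoly g → ∀ l : B →L[ℝ] ℝ, (∀ s ∈ S, l (g s) = 0) → l (g x) = 0}

lemma subset_zar (S : Set B) : S ⊆ Zar S := fun x hx _ _ _ h => h x hx

lemma NCPoly.map_zar {S T : Set B} {g : B → B} (hg : NCPoly g) (h : ∀ s ∈ S, g s ∈ Zar T) :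
    ∀ x ∈ Zar S, g x ∈ Zar T := fun _ hx _ hf l hl =>
  hx _ (hf.comp hg) l fun s hs => h s hs _ hf l hl

lemma ExpPoly.mem_zar {S : Set B} {F : ℝ → B} (hF : ExpPoly F) (h : ∀ n : ℕ, F n ∈ Zar S) (t : ℝ) :
    F t ∈ Zar S := fun _ hg l hl =>
  ExpPoly.eq_zero_of_nat ((hg.expPoly hF).clm l) (fun n => h n _ hg l hl) t

lemma isClosed_zar (S : Set B) : IsClosed (Zar S) := by
  have : Zar S = ⋂ (g : B → B) (_ : NCPoly g) (l : B →L[ℝ] ℝ) (_ : ∀ s ∈ S, l (g s) = 0),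
      {x | l (g x) = 0} := by
    ext x; simp [Zar]
  rw [this]
  exact isClosed_iInter fun g => isClosed_iInter fun hg => isClosed_iInter fun l =>
    isClosed_iInter fun _ => isClosed_eq (l.continuous.comp hg.continuous) continuous_const

lemma NCPoly.mem_of_zar [FiniteDimensional ℝ B] {S : Set B} {g : B → B} (hg : NCPoly g)
    (W : Submodule ℝ B) (h : ∀ s ∈ S, g s ∈ W) : ∀ x ∈ Zar S, g x ∈ W := by
  intro x hx
  by_contra hW
  obtain ⟨l, h1, h2⟩ := Submodule.exists_le_ker_of_notMem hW
  exact h1 (hx g hg l.toContinuousLinearMap fun s hs => h2 (h s hs))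

end Zar

section Hull
variable {B : Type*} [NormedRing B] [NormedAlgebra ℝ B] [FiniteDimensional ℝ B] [CompleteSpace B]

/-- The Zariski closure of a group of units. -/
def zarHull (L : Subgroup Bˣ) : Subgroup Bˣ where
  carrier := {u | (u : B) ∈ Zar ((fun v : Bˣ => (v : B)) '' L) ∧
    (↑u⁻¹ : B) ∈ Zar ((fun v : Bˣ => (v : B)) '' L)}
  one_mem' := by
    have := subset_zar _ (Set.mem_image_of_mem (fun v : Bˣ => (v : B)) L.one_mem)
    exact ⟨this, by simpa using this⟩
  inv_mem' h := ⟨h.2, by simpa using h.1⟩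
  mul_mem' := by
    have key : ∀ x ∈ Zar ((fun v : Bˣ => (v : B)) '' L), ∀ y ∈ Zar ((fun v : Bˣ => (v : B)) '' L),
        x * y ∈ Zar ((fun v : Bˣ => (v : B)) '' L) := by
      intro x hx
      refine ((NCPoly.const x).mul .id).map_zar ?_
      intro s hs
      refine (NCPoly.id.mul (.const s)).map_zar ?_ x hx
      rintro _ ⟨a, ha, rfl⟩
      obtain ⟨b, hb, rfl⟩ := hs
      exact subset_zar _ ⟨a * b, L.mul_mem ha hb, rfl⟩
    intro u v hu hv
    exact ⟨key _ hu.1 _ hv.1, by rw [mul_inv_rev]; exact key _ hv.2 _ hu.2⟩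

lemma le_zarHull (L : Subgroup Bˣ) : L ≤ zarHull L := fun u hu =>
  ⟨subset_zar _ ⟨u, hu, rfl⟩, subset_zar _ ⟨u⁻¹, L.inv_mem hu, rfl⟩⟩

lemma isClosed_zarHull (L : Subgroup Bˣ) : IsClosed (zarHull L : Set Bˣ) :=
  ((isClosed_zar _).preimage Units.continuous_val).inter
    ((isClosed_zar _).preimage (Units.continuous_val.comp continuous_inv))

lemma NCPoly.map_zarHull {L L' : Subgroup Bˣ} {g : B → B} (hg : NCPoly g) {f : Bˣ →* Bˣ}
    (hf : ∀ u, (f u : B) = g u) (h : ∀ u ∈ L, f u ∈ zarHull L') : ∀ u ∈ zarHull L, f u ∈ zarHull L' := by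
  have := hg.map_zar (S := (fun v : Bˣ => (v : B)) '' L) (T := (fun v : Bˣ => (v : B)) '' L')
    (by rintro _ ⟨u, hu, rfl⟩; rw [← hf]; exact (h u hu).1)
  intro u hu
  refine ⟨by rw [hf]; exact this _ hu.1, by rw [← map_inv, hf]; exact this _ hu.2⟩

lemma zarHull_mono {L L' : Subgroup Bˣ} (h : L ≤ L') : zarHull L ≤ zarHull L' :=
  NCPoly.id.map_zarHull (f := MonoidHom.id _) (fun _ => rfl) fun _ hu => le_zarHull _ (h hu)

lemma zarHull_conj {L : Subgroup Bˣ} (g : Bˣ) (h : ∀ u ∈ L, g * u * g⁻¹ ∈ L) :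
    ∀ u ∈ zarHull L, g * u * g⁻¹ ∈ zarHull L :=
  (((NCPoly.const (g : B)).mul .id).mul (.const (↑g⁻¹ : B))).map_zarHull
    (f := (MulAut.conj g).toMonoidHom) (fun _ => by simp [MulAut.conj_apply])
    fun u hu => le_zarHull _ (by simpa [MulAut.conj_apply] using h u hu)

lemma ExpPoly.mem_zarHull {L : Subgroup Bˣ} {F : ℝ → Bˣ} (hF : ExpPoly (fun t => (F t : B)))
    (hF' : ExpPoly (fun t => (↑(F t)⁻¹ : B))) (h : ∀ n : ℕ, F n ∈ zarHull L) (t : ℝ) :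
    F t ∈ zarHull L :=
  ⟨hF.mem_zar (fun n => (h n).1) t, hF'.mem_zar (fun n => (h n).2) t⟩

/-- A one-parameter group of real type lies in a Zariski closed group as soon as its generator
does. -/
lemma RealType.mem_zarHull {L : Subgroup Bˣ} {a : B} (ha : RealType a) (h : expU a ∈ zarHull L)
    (t : ℝ) : expU (t • a) ∈ zarHull L := by
  refine ExpPoly.mem_zarHull (F := fun t => expU (t • a)) ha ?_ (fun n => ?_) t
  · have : ExpPoly _ := ha.neg
    simpa [← expU_neg, ← smul_neg] using this
  · rw [Nat.cast_smul_eq_nsmul, expU_nsmul]; exact pow_mem h n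

/-- A multiplicatively closed subspace all of whose elements are nilpotent. -/
structure NilSub (J : Submodule ℝ B) (K : ℕ) : Prop where
  mul : ∀ a ∈ J, ∀ b ∈ J, a * b ∈ J
  pow : ∀ a ∈ J, a ^ K = 0

variable {J : Submodule ℝ B} {K : ℕ}

lemma NilSub.pow_mem (hJ : NilSub J K) {a : B} (ha : a ∈ J) (i : ℕ) : a ^ (i + 1) ∈ J := by
  induction i with
  | zero => simpa
  | succ i ih => rw [pow_succ]; exact hJ.mul _ ih _ ha

lemma NilSub.lg_mem (hJ : NilSub J K) {x : B} (hx : x - 1 ∈ J) : lg K x ∈ J :=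
  Submodule.sum_mem _ fun i _ => J.smul_mem _ (hJ.pow_mem hx i)

lemma NilSub.exp_sub_one_mem (hJ : NilSub J K) {a : B} (ha : a ∈ J) : exp a - 1 ∈ J := by
  have h := exp_series_hasSum_exp' (𝕂 := ℝ) a
  rw [← hasSum_nat_add_iff' 1] at h
  simp only [Finset.range_one, Finset.sum_singleton, Nat.factorial_zero, Nat.cast_one, inv_one,
    pow_zero, one_smul] at h
  exact (J.closed_of_finiteDimensional).mem_of_tendsto h
    (Eventually.of_forall fun s => Submodule.sum_mem _ fun i _ => J.smul_mem _ (hJ.pow_mem ha i))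

lemma NilSub.exp_lg (hJ : NilSub J K) {x : B} (hx : x - 1 ∈ J) : exp (lg K x) = x :=
  SyndeticHull.exp_lg (hJ.pow _ hx)

lemma NilSub.lg_exp (hJ : NilSub J K) {a : B} (ha : a ∈ J) : lg K (exp a) = a :=
  SyndeticHull.lg_exp (hJ.pow _ ha) (hJ.pow _ (hJ.exp_sub_one_mem ha))

lemma NilSub.inv (hJ : NilSub J K) {u : Bˣ} (hu : (u : B) - 1 ∈ J) : (↑u⁻¹ : B) - 1 ∈ J := by
  have h1 : u = expU (lg K (u : B)) := Units.ext (hJ.exp_lg hu).symm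
  rw [h1, ← expU_neg, val_expU]
  exact hJ.exp_sub_one_mem (J.neg_mem (hJ.lg_mem hu))

/-- The Lie algebra of the Zariski closure. -/
def zarLie (L : Subgroup Bˣ) : Submodule ℝ B where
  carrier := {a | ∀ t : ℝ, expU (t • a) ∈ zarHull L}
  zero_mem' t := by rw [smul_zero, expU_zero]; exact one_mem _
  smul_mem' c a ha t := by rw [smul_smul]; exact ha _
  add_mem' := by
    have key : ∀ a b : B, (∀ t : ℝ, expU (t • a) ∈ zarHull L) → (∀ t : ℝ, expU (t • b) ∈ zarHull L) →
        exp (a + b) ∈ Zar ((fun v : Bˣ => (v : B)) '' L) := by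
      intro a b ha hb
      refine (isClosed_zar _).mem_of_tendsto (tendsto_pow_exp (c := fun t : ℝ => exp (t • a) * exp (t • b))
        (by simp) ?_) (Eventually.of_forall fun m => ?_)
      · refine ((hasDerivAt_expt a 0).mul (hasDerivAt_expt b 0)).congr_deriv (by simp)
      · have := (pow_mem (mul_mem (ha ((m : ℝ)⁻¹)) (hb ((m : ℝ)⁻¹))) m).1
        simpa using this
    intro a b ha hb t
    rw [smul_add]
    refine ⟨key _ _ (fun s => ?_) (fun s => ?_), ?_⟩
    · rw [smul_smul]; exact ha _
    · rw [smul_smul]; exact hb _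
    · rw [← expU_neg, neg_add, ← neg_smul, ← neg_smul]
      refine key _ _ (fun s => ?_) (fun s => ?_)
      · rw [smul_smul]; exact ha _
      · rw [smul_smul]; exact hb _

lemma expU_mem_of_zarLie {L : Subgroup Bˣ} {a : B} (ha : a ∈ zarLie L) : expU a ∈ zarHull L := by
  simpa using ha 1

lemma sub_one_mem_of_zarHull {L : Subgroup Bˣ} (hL : ∀ u ∈ L, (u : B) - 1 ∈ J) {u : Bˣ}
    (hu : u ∈ zarHull L) : (u : B) - 1 ∈ J :=
  (NCPoly.sub_const 1).mem_of_zar J (by rintro _ ⟨v, hv, rfl⟩; exact hL v hv) _ hu.1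

lemma NilSub.lg_mem_zarLie (hJ : NilSub J K) {L : Subgroup Bˣ} {u : Bˣ} (hu : (u : B) - 1 ∈ J)
    (h : u ∈ zarHull L) : lg K (u : B) ∈ zarLie L := by
  have h1 : u = expU (lg K (u : B)) := Units.ext (hJ.exp_lg hu).symm
  refine RealType.mem_zarHull (realType_of_nilpotent (hJ.pow _ (hJ.lg_mem hu))) ?_
  rwa [← h1]

/-- The polynomial which inverts unipotent elements. -/
noncomputable def uinv (K : ℕ) (x : B) : B := ∑ i ∈ Finset.range K, (1 - x) ^ i

lemma uinv_eq {u : Bˣ} (hu : ((u : B) - 1) ^ K = 0) : uinv K (u : B) = ↑u⁻¹ := by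
  have h := mul_neg_geom_sum (1 - (u : B)) K
  rw [sub_sub_cancel, ← neg_sub, neg_pow, hu, mul_zero, sub_zero] at h
  simpa only [SyndeticHull.uinv, neg_sub] using (Units.inv_eq_of_mul_eq_one_right h).symm

lemma NCPoly.uinv (K : ℕ) : NCPoly (uinv K : B → B) :=
  NCPoly.sum _ fun _ _ => by
    have := ((NCPoly.sub_const (1 : B)).smul (-1)).pow ‹ℕ›
    simpa using this

lemma zarLie_le {L : Subgroup Bˣ} (hL : ∀ u ∈ L, (u : B) - 1 ∈ J) : zarLie L ≤ J := by
  intro a ha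
  have h := hasDerivAt_iff_tendsto_slope.1 (hasDerivAt_expt a 0)
  simp only [zero_smul, exp_zero, mul_one] at h
  refine (J.closed_of_finiteDimensional).mem_of_tendsto h (Eventually.of_forall fun t => ?_)
  rw [slope_def_module]
  refine J.smul_mem _ ?_
  simpa using sub_one_mem_of_zarHull hL (ha t)

/-- The Lie algebra is spanned by the logarithms. -/
lemma NilSub.zarLie_le_span (hJ : NilSub J K) {L : Subgroup Bˣ} (hL : ∀ u ∈ L, (u : B) - 1 ∈ J) :
    zarLie L ≤ Submodule.span ℝ ((fun u : Bˣ => lg K (u : B)) '' L) := by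
  intro a ha
  rw [← hJ.lg_exp (zarLie_le hL ha)]
  refine (NCPoly.lg K).mem_of_zar _ ?_ _ (expU_mem_of_zarLie ha).1
  rintro _ ⟨u, hu, rfl⟩
  exact Submodule.subset_span ⟨u, hu, rfl⟩

/-- The Zariski closure of a unipotent group is the image of its Lie algebra. -/
lemma NilSub.exists_zarLie (hJ : NilSub J K) {L : Subgroup Bˣ} (hL : ∀ u ∈ L, (u : B) - 1 ∈ J)
    {u : Bˣ} (hu : u ∈ zarHull L) : ∃ a ∈ zarLie L, u = expU a :=
  ⟨_, hJ.lg_mem_zarLie (sub_one_mem_of_zarHull hL hu) hu,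
    Units.ext (hJ.exp_lg (sub_one_mem_of_zarHull hL hu)).symm⟩

end Hull

/-! ### One-parameter groups modulo a closed normal subgroup with abelian quotient -/

section CommMod
variable {B : Type*} [NormedRing B] [NormedAlgebra ℝ B] [FiniteDimensional ℝ B] [CompleteSpace B]

/-- `N` is a subgroup of `Q` containing all commutators of `Q`. -/
structure CommMod {G : Type*} [Group G] (Q N : Subgroup G) : Prop where
  le : N ≤ Q
  comm : ∀ x ∈ Q, ∀ y ∈ Q, x * y * x⁻¹ * y⁻¹ ∈ N

section
variable {G : Type*} [Group G] {Q N : Subgroup G}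

lemma CommMod.conj (h : CommMod Q N) {x n : G} (hx : x ∈ Q) (hn : n ∈ N) : x * n * x⁻¹ ∈ N := by
  simpa using N.mul_mem (h.comm x hx n (h.le hn)) hn

lemma CommMod.mul (h : CommMod Q N) {x x' y y' : G} (hy : y ∈ Q) (h1 : x * y⁻¹ ∈ N)
    (h2 : x' * y'⁻¹ ∈ N) : x * x' * (y * y')⁻¹ ∈ N := by
  have hx : x ∈ Q := by simpa using Q.mul_mem (h.le h1) hy
  have := N.mul_mem (h.conj hx h2) h1
  convert this using 1
  group

lemma CommMod.inv (h : CommMod Q N) {x y : G} (hy : y ∈ Q) (h1 : x * y⁻¹ ∈ N) :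
    x⁻¹ * y⁻¹⁻¹ ∈ N := by
  have := h.conj (Q.inv_mem hy) (N.inv_mem h1)
  convert this using 1
  group

lemma CommMod.trans (_ : CommMod Q N) {x y z : G} (h1 : x * y⁻¹ ∈ N) (h2 : y * z⁻¹ ∈ N) :
    x * z⁻¹ ∈ N := by
  convert N.mul_mem h1 h2 using 1
  group

lemma CommMod.symm (_ : CommMod Q N) {x y : G} (h1 : x * y⁻¹ ∈ N) : y * x⁻¹ ∈ N := by
  convert N.inv_mem h1 using 1
  group

lemma CommMod.mul_comm (h : CommMod Q N) {x y : G} (hx : x ∈ Q) (hy : y ∈ Q) :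
    x * y * (y * x)⁻¹ ∈ N := by
  convert h.comm x hx y hy using 1
  group

lemma CommMod.mul_pow (h : CommMod Q N) {x y : G} (hx : x ∈ Q) (hy : y ∈ Q) (m : ℕ) :
    (x * y) ^ m * (x ^ m * y ^ m)⁻¹ ∈ N := by
  induction m with
  | zero => simp
  | succ m ih =>
    rw [_root_.pow_succ]
    have hxm := Q.pow_mem hx m
    have hym := Q.pow_mem hy m
    have h1 : (x * y) ^ m * (x * y) * (x ^ m * y ^ m * (x * y))⁻¹ ∈ N :=
      h.mul (Q.mul_mem hxm hym) ih (by simp)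
    refine h.trans h1 ?_
    have h2 := h.mul (x := x ^ m) (y := x ^ m) hxm (by simp)
      (h.mul (x' := y) (y' := y) (Q.mul_mem hx hym) (h.mul_comm hym hx) (by simp))
    convert h2 using 1
    group
end

lemma tendsto_units {ι : Type*} {f : Filter ι} {u : ι → Bˣ} {v : Bˣ}
    (h : Tendsto (fun i => (u i : B)) f (𝓝 (v : B))) : Tendsto u f (𝓝 v) :=
  (Units.isOpenEmbedding_val.isEmbedding.tendsto_nhds_iff).2 h

lemma expU_inv_nat_pow (d : B) {m : ℕ} (hm : m ≠ 0) : expU ((m : ℝ)⁻¹ • d) ^ m = expU d := by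
  rw [← expU_nsmul, ← Nat.cast_smul_eq_nsmul ℝ, smul_smul, mul_inv_cancel₀ (by exact_mod_cast hm),
    one_smul]

lemma CommMod.expU_add_mem {Q N : Subgroup Bˣ} (h : CommMod Q N) (hN : IsClosed (N : Set Bˣ))
    {a b : B} (ha : ∀ t : ℝ, expU (t • a) ∈ Q) (hb : ∀ t : ℝ, expU (t • b) ∈ Q) :
    expU (a + b) * (expU a * expU b)⁻¹ ∈ N := by
  have h1 := tendsto_pow_exp (c := fun t : ℝ => exp (t • a) * exp (t • b)) (a := a + b)
    (by simp) (((hasDerivAt_expt a 0).mul (hasDerivAt_expt b 0)).congr_deriv (by simp))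
  have h2 : Tendsto (fun m : ℕ => (expU ((m : ℝ)⁻¹ • a) * expU ((m : ℝ)⁻¹ • b)) ^ m) atTop
      (𝓝 (expU (a + b))) := tendsto_units (by simpa using h1)
  refine hN.mem_of_tendsto (h2.mul_const _) ?_
  filter_upwards [eventually_ne_atTop 0] with m hm
  have h3 := h.mul_pow (ha (m : ℝ)⁻¹) (hb (m : ℝ)⁻¹) m
  rwa [expU_inv_nat_pow _ hm, expU_inv_nat_pow _ hm] at h3

/-- The generators of the one-parameter groups of `Q`. -/
def CommMod.lie {Q N : Subgroup Bˣ} (h : CommMod Q N) (hN : IsClosed (N : Set Bˣ)) :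
    Submodule ℝ B where
  carrier := {a | ∀ t : ℝ, expU (t • a) ∈ Q}
  zero_mem' t := by rw [smul_zero, expU_zero]; exact one_mem _
  smul_mem' c a ha t := by rw [smul_smul]; exact ha _
  add_mem' := by
    intro a b ha hb t
    have h1 := h.expU_add_mem hN (a := t • a) (b := t • b)
      (fun s => by rw [smul_smul]; exact ha _) (fun s => by rw [smul_smul]; exact hb _)
    rw [← smul_add] at h1
    simpa only [inv_mul_cancel_right] using Q.mul_mem (h.le h1) (Q.mul_mem (ha t) (hb t))

variable {Q N : Subgroup Bˣ}

lemma CommMod.expU_mem (h : CommMod Q N) (hN : IsClosed (N : Set Bˣ)) {a : B}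
    (ha : a ∈ h.lie hN) : expU a ∈ Q := by simpa using ha 1

lemma CommMod.expU_add (h : CommMod Q N) (hN : IsClosed (N : Set Bˣ)) {a b : B}
    (ha : a ∈ h.lie hN) (hb : b ∈ h.lie hN) : expU (a + b) * (expU a * expU b)⁻¹ ∈ N :=
  h.expU_add_mem hN ha hb

lemma exists_compact_span (X : Set B) : ∃ C : Set B, C ⊆ Submodule.span ℝ X ∧ IsCompact C ∧
    ∀ d ∈ Submodule.span ℝ X, ∃ z ∈ AddSubgroup.closure X, d - z ∈ C := by
  obtain ⟨b, hbX, hspan, hli⟩ := exists_linearIndependent ℝ X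
  have hfin : b.Finite := hli.setFinite
  let s := hfin.toFinset
  have hs : (s : Set B) = b := hfin.coe_toFinset
  refine ⟨(fun t : B → ℝ => ∑ v ∈ s, t v • v) '' (Set.univ.pi fun _ => Set.Icc 0 1), ?_, ?_, ?_⟩
  · rintro _ ⟨t, -, rfl⟩
    refine Submodule.sum_mem _ fun v hv => Submodule.smul_mem _ _ (Submodule.subset_span (hbX ?_))
    rw [← hs]; exact hv
  · refine (isCompact_univ_pi fun _ => isCompact_Icc).image ?_
    fun_prop
  · intro d hd
    rw [← hspan, ← hs] at hd
    obtain ⟨t, -, ht⟩ := Submodule.mem_span_finset.1 hd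
    refine ⟨∑ v ∈ s, ⌊t v⌋ • v, sum_mem fun v hv => zsmul_mem (AddSubgroup.subset_closure (hbX ?_)) _,
      fun v => Int.fract (t v), fun v _ => ⟨Int.fract_nonneg _, (Int.fract_lt_one _).le⟩, ?_⟩
    · rw [← hs]; exact hv
    · rw [← ht, ← Finset.sum_sub_distrib]
      refine Finset.sum_congr rfl fun v _ => ?_
      rw [← Int.cast_smul_eq_zsmul ℝ, ← sub_smul]; rfl

lemma CommMod.exists_closure (h : CommMod Q N) (hN : IsClosed (N : Set Bˣ)) {X : Set B}
    (hX : X ⊆ h.lie hN) {z : B} (hz : z ∈ AddSubgroup.closure X) :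
    z ∈ h.lie hN ∧ ∃ l ∈ Subgroup.closure (expU '' X), l ∈ Q ∧ expU z * l⁻¹ ∈ N := by
  induction hz using AddSubgroup.closure_induction with
  | mem x hx => exact ⟨hX hx, expU x, Subgroup.subset_closure ⟨x, hx, rfl⟩,
      h.expU_mem hN (hX hx), by simp⟩
  | zero => exact ⟨zero_mem _, 1, one_mem _, one_mem _, by simp [expU_zero]⟩
  | add x y _ _ hx hy =>
    obtain ⟨hx, l, hl, hlQ, h1⟩ := hx
    obtain ⟨hy, m, hm, hmQ, h2⟩ := hy
    exact ⟨add_mem hx hy, l * m, mul_mem hl hm, mul_mem hlQ hmQ,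
      h.trans (h.expU_add hN hx hy) (h.mul hlQ h1 h2)⟩
  | neg x _ hx =>
    obtain ⟨hx, l, hl, hlQ, h1⟩ := hx
    exact ⟨neg_mem hx, l⁻¹, inv_mem hl, inv_mem hlQ, by rw [expU_neg]; exact h.inv hlQ h1⟩

/-- The one-parameter groups generated by the span of `X` are, modulo `N`, cocompact over the
group generated by the exponentials of the elements of `X`. -/
lemma CommMod.exists_compact (h : CommMod Q N) (hN : IsClosed (N : Set Bˣ)) {X : Set B}
    (hX : X ⊆ h.lie hN) : ∃ C : Set Bˣ, C ⊆ Q ∧ IsCompact C ∧ ∀ d ∈ Submodule.span ℝ X,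
      ∃ c ∈ C, ∃ l ∈ Subgroup.closure (expU '' X), l ∈ Q ∧ expU d * (c * l)⁻¹ ∈ N := by
  obtain ⟨C, hC, hCc, hCX⟩ := exists_compact_span X
  have hsp : Submodule.span ℝ X ≤ h.lie hN := Submodule.span_le.2 hX
  refine ⟨expU '' C, ?_, hCc.image continuous_expU, fun d hd => ?_⟩
  · rintro _ ⟨c, hc, rfl⟩
    exact h.expU_mem hN (hsp (hC hc))
  · obtain ⟨z, hz, hdz⟩ := hCX d hd
    obtain ⟨hz, l, hl, hlQ, h1⟩ := h.exists_closure hN hX hz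
    have hc := hsp (hC hdz)
    refine ⟨_, ⟨_, hdz, rfl⟩, l, hl, hlQ, ?_⟩
    have h2 := h.expU_add hN hc hz
    rw [sub_add_cancel] at h2
    exact h.trans h2 (h.mul (h.expU_mem hN hc) (by simp) h1)

end CommMod

/-! ### Discrete cocompactness in unipotent hulls -/

section Unip
variable {B : Type*} [NormedRing B] [NormedAlgebra ℝ B] [FiniteDimensional ℝ B] [CompleteSpace B]

/-- The group of units congruent to `1` modulo a multiplicatively closed subspace `J`. -/
def oneAdd (J : Submodule ℝ B) (hJ : J * J ≤ J) : Subgroup Bˣ where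
  carrier := {u | (u : B) - 1 ∈ J ∧ (↑u⁻¹ : B) - 1 ∈ J}
  one_mem' := by simp
  inv_mem' h := ⟨h.2, by simpa using h.1⟩
  mul_mem' := by
    have key : ∀ a b : B, a - 1 ∈ J → b - 1 ∈ J → a * b - 1 ∈ J := by
      intro a b ha hb
      have : a * b - 1 = (a - 1) * (b - 1) + (a - 1) + (b - 1) := by noncomm_ring
      rw [this]
      exact J.add_mem (J.add_mem (hJ (Submodule.mul_mem_mul ha hb)) ha) hb
    intro u v hu hv
    exact ⟨by rw [Units.val_mul]; exact key _ _ hu.1 hv.1, by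
      rw [mul_inv_rev, Units.val_mul]; exact key _ _ hv.2 hu.2⟩

variable {J : Submodule ℝ B} {K : ℕ}

lemma nilSub_of_pow (hJ : J * J ≤ J) (hK : J ^ K = ⊥) : NilSub J K where
  mul a ha b hb := hJ (Submodule.mul_mem_mul ha hb)
  pow a ha := by
    have := Submodule.pow_mem_pow J ha K
    rwa [hK, Submodule.mem_bot] at this

lemma pow_succ_le (hJ : J * J ≤ J) {k : ℕ} (hk : 1 ≤ k) : J ^ (k + 1) ≤ J ^ k := by
  obtain ⟨j, rfl⟩ := Nat.exists_eq_add_of_le' hk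
  rw [pow_succ, pow_succ, mul_assoc]
  exact mul_le_mul' le_rfl hJ

lemma pow_le_of_le (hJ : J * J ≤ J) {k l : ℕ} (hk : 1 ≤ k) (hl : k ≤ l) : J ^ l ≤ J ^ k := by
  induction l, hl using Nat.le_induction with
  | base => exact le_rfl
  | succ l hl ih => exact (pow_succ_le hJ (hk.trans hl)).trans ih

lemma pow_le_self (hJ : J * J ≤ J) {k : ℕ} (hk : 1 ≤ k) : J ^ k ≤ J := by
  simpa using pow_le_of_le hJ le_rfl hk

lemma pow_mul_self_le (hJ : J * J ≤ J) {k : ℕ} (hk : 1 ≤ k) : J ^ k * J ^ k ≤ J ^ (k + 1) := by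
  rw [← pow_add]; exact pow_le_of_le hJ (by omega) (by omega)

lemma pow_mul_pow_le (hJ : J * J ≤ J) {k : ℕ} (hk : 1 ≤ k) : J ^ k * J ^ k ≤ J ^ k :=
  (pow_mul_self_le hJ hk).trans (pow_succ_le hJ hk)

lemma mul_one_add_mem {W : Submodule ℝ B} (h : W * J ≤ W) {a v : B} (ha : a ∈ W) (hv : v - 1 ∈ J) :
    a * v ∈ W := by
  have : a * v = a * (v - 1) + a := by noncomm_ring
  rw [this]
  exact W.add_mem (h (Submodule.mul_mem_mul ha hv)) ha

lemma commutator_mem_oneAdd (hJ : J * J ≤ J) {k : ℕ} (hk : 1 ≤ k) {x y : Bˣ}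
    (hx : x ∈ oneAdd (J ^ k) (pow_mul_pow_le hJ hk)) (hy : y ∈ oneAdd (J ^ k) (pow_mul_pow_le hJ hk)) :
    x * y * x⁻¹ * y⁻¹ ∈ oneAdd (J ^ (k + 1)) (pow_mul_pow_le hJ (by omega)) := by
  have hW : J ^ (k + 1) * J ≤ J ^ (k + 1) := by
    rw [← pow_succ]; exact pow_succ_le hJ (by omega)
  have key : ∀ {x y : Bˣ}, x ∈ oneAdd (J ^ k) (pow_mul_pow_le hJ hk) →
      y ∈ oneAdd (J ^ k) (pow_mul_pow_le hJ hk) → (↑(x * y * x⁻¹ * y⁻¹) : B) - 1 ∈ J ^ (k + 1) := by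
    intro x y hx hy
    have h1 : ((x : B) - 1) * (y - 1) - (y - 1) * (x - 1) ∈ J ^ (k + 1) :=
      sub_mem (pow_mul_self_le hJ hk (Submodule.mul_mem_mul hx.1 hy.1))
        (pow_mul_self_le hJ hk (Submodule.mul_mem_mul hy.1 hx.1))
    have h2 := mul_one_add_mem hW (mul_one_add_mem hW h1 (pow_le_self hJ hk hx.2))
      (pow_le_self hJ hk hy.2)
    convert h2 using 1
    have e : ((x : B) - 1) * (y - 1) - (y - 1) * (x - 1) = x * y - y * x := by noncomm_ring
    rw [e, sub_mul, sub_mul]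
    simp
  exact ⟨key hx hy, by
    have : (x * y * x⁻¹ * y⁻¹)⁻¹ = y * x * y⁻¹ * x⁻¹ := by group
    rw [this]; exact key hy hx⟩

/-- Commutators in Zariski closures of unipotent groups. -/
lemma NilSub.commutator_zarHull (hJ : NilSub J K) {L L' : Subgroup Bˣ}
    (hL : ∀ u ∈ L, (u : B) - 1 ∈ J) (h : ∀ x ∈ L, ∀ y ∈ L, x * y * x⁻¹ * y⁻¹ ∈ zarHull L') :
    ∀ x ∈ zarHull L, ∀ y ∈ zarHull L, x * y * x⁻¹ * y⁻¹ ∈ zarHull L' := by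
  set ι : Bˣ → B := fun v => (v : B) with hι
  have hu : ∀ x ∈ zarHull L, uinv K (x : B) = ↑x⁻¹ := fun x hx =>
    uinv_eq (hJ.pow _ (sub_one_mem_of_zarHull hL hx))
  have s1 : ∀ y ∈ L, ∀ x ∈ zarHull L, (↑(x * y * x⁻¹ * y⁻¹) : B) ∈ Zar (ι '' L') := by
    intro y hy x hx
    have hp := ((NCPoly.id.mul (.const (y : B))).mul (NCPoly.uinv K)).mul (.const (↑y⁻¹ : B))
    have := hp.map_zar (S := ι '' L) (T := ι '' L') ?_ _ hx.1
    · simpa only [hu x hx, Units.val_mul] using this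
    · rintro _ ⟨z, hz, rfl⟩
      have h1 := (h z hz y hy).1
      simp only [hι, hu z (le_zarHull L hz)]
      exact h1
  have s2 : ∀ x ∈ zarHull L, ∀ y ∈ zarHull L, (↑(x * y * x⁻¹ * y⁻¹) : B) ∈ Zar (ι '' L') := by
    intro x hx y hy
    have hp := (((NCPoly.const (x : B)).mul .id).mul (.const (↑x⁻¹ : B))).mul (NCPoly.uinv K)
    have := hp.map_zar (S := ι '' L) (T := ι '' L') ?_ _ hy.1
    · simpa only [hu y hy, Units.val_mul] using this
    · rintro _ ⟨z, hz, rfl⟩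
      have h1 := s1 z hz x hx
      simp only [hι, hu z (le_zarHull L hz)]
      exact h1
  intro x hx y hy
  refine ⟨s2 x hx y hy, ?_⟩
  have : (x * y * x⁻¹ * y⁻¹)⁻¹ = y * x * y⁻¹ * x⁻¹ := by group
  rw [this]
  exact s2 y hy x hx

/-- A unipotent group is cocompact in its Zariski closure, by descending induction along the
filtration of `L` by the subgroups of elements congruent to `1` modulo `J ^ k`. -/
lemma exists_compact_zarHull (hJ : J * J ≤ J) (hK : J ^ K = ⊥) (L : Subgroup Bˣ)
    (hL : L ≤ oneAdd J hJ) : ∃ C : Set Bˣ, C ⊆ zarHull L ∧ IsCompact C ∧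
      ∀ u ∈ zarHull L, ∃ c ∈ C, ∃ l ∈ L, u = c * l := by
  have hN := nilSub_of_pow hJ hK
  let Lk : ∀ k, 1 ≤ k → Subgroup Bˣ := fun k hk => L ⊓ oneAdd (J ^ k) (pow_mul_pow_le hJ hk)
  have key : ∀ j k (hk : 1 ≤ k), K ≤ k + j → ∃ C : Set Bˣ, C ⊆ zarHull (Lk k hk) ∧ IsCompact C ∧
      ∀ u ∈ zarHull (Lk k hk), ∃ c ∈ C, ∃ l ∈ Lk k hk, u = c * l := by
    intro j
    induction j with
    | zero =>
      intro k hk hKk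
      refine ⟨{1}, ?_, isCompact_singleton, fun u hu => ⟨1, rfl, 1, one_mem _, ?_⟩⟩
      · rintro _ rfl; exact one_mem _
      · have h1 := sub_one_mem_of_zarHull (J := J ^ k) (L := Lk k hk) (fun v (hv : v ∈ Lk k hk) => hv.2.1) hu
        have h2 : J ^ k = ⊥ := by
          obtain ⟨i, rfl⟩ := Nat.exists_eq_add_of_le (show K ≤ k from hKk)
          rw [pow_add, hK, Submodule.bot_mul]
        rw [h2, Submodule.mem_bot, sub_eq_zero] at h1
        rw [mul_one]; exact Units.ext h1
    | succ j ih =>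
      intro k hk hKk
      obtain ⟨C', hC', hC'c, hC'u⟩ := ih (k + 1) (by omega) (by omega)
      have hLJ : ∀ u ∈ Lk k hk, (u : B) - 1 ∈ J := fun u hu => (hL hu.1).1
      have hle : Lk (k + 1) (by omega) ≤ Lk k hk := fun u hu =>
        ⟨hu.1, pow_succ_le hJ hk hu.2.1, pow_succ_le hJ hk hu.2.2⟩
      have hcm : CommMod (zarHull (Lk k hk)) (zarHull (Lk (k + 1) (by omega))) :=
        ⟨zarHull_mono hle, hN.commutator_zarHull hLJ fun x hx y hy => le_zarHull _
          ⟨L.mul_mem (L.mul_mem (L.mul_mem hx.1 hy.1) (L.inv_mem hx.1)) (L.inv_mem hy.1),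
            commutator_mem_oneAdd hJ hk hx.2 hy.2⟩⟩
      have hcl := isClosed_zarHull (Lk (k + 1) (by omega))
      obtain ⟨C, hC, hCc, hCu⟩ := hcm.exists_compact hcl
        (X := (fun u : Bˣ => lg K (u : B)) '' Lk k hk) (by
          rintro _ ⟨u, hu, rfl⟩
          exact hN.lg_mem_zarLie (hLJ u hu) (le_zarHull _ hu))
      have hXL : Subgroup.closure (expU '' ((fun u : Bˣ => lg K (u : B)) '' Lk k hk)) ≤ Lk k hk := by
        rw [Subgroup.closure_le]
        rintro _ ⟨_, ⟨u, hu, rfl⟩, rfl⟩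
        have : expU (lg K (u : B)) = u := Units.ext (hN.exp_lg (hLJ u hu))
        rw [this]; exact hu
      refine ⟨(fun p : Bˣ × Bˣ => p.1 * p.2) '' (C ×ˢ C'), ?_,
        (hCc.prod hC'c).image continuous_mul, fun u hu => ?_⟩
      · rintro _ ⟨⟨c, c'⟩, ⟨hc, hc'⟩, rfl⟩
        exact mul_mem (hC hc) (hcm.le (hC' hc'))
      · obtain ⟨a, ha, rfl⟩ := hN.exists_zarLie hLJ hu
        obtain ⟨c, hc, l, hl, hlQ, h1⟩ := hCu a (hN.zarLie_le_span hLJ ha)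
        have h2 := hcm.conj (inv_mem (hC hc)) h1
        obtain ⟨c', hc', l', hl', h3⟩ := hC'u _ h2
        refine ⟨c * c', ⟨(c, c'), ⟨hc, hc'⟩, rfl⟩, l' * l, mul_mem (hle hl') (hXL hl), ?_⟩
        rw [mul_assoc c, ← mul_assoc c', ← h3]
        group
  obtain ⟨C, h1, h2, h3⟩ := key K 1 le_rfl (by omega)
  have : Lk 1 le_rfl = L := by
    refine inf_eq_left.2 fun u hu => ?_
    have := hL hu
    exact ⟨by rw [pow_one]; exact this.1, by rw [pow_one]; exact this.2⟩
  rw [this] at h1 h3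
  exact ⟨C, h1, h2, h3⟩

end Unip

/-! ### The adjoint representation -/

section Adjoint
variable {B : Type*} [NormedRing B] [NormedAlgebra ℝ B] [FiniteDimensional ℝ B] [CompleteSpace B]

lemma fix_of_elliptic {e : Bˣ} {d b : B} (he : Elliptic e) (hd : RealType d) (hc : Commute (e : B) d)
    (h : (e : B) * exp d * b = b) : (e : B) * b = b := by
  obtain ⟨C, hC⟩ := he
  have hce : Commute e (expU d) := Units.ext (hc.exp_right).eq
  have hx : ∀ m : ℤ, (↑((e * expU d) ^ m) : B) * b = b := by
    have hn : ∀ m : ℕ, (↑((e * expU d) ^ m) : B) * b = b := by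
      intro m
      induction m with
      | zero => simp
      | succ m ih => rw [pow_succ, Units.val_mul, mul_assoc, Units.val_mul, val_expU, h, ih]
    intro m
    obtain ⟨k, rfl | rfl⟩ := m.eq_nat_or_neg
    · rw [zpow_natCast]; exact hn k
    · rw [zpow_neg, zpow_natCast, Units.inv_mul_eq_iff_eq_mul, hn k]
  have h1 : ∀ m : ℤ, ‖exp ((m : ℝ) • d) * b‖ ≤ C * ‖b‖ := by
    intro m
    have e1 : (expU d) ^ m = e ^ (-m) * (e * expU d) ^ m := by
      rw [hce.mul_zpow, zpow_neg, inv_mul_cancel_left]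
    have e2 : exp ((m : ℝ) • d) * b = (↑(e ^ (-m)) : B) * b := by
      rw [Int.cast_smul_eq_zsmul, ← val_expU, expU_zsmul, e1, Units.val_mul, mul_assoc, hx]
    rw [e2]
    exact (norm_mul_le _ _).trans (by gcongr; exact hC _)
  have h2 : ∃ M, ∀ s ∈ Set.Icc (0 : ℝ) 1, ‖exp (s • d)‖ ≤ M :=
    isCompact_Icc.exists_bound_of_continuousOn
      (continuous_exp'.comp (continuous_id.smul continuous_const)).continuousOn
  obtain ⟨M, hM⟩ := h2
  have hdb : d * b = 0 := by
    refine mul_eq_zero_of_bounded (ExpPoly.mul hd (ExpPoly.const b)) b (fun t => rfl)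
      ⟨M * (C * ‖b‖), fun t => ?_⟩
    have e3 : exp (t • d) * b = exp (Int.fract t • d) * (exp (((⌊t⌋ : ℤ) : ℝ) • d) * b) := by
      rw [← mul_assoc, ← exp_add' (((Commute.refl d).smul_left _).smul_right _), ← add_smul,
        Int.fract_add_floor]
    rw [e3]
    have hf : Int.fract t ∈ Set.Icc (0 : ℝ) 1 := ⟨Int.fract_nonneg _, (Int.fract_lt_one _).le⟩
    refine (norm_mul_le _ _).trans (mul_le_mul (hM _ hf) (h1 _) (norm_nonneg _)
      ((norm_nonneg _).trans (hM _ hf)))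
  have hexp : exp d * b = b := by
    have := exp_mul_eigen (a := d) (b := b) (l := 0) (by simpa using hdb) 1
    simpa using this
  rwa [mul_assoc, hexp] at h

/-- Left multiplication, as a continuous operator. -/
noncomputable abbrev lm (a : B) : B →L[ℝ] B := ContinuousLinearMap.mul ℝ B a

/-- Right multiplication, as a continuous operator. -/
noncomputable abbrev rm (a : B) : B →L[ℝ] B := (ContinuousLinearMap.mul ℝ B).flip a

lemma lm_mul (a b : B) : lm (a * b) = lm a * lm b := by ext x; simp [mul_assoc]
lemma rm_mul (a b : B) : rm (a * b) = rm b * rm a := by ext x; simp [mul_assoc]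
lemma lm_rm (a b : B) : lm a * rm b = rm b * lm a := by ext x; simp [mul_assoc]

/-- The adjoint representation. -/
noncomputable def Ad : Bˣ →* (B →L[ℝ] B)ˣ where
  toFun u := ⟨lm (u : B) * rm (↑u⁻¹ : B), lm (↑u⁻¹ : B) * rm (u : B),
    by ext x; simp [mul_assoc], by ext x; simp [mul_assoc]⟩
  map_one' := by ext x; simp
  map_mul' u v := by ext x; simp [mul_assoc]

@[simp] lemma Ad_apply (u : Bˣ) (x : B) : (Ad u : B →L[ℝ] B) x = u * x * ↑u⁻¹ := by
  simp [Ad, mul_assoc]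

lemma expPoly_Ad {d : B} (hd : RealType d) : ExpPoly (fun t : ℝ => (Ad (expU (t • d)) : B →L[ℝ] B)) := by
  have h1 := ExpPoly.clm hd (ContinuousLinearMap.mul ℝ B)
  have h2 := ExpPoly.clm hd.neg (ContinuousLinearMap.mul ℝ B).flip
  have h3 : ExpPoly fun t : ℝ => lm (exp (t • d)) * rm (exp (t • -d)) :=
    ExpPoly.mul (B := B →L[ℝ] B) h1 h2
  convert h3 using 2 with t
  simp [Ad, ← expU_neg]

lemma Ad_expU (d : B) (t : ℝ) : (Ad (expU (t • d)) : B →L[ℝ] B) = exp (t • (lm d - rm d)) := by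
  refine eq_exp_of_ode (F := fun t : ℝ => (Ad (expU (t • d)) : B →L[ℝ] B)) ?_ (fun t => ?_) t
  · simp [expU_zero]
  · have h1 := (ContinuousLinearMap.mul ℝ B).hasFDerivAt.comp_hasDerivAt t (hasDerivAt_expt d t)
    have h2 := (ContinuousLinearMap.mul ℝ B).flip.hasFDerivAt.comp_hasDerivAt t
      (hasDerivAt_expt (-d) t)
    have h3 := HasDerivAt.mul (𝔸 := B →L[ℝ] B) h1 h2
    refine (h3.congr_deriv ?_).congr_of_eventuallyEq (Eventually.of_forall fun s => ?_)
    · have hc := (commute_expt (-d) t).eq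
      ext x
      simp [Ad, ← expU_neg, mul_assoc, sub_mul]
      have hc2 : d * exp (-(t • d)) = exp (-(t • d)) * d := by simpa using hc
      rw [hc2, sub_eq_add_neg]
    · ext x; simp [← expU_neg, mul_assoc]

/-- The Jordan decomposition is compatible with the adjoint representation. -/
lemma ell_Ad (x : Bˣ) : ell (Ad x) = Ad (ell x) := by
  refine (jordan_unique (x := Ad x) (e := Ad (ell x)) (d := lm (hyp x) - rm (hyp x)) ?_ ?_ ?_ ?_).1
  · have : expU (lm (hyp x) - rm (hyp x)) = Ad (expU (hyp x)) := by
      apply Units.ext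
      have := Ad_expU (hyp x) 1
      simpa using this.symm
    rw [this, ← map_mul, ← eq_ell_mul]
  · obtain ⟨C, hC⟩ := elliptic_ell x
    refine ⟨‖ContinuousLinearMap.mul ℝ B‖ * C * (‖(ContinuousLinearMap.mul ℝ B).flip‖ * C),
      fun m => ?_⟩
    rw [← map_zpow]
    refine (norm_mul_le _ _).trans (mul_le_mul ?_ ?_ (norm_nonneg _) ?_)
    · exact (ContinuousLinearMap.le_opNorm _ _).trans (by gcongr; exact hC m)
    · refine (ContinuousLinearMap.le_opNorm _ _).trans ?_
      gcongr
      have := hC (-m)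
      rwa [zpow_neg] at this
    · have : 0 ≤ C := (norm_nonneg _).trans (hC 0)
      positivity
  · have := expPoly_Ad (realType_hyp x)
    simp only [Ad_expU] at this
    exact this
  · have hc := (ell_commute_hyp x).eq
    have hc' : (↑(ell x)⁻¹ : B) * hyp x = hyp x * ↑(ell x)⁻¹ := by
      have : Commute (↑(ell x)⁻¹ : B) (hyp x) := (ell_commute_hyp x).units_inv_left
      exact this.eq
    ext y
    simp [mul_sub, sub_mul, mul_assoc]
    rw [← mul_assoc (ell x : B) (hyp x), hc, mul_assoc, hc']

lemma map_mem_of_mem_adjoin {A f : B →L[ℝ] B} (hf : f ∈ Algebra.adjoin ℝ {A}) {W : Submodule ℝ B}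
    (hA : ∀ w ∈ W, A w ∈ W) : ∀ w ∈ W, f w ∈ W := by
  induction hf using Algebra.adjoin_induction with
  | mem x hx => rw [Set.mem_singleton_iff.1 hx]; exact hA
  | algebraMap r => intro w hw; simpa [Algebra.algebraMap_eq_smul_one] using W.smul_mem r hw
  | add f g _ _ hf hg => exact fun w hw => W.add_mem (hf w hw) (hg w hw)
  | mul f g _ _ hf hg => exact fun w hw => hf _ (hg w hw)

/-- A subspace normalized by `x` is normalized by its elliptic part. -/
lemma Ad_ell_mem {x : Bˣ} {W : Submodule ℝ B} (h : ∀ w ∈ W, (x : B) * w * ↑x⁻¹ ∈ W) :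
    ∀ w ∈ W, (ell x : B) * w * ↑(ell x)⁻¹ ∈ W := by
  have := map_mem_of_mem_adjoin (ell_mem_adjoin (Ad x)) (W := W) (fun w hw => by
    rw [Ad_apply]; exact h w hw)
  intro w hw
  have := this w hw
  rwa [ell_Ad, Ad_apply] at this

lemma eq_add_of_linear {W : Type*} [AddCommGroup W] [Module ℝ W] [FiniteDimensional ℝ W]
    (f g : W →ₗ[ℝ] W) (hfg : ∀ v, f (g v) = g (f v)) (h1 : ∀ v, g (g v - v) = g v - v → g v = v)
    (h2 : ∀ u, f u = u → g u = u) (z : W) : ∃ z0 w, g z0 = z0 ∧ z = z0 + (w - f w) := by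
  let S : W →ₗ[ℝ] W := g - LinearMap.id
  have hdis : Disjoint (LinearMap.ker S) (LinearMap.range S) := by
    rw [Submodule.disjoint_def]
    rintro u hu ⟨v, rfl⟩
    have : g (g v - v) - (g v - v) = 0 := hu
    have := h1 v (sub_eq_zero.1 this)
    exact sub_eq_zero.2 this
  have htop : LinearMap.ker S ⊔ LinearMap.range S = ⊤ := by
    refine Submodule.eq_top_of_disjoint _ _ ?_ hdis
    rw [add_comm, LinearMap.finrank_range_add_finrank_ker]
  have hmap : ∀ u ∈ LinearMap.range S, ((LinearMap.id : W →ₗ[ℝ] W) - f) u ∈ LinearMap.range S := by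
    rintro _ ⟨v, rfl⟩
    refine ⟨v - f v, ?_⟩
    simp [S, hfg]
    abel
  have hinj : Function.Injective (((LinearMap.id : W →ₗ[ℝ] W) - f).restrict hmap) := by
    rw [← LinearMap.ker_eq_bot, LinearMap.ker_eq_bot']
    rintro ⟨u, hu⟩ h0
    have h0 : u - f u = 0 := congrArg Subtype.val h0
    have : u ∈ LinearMap.ker S := sub_eq_zero.2 (h2 u (sub_eq_zero.1 h0).symm)
    exact Subtype.ext (Submodule.disjoint_def.1 hdis u this hu)
  obtain ⟨z0, hz0, u, hu, rfl⟩ := Submodule.mem_sup.1 (htop ▸ Submodule.mem_top : z ∈ _)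
  obtain ⟨w, hw⟩ := LinearMap.injective_iff_surjective.1 hinj ⟨u, hu⟩
  have hw : (w : W) - f w = u := congrArg Subtype.val hw
  exact ⟨z0, w, sub_eq_zero.1 hz0, by rw [hw]⟩

/-- The cohomological equation for the adjoint action of `x`, up to vectors fixed by the elliptic
part of `x`. -/
lemma exists_cohom {x : Bˣ} {W : Submodule ℝ B} (h : ∀ w ∈ W, (x : B) * w * ↑x⁻¹ ∈ W) {z : B}
    (hz : z ∈ W) : ∃ z0 ∈ W, ∃ w ∈ W, Commute (ell x : B) z0 ∧ z = z0 + (w - x * w * ↑x⁻¹) := by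
  let A := Ad x
  have hA : ∀ w ∈ W, ((A : B →L[ℝ] B) : B →ₗ[ℝ] B) w ∈ W := fun w hw => by
    simpa [A] using h w hw
  have hT : ∀ w ∈ W, ((ell A : B →L[ℝ] B) : B →ₗ[ℝ] B) w ∈ W := fun w hw => by
    simpa [A, ell_Ad] using Ad_ell_mem h w hw
  have hTe : Elliptic (ell A) := elliptic_ell A
  obtain ⟨z0, w, h1, h2⟩ : ∃ z0 w : W, LinearMap.restrict _ hT z0 = z0 ∧
      (⟨z, hz⟩ : W) = z0 + (w - LinearMap.restrict _ hA w) := by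
    refine eq_add_of_linear _ _ ?_ ?_ ?_ _
    · intro v
      have : Commute (A : B →L[ℝ] B) (ell A : B →L[ℝ] B) := commute_ell (Commute.refl _)
      exact Subtype.ext (DFunLike.congr_fun this.eq (v : B))
    · intro v hv
      have hv : (ell A : B →L[ℝ] B) ((ell A : B →L[ℝ] B) v - v) = (ell A : B →L[ℝ] B) v - v :=
        congrArg Subtype.val hv
      set u := (ell A : B →L[ℝ] B) v - v with hu
      have hm : ∀ m : ℕ, (↑(ell A ^ m) : B →L[ℝ] B) v = v + (m : ℝ) • u := by
        intro m
        induction m with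
        | zero => simp
        | succ m ih =>
          rw [pow_succ', Units.val_mul, mul_apply_eq_comp, ih, map_add, map_smul, hv,
            show (ell A : B →L[ℝ] B) v = v + u by rw [hu]; abel]
          push_cast
          module
      obtain ⟨C, hC⟩ := hTe
      have hb : ∀ m : ℕ, m * ‖u‖ ≤ C * ‖(v : B)‖ + ‖(v : B)‖ := by
        intro m
        have h3 := hC m
        rw [zpow_natCast] at h3
        have h4 : (m : ℝ) • u = (↑(ell A ^ m) : B →L[ℝ] B) v - v := by rw [hm]; abel
        calc m * ‖u‖ = ‖(m : ℝ) • u‖ := by rw [norm_smul]; simp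
          _ ≤ ‖(↑(ell A ^ m) : B →L[ℝ] B) v‖ + ‖(v : B)‖ := by rw [h4]; exact norm_sub_le _ _
          _ ≤ _ := by
            gcongr
            exact (ContinuousLinearMap.le_opNorm _ _).trans (by gcongr)
      have hu0 : u = 0 := by
        by_contra hne
        obtain ⟨m, hm⟩ := exists_nat_gt ((C * ‖(v : B)‖ + ‖(v : B)‖) / ‖u‖)
        rw [div_lt_iff₀ (norm_pos_iff.2 hne)] at hm
        exact absurd (hb m) (not_le.2 hm)
      exact Subtype.ext (sub_eq_zero.1 hu0)
    · intro u hu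
      have hu : (A : B →L[ℝ] B) u = u := congrArg Subtype.val hu
      refine Subtype.ext ?_
      change (ell A : B →L[ℝ] B) u = u
      by_cases h0 : (u : B) = 0
      · rw [h0, map_zero]
      obtain ⟨φ, -, hφ⟩ := exists_dual_vector ℝ (u : B) (norm_ne_zero_iff.2 h0)
      have hφ0 : φ u ≠ 0 := by rw [hφ]; simpa using h0
      have h5 := fix_of_elliptic (b := φ.smulRight (u : B)) hTe (realType_hyp A) (ell_commute_hyp A) (by
        have : (ell A : B →L[ℝ] B) * exp (hyp A) = A := by
          conv_rhs => rw [eq_ell_mul A]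
          rfl
        rw [this]
        ext y
        simp only [mul_apply_eq_comp, ContinuousLinearMap.smulRight_apply, map_smul, hu])
      have h6 := DFunLike.congr_fun h5 (u : B)
      simp only [mul_apply_eq_comp, ContinuousLinearMap.smulRight_apply, map_smul] at h6
      exact smul_right_injective _ hφ0 h6
  refine ⟨z0, z0.2, w, w.2, ?_, ?_⟩
  · have h1 : (ell A : B →L[ℝ] B) z0 = z0 := congrArg Subtype.val h1
    rw [ell_Ad, Ad_apply, Units.mul_inv_eq_iff_eq_mul] at h1
    exact h1
  · have h2 : z = z0 + (w - (A : B →L[ℝ] B) w) := congrArg Subtype.val h2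
    rwa [Ad_apply] at h2

end Adjoint

/-! ### Elliptic parts modulo a unipotent group -/

section Lemma1
variable {B : Type*} [NormedRing B] [NormedAlgebra ℝ B] [FiniteDimensional ℝ B] [CompleteSpace B]

/-- `J` is a nilpotent two-sided ideal of the subalgebra `S`. -/
structure NilIdeal (S : Subalgebra ℝ B) (J : Submodule ℝ B) (K : ℕ) : Prop where
  le : ∀ j ∈ J, j ∈ S
  left : ∀ a ∈ S, ∀ j ∈ J, a * j ∈ J
  right : ∀ a ∈ S, ∀ j ∈ J, j * a ∈ J
  pow : J ^ K = ⊥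

variable {S : Subalgebra ℝ B} {J : Submodule ℝ B} {K : ℕ}

lemma NilIdeal.mul_le (h : NilIdeal S J K) : J * J ≤ J :=
  Submodule.mul_le.2 fun a ha b hb => h.left a (h.le a ha) b hb

lemma NilIdeal.nilSub (h : NilIdeal S J K) : NilSub J K := nilSub_of_pow h.mul_le h.pow

lemma NilIdeal.pow_left (h : NilIdeal S J K) {k : ℕ} (hk : 1 ≤ k) {a j : B} (ha : a ∈ S)
    (hj : j ∈ J ^ k) : a * j ∈ J ^ k := by
  obtain ⟨i, rfl⟩ := Nat.exists_eq_add_of_le' hk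
  rw [pow_succ'] at hj ⊢
  induction hj using Submodule.mul_induction_on' with
  | mem_mul_mem m hm n hn => rw [← mul_assoc]; exact Submodule.mul_mem_mul (h.left a ha m hm) hn
  | add x _ y _ hx hy => rw [mul_add]; exact add_mem hx hy

lemma NilIdeal.pow_right (h : NilIdeal S J K) {k : ℕ} (hk : 1 ≤ k) {a j : B} (ha : a ∈ S)
    (hj : j ∈ J ^ k) : j * a ∈ J ^ k := by
  obtain ⟨i, rfl⟩ := Nat.exists_eq_add_of_le' hk
  rw [pow_succ] at hj ⊢
  induction hj using Submodule.mul_induction_on' with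
  | mem_mul_mem m hm n hn => rw [mul_assoc]; exact Submodule.mul_mem_mul hm (h.right a ha n hn)
  | add x _ y _ hx hy => rw [add_mul]; exact add_mem hx hy

lemma mul_mem_succ {k : ℕ} {a b : B} (ha : a ∈ J) (hb : b ∈ J ^ k) : a * b ∈ J ^ (k + 1) := by
  rw [pow_succ']; exact Submodule.mul_mem_mul ha hb

lemma mul_mem_succ' {k : ℕ} {a b : B} (ha : a ∈ J ^ k) (hb : b ∈ J) : a * b ∈ J ^ (k + 1) := by
  rw [pow_succ]; exact Submodule.mul_mem_mul ha hb

lemma pow_sub_pow_mem (hJ : J * J ≤ J) {k : ℕ} (hk : 1 ≤ k) {a b : B} (ha : a ∈ J) (hb : b ∈ J)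
    (hab : a - b ∈ J ^ k) (i : ℕ) : a ^ (i + 1) - b ^ (i + 1) ∈ J ^ k := by
  induction i with
  | zero => simpa using hab
  | succ i ih =>
    have e : a ^ (i + 1 + 1) - b ^ (i + 1 + 1) = a * (a ^ (i + 1) - b ^ (i + 1)) +
        (a - b) * b ^ (i + 1) := by
      rw [pow_succ' a (i + 1), pow_succ' b (i + 1), mul_sub, sub_mul]; abel
    rw [e]
    have hbi : b ^ (i + 1) ∈ J := by
      have := Submodule.pow_mem_pow J hb (i + 1)
      exact pow_le_self hJ (by omega) this
    exact add_mem (pow_succ_le hJ hk (mul_mem_succ ha ih)) (pow_succ_le hJ hk (mul_mem_succ' hab hbi))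

lemma lg_sub_lg_mem (hJ : J * J ≤ J) {k : ℕ} (hk : 1 ≤ k) {x y : B} (hx : x - 1 ∈ J)
    (hy : y - 1 ∈ J) (hxy : x - y ∈ J ^ k) : lg K x - lg K y ∈ J ^ k := by
  rw [lg, lg, ← Finset.sum_sub_distrib]
  refine Submodule.sum_mem _ fun i _ => ?_
  rw [← smul_sub]
  exact Submodule.smul_mem _ _ (pow_sub_pow_mem hJ hk hx hy (by simpa using hxy) i)

lemma exp_add_sub_mem (hJ : J * J ≤ J) {k : ℕ} (hk : 1 ≤ k) {a b : B} (ha : a ∈ J)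
    (hb : b ∈ J ^ k) : exp (a + b) - exp a - b ∈ J ^ (k + 1) := by
  have hab : a + b ∈ J := add_mem ha (pow_le_self hJ hk hb)
  have h := (exp_series_hasSum_exp' (𝕂 := ℝ) (a + b)).sub (exp_series_hasSum_exp' (𝕂 := ℝ) a)
  rw [← hasSum_nat_add_iff' 2] at h
  simp only [Finset.sum_range_succ, Finset.range_zero, Finset.sum_empty, Nat.factorial, pow_zero,
    pow_one, Nat.cast_one, inv_one, one_smul, sub_self, zero_add, mul_one, add_sub_cancel_left] at h
  refine ((J ^ (k + 1)).closed_of_finiteDimensional).mem_of_tendsto h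
    (Eventually.of_forall fun s => Submodule.sum_mem _ fun i _ => ?_)
  rw [← smul_sub]
  refine Submodule.smul_mem _ _ ?_
  have e : (a + b) ^ (i + 2) - a ^ (i + 2) = (a + b) * ((a + b) ^ (i + 1) - a ^ (i + 1)) +
      b * a ^ (i + 1) := by rw [pow_succ', pow_succ' a]; noncomm_ring
  rw [e]
  have hai : a ^ (i + 1) ∈ J := pow_le_self hJ (by omega) (Submodule.pow_mem_pow J ha (i + 1))
  exact add_mem (mul_mem_succ hab (pow_sub_pow_mem hJ hk hab ha (by simpa using hb) i))
    (mul_mem_succ' hb hai)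

lemma NilIdeal.aeval_sub_mem (h : NilIdeal S J K) {x y : B} (hx : x ∈ S) (hy : y ∈ S)
    (hxy : x - y ∈ J) (p : ℝ[X]) : aeval x p - aeval y p ∈ J := by
  induction p using Polynomial.induction_on' with
  | add p q hp hq =>
    rw [map_add, map_add, add_sub_add_comm]; exact add_mem hp hq
  | monomial n c =>
    rw [aeval_monomial, aeval_monomial, ← Algebra.smul_def, ← Algebra.smul_def, ← smul_sub]
    refine J.smul_mem _ ?_
    induction n with
    | zero => simp
    | succ n ih =>
      have e : x ^ (n + 1) - y ^ (n + 1) = x ^ n * (x - y) + (x ^ n - y ^ n) * y := by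
        rw [pow_succ, pow_succ]; noncomm_ring
      rw [e]
      exact add_mem (h.left _ (pow_mem hx n) _ hxy) (h.right _ hy _ ih)

/-- Being positively split only depends on the class modulo a nilpotent ideal. -/
lemma NilIdeal.posSplit (h : NilIdeal S J K) {x y : B} (hx : x ∈ S) (hy : y ∈ S)
    (hxy : x - y ∈ J) (hs : PosSplit y) : PosSplit x := by
  obtain ⟨s, hs, h0⟩ := hs
  have h1 := h.aeval_sub_mem hx hy hxy (s.map (fun l => X - Polynomial.C l)).prod
  rw [h0, sub_zero] at h1
  refine ⟨K • s, fun r hr => hs r (Multiset.mem_of_mem_nsmul hr), ?_⟩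
  rw [Multiset.map_nsmul, Multiset.prod_nsmul, map_pow]
  exact h.nilSub.pow _ h1

variable {L : Subgroup Bˣ}

lemma zarLie_conj {x : Bˣ} (hx : ∀ n ∈ zarHull L, x * n * x⁻¹ ∈ zarHull L) :
    ∀ a ∈ zarLie L, (x : B) * a * ↑x⁻¹ ∈ zarLie L := by
  intro a ha t
  rw [← smul_mul_assoc, ← mul_smul_comm, expU_conj]
  exact hx _ (ha t)

/-- Multiplying `x` by an element `ν` of a unipotent Zariski closed group normalized by `x` changes
the elliptic part only by a conjugation within that group, which can be chosen in `D` if `x` and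
`ν` lie in `D`. -/
lemma NilIdeal.ell_mul (h : NilIdeal S J K) (hL : L ≤ oneAdd J h.mul_le) {D : Subalgebra ℝ B}
    (hD : D ≤ S) {x : Bˣ} (hxD : (x : B) ∈ D) (hx : ∀ n ∈ zarHull L, x * n * x⁻¹ ∈ zarHull L)
    {ν : Bˣ} (hν : ν ∈ zarHull L) (hνD : (ν : B) ∈ D) :
    ∃ n ∈ zarHull L, (n : B) ∈ D ∧ ell (ν * x) = n * ell x * n⁻¹ := by
  have hLJ : ∀ u ∈ L, (u : B) - 1 ∈ J := fun u hu => (hL hu).1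
  have hN := h.nilSub
  have hxiD : (↑x⁻¹ : B) ∈ D := inv_mem_subalgebra D hxD
  have hexpD : ∀ {a : B}, a ∈ D → exp a ∈ D := fun ha => exp_mem' D ha
  -- successive approximation of the cohomological equation `n⁻¹ ν (x n x⁻¹) = exp y0`, with `y0`
  -- fixed by the elliptic part of `x`
  have key : ∀ k, 1 ≤ k → ∃ n ∈ zarHull L, (n : B) ∈ D ∧ ∃ y0 ∈ zarLie L, y0 ∈ D ∧
      Commute (ell x : B) y0 ∧ (↑(n⁻¹ * ν * (x * n * x⁻¹)) : B) - exp y0 ∈ J ^ k := by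
    intro k hk
    induction k, hk using Nat.le_induction with
    | base =>
      refine ⟨1, one_mem _, by simp, 0, zero_mem _, D.zero_mem,
        Commute.zero_right _, ?_⟩
      simpa using sub_one_mem_of_zarHull hLJ hν
    | succ k hk ih =>
      obtain ⟨n, hn, hnD, y0, hy0, hy0D, hc, hJ⟩ := ih
      set ν' := n⁻¹ * ν * (x * n * x⁻¹) with hν'
      have hν'N : ν' ∈ zarHull L := mul_mem (mul_mem (inv_mem hn) hν) (hx n hn)
      have hν'D : (ν' : B) ∈ D := by
        simp only [hν', Units.val_mul]
        exact mul_mem (mul_mem (inv_mem_subalgebra D hnD) hνD) (mul_mem (mul_mem hxD hnD) hxiD)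
      have hν'J := sub_one_mem_of_zarHull hLJ hν'N
      set y := lg K (ν' : B) with hy
      have hyn : y ∈ zarLie L := hN.lg_mem_zarLie hν'J hν'N
      have hexpy : exp y = ν' := hN.exp_lg hν'J
      have hyD : y ∈ D := Subalgebra.sum_mem _ fun i _ =>
        D.smul_mem (pow_mem (sub_mem hν'D D.one_mem) _) _
      have hy0J : y0 ∈ J := zarLie_le hLJ hy0
      have hz : y - y0 ∈ J ^ k := by
        have := lg_sub_lg_mem (K := K) h.mul_le hk hν'J (hN.exp_sub_one_mem hy0J) hJ
        rwa [hN.lg_exp hy0J] at this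
      let W : Submodule ℝ B := zarLie L ⊓ Subalgebra.toSubmodule D ⊓ J ^ k
      have hW : ∀ w ∈ W, (x : B) * w * ↑x⁻¹ ∈ W := fun w hw =>
        ⟨⟨zarLie_conj hx w hw.1.1, D.mul_mem (D.mul_mem hxD hw.1.2) hxiD⟩,
          h.pow_right hk (hD hxiD) (h.pow_left hk (hD hxD) hw.2)⟩
      obtain ⟨z0, hz0, w, hw, hcz, hzz⟩ := exists_cohom hW (z := y - y0)
        ⟨⟨sub_mem hyn hy0, sub_mem hyD hy0D⟩, hz⟩
      refine ⟨n * expU w, mul_mem hn (expU_mem_of_zarLie hw.1.1),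
        mul_mem hnD (hexpD hw.1.2), y0 + z0, add_mem hy0 hz0.1.1, add_mem hy0D hz0.1.2,
        hc.add_right hcz, ?_⟩
      set w' := (x : B) * w * ↑x⁻¹ with hw'
      have hw'W : w' ∈ W := hW w hw
      have e1 : (n * expU w)⁻¹ * ν * (x * (n * expU w) * x⁻¹) = expU (-w) * ν' * expU w' := by
        rw [hw', expU_conj, expU_neg, hν']; group
      rw [e1, Units.val_mul, Units.val_mul, val_expU, val_expU, ← hexpy]
      -- modulo `J ^ (k + 1)` everything is explicit
      have a1 := exp_add_sub_mem h.mul_le hk (a := 0) J.zero_mem ((J ^ k).neg_mem hw.2)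
      have a2 := exp_add_sub_mem h.mul_le hk (a := 0) J.zero_mem hw'W.2
      have a3 := exp_add_sub_mem h.mul_le hk hy0J hz
      have a4 := exp_add_sub_mem h.mul_le hk hy0J hz0.2
      rw [add_sub_cancel] at a3
      simp only [zero_add, exp_zero] at a1 a2
      have b0 : exp y - 1 ∈ J := hN.exp_sub_one_mem (zarLie_le hLJ hyn)
      have b1 : exp w' - 1 ∈ J := hN.exp_sub_one_mem (zarLie_le hLJ hw'W.1.1)
      have b2 := mul_one_add_mem (W := J ^ (k + 1))
        (by rw [← pow_succ]; exact pow_succ_le h.mul_le (by omega))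
        (mul_one_add_mem (W := J ^ (k + 1))
        (by rw [← pow_succ]; exact pow_succ_le h.mul_le (by omega)) a1 b0) b1
      have b3 : (exp y - 1) * w' ∈ J ^ (k + 1) := mul_mem_succ b0 hw'W.2
      have b4 : w * (exp y - 1) ∈ J ^ (k + 1) := mul_mem_succ' hw.2 b0
      have b5 : w * exp y * (exp w' - 1) ∈ J ^ (k + 1) :=
        mul_mem_succ' (h.pow_right hk (hD (hexpD hyD)) hw.2) b1
      have b6 : exp y * (exp w' - 1 - w') ∈ J ^ (k + 1) :=
        h.pow_left (by omega) (hD (hexpD hyD)) a2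
      have hfin : exp (-w) * exp y * exp w' - exp (y0 + z0) =
          (exp (-w) - 1 - -w) * exp y * exp w' + exp y * (exp w' - 1 - w') + (exp y - 1) * w'
          - w * (exp y - 1) - w * exp y * (exp w' - 1) + (exp y - exp y0 - (y - y0))
          - (exp (y0 + z0) - exp y0 - z0) := by
        rw [hzz]; noncomm_ring
      rw [hfin]
      exact sub_mem (add_mem (sub_mem (sub_mem (add_mem (add_mem b2 b6) b3) b4) b5) a3) a4
  obtain ⟨n, hn, hnD, y0, hy0, hy0D, hc, hJ⟩ := key (K + 1) (by omega)
  refine ⟨n, hn, hnD, ?_⟩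
  rw [pow_succ, h.pow, Submodule.bot_mul, Submodule.mem_bot, sub_eq_zero] at hJ
  have h1 : n⁻¹ * ν * (x * n * x⁻¹) = expU y0 := Units.ext hJ
  have h2 : n⁻¹ * (ν * x) * n⁻¹⁻¹ = ell x * (expU y0 * expU (hyp x)) := by
    have e1 : n⁻¹ * (ν * x) * n⁻¹⁻¹ = expU y0 * x := by rw [← h1]; group
    have e2 : ell x * expU y0 = expU y0 * ell x := Units.ext hc.exp_right.eq
    rw [e1, ← mul_assoc, e2, mul_assoc, ← eq_ell_mul]
  set y := expU y0 * expU (hyp x) with hy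
  have hyD : (y : B) ∈ D := mul_mem (hexpD hy0D) (hexpD (hyp_mem hxD))
  -- `y` is congruent to `exp (hyp x)` modulo `J`, so it has no elliptic part
  have hps : PosSplit (y : B) := by
    refine h.posSplit (hD hyD) (hD (hexpD (hyp_mem hxD))) ?_ (posSplit_hyp x)
    have : (y : B) - exp (hyp x) = (exp y0 - 1) * exp (hyp x) := by
      rw [hy, Units.val_mul, val_expU, val_expU, sub_mul, one_mul]
    rw [this]
    exact h.right _ (hD (hexpD (hyp_mem hxD))) _ (hN.exp_sub_one_mem (zarLie_le hLJ hy0))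
  have hye : y = expU (hyp y) := by
    conv_lhs => rw [eq_ell_mul y, ell_eq_one_of_posSplit hps, one_mul]
  have hcy : Commute (ell x : B) (y : B) := by
    rw [hy, Units.val_mul]
    exact hc.exp_right.mul_right (ell_commute_hyp x).exp_right
  have h3 : ell (n⁻¹ * (ν * x) * n⁻¹⁻¹) = ell x :=
    (jordan_unique (by rw [h2, ← hye]) (elliptic_ell x) (realType_hyp y) (commute_hyp hcy)).1
  rw [ell_conj] at h3
  rw [← h3]; group

end Lemma1

/-! ### Solvable linear groups are virtually triangular -/

section LieKolchin

lemma finiteIndex_of_fun {Γ F : Type*} [Group Γ] (K : Subgroup Γ) (f : Γ → F)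
    (hf : (Set.range f).Finite) (h : ∀ x y, f x = f y → x⁻¹ * y ∈ K) : K.FiniteIndex := by
  have : Finite (Set.range f) := hf
  have : Finite (Γ ⧸ K) := by
    refine Finite.of_injective (fun q : Γ ⧸ K => (⟨f q.out, q.out, rfl⟩ : Set.range f)) ?_
    intro q q' hq
    have := h _ _ (congrArg Subtype.val hq)
    rw [← QuotientGroup.eq, QuotientGroup.out_eq', QuotientGroup.out_eq'] at this
    exact this
  exact Subgroup.finiteIndex_of_finite_quotient

variable {Γ : Type*} [Group Γ] {W : Type*} [AddCommGroup W] [Module ℂ W] [FiniteDimensional ℂ W]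

/-- No proper nonzero subspace is invariant under a subgroup of finite index. -/
def StronglyIrreducible (ρ : Γ →* Module.End ℂ W) : Prop :=
  ∀ K : Subgroup Γ, K.FiniteIndex → ∀ U : Submodule ℂ W, (∀ g ∈ K, ∀ u ∈ U, ρ g u ∈ U) →
    U ≠ ⊥ → U = ⊤

lemma rho_inv_apply (ρ : Γ →* Module.End ℂ W) (g : Γ) (w : W) : ρ g⁻¹ (ρ g w) = w := by
  rw [← Module.End.mul_apply, ← map_mul, inv_mul_cancel, map_one, Module.End.one_apply]

lemma rho_apply_inv (ρ : Γ →* Module.End ℂ W) (g : Γ) (w : W) : ρ g (ρ g⁻¹ w) = w := by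
  rw [← Module.End.mul_apply, ← map_mul, mul_inv_cancel, map_one, Module.End.one_apply]

/-- If a subalgebra normalized by a strongly irreducible group has a common eigenvector, then it
consists of scalars: its finitely many weights are permuted by the group. -/
lemma StronglyIrreducible.scalar {ρ : Γ →* Module.End ℂ W} (hρ : StronglyIrreducible ρ)
    (A : Subalgebra ℂ (Module.End ℂ W)) (hA : ∀ g, ∀ a ∈ A, ρ g * a * ρ g⁻¹ ∈ A) {w : W}
    (hw : w ≠ 0) (hwA : ∀ a ∈ A, ∃ c : ℂ, a w = c • w) :
    ∀ a ∈ A, ∃ c : ℂ, ∀ u, a u = c • u := by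
  choose! c hc using hwA
  have hcinj : ∀ {s t : ℂ}, s • w = t • w → s = t := fun h => smul_left_injective ℂ hw h
  have hA' : ∀ g, ∀ a ∈ A, ρ g⁻¹ * a * ρ g ∈ A := fun g a ha => by
    simpa using hA g⁻¹ a ha
  have hmulinv : ∀ g, ρ g * ρ g⁻¹ = 1 := fun g => by rw [← map_mul, mul_inv_cancel, map_one]
  have hinvmul : ∀ g, ρ g⁻¹ * ρ g = 1 := fun g => by rw [← map_mul, inv_mul_cancel, map_one]
  let K : Subgroup Γ :=
    { carrier := {g | ∀ a ∈ A, c (ρ g⁻¹ * a * ρ g) = c a}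
      one_mem' := fun a _ => by simp
      mul_mem' := fun {g h} hg hh a ha => by
        rw [← hg a ha, ← hh _ (hA' g a ha)]
        simp only [mul_inv_rev, map_mul, mul_assoc]
      inv_mem' := fun {g} hg a ha => by
        have := hg (ρ g * a * ρ g⁻¹) (hA g a ha)
        rw [inv_inv, ← this]
        congr 1
        calc ρ g⁻¹ * (ρ g * a * ρ g⁻¹) * ρ g = (ρ g⁻¹ * ρ g) * a * (ρ g⁻¹ * ρ g) := by
              simp only [mul_assoc]
          _ = a := by rw [hinvmul, one_mul, mul_one] }
  let f : Γ → (A → ℂ) := fun g a => c (ρ g⁻¹ * a * ρ g)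
  have hfin : (Set.range f).Finite := by
    refine (Set.finite_range (fun φ : A →ₐ[ℂ] ℂ => (φ : A → ℂ))).subset ?_
    rintro _ ⟨g, rfl⟩
    have h1 : ∀ a ∈ A, (ρ g⁻¹ * a * ρ g) w = c (ρ g⁻¹ * a * ρ g) • w :=
      fun a ha => hc _ (hA' g a ha)
    refine ⟨AlgHom.ofLinearMap
      { toFun := f g
        map_add' := fun a b => hcinj ?_
        map_smul' := fun t a => hcinj ?_ } (hcinj ?_) (fun a b => hcinj ?_), rfl⟩
    · change c (ρ g⁻¹ * (a + b : A) * ρ g) • w = (c (ρ g⁻¹ * a * ρ g) + c (ρ g⁻¹ * b * ρ g)) • w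
      rw [add_smul, ← h1 _ (a + b).2, ← h1 _ a.2, ← h1 _ b.2]
      simp
    · change c (ρ g⁻¹ * (t • a : A) * ρ g) • w = (t * c (ρ g⁻¹ * a * ρ g)) • w
      rw [mul_smul, ← h1 _ (t • a).2, ← h1 _ a.2]
      simp
    · change c (ρ g⁻¹ * (1 : A) * ρ g) • w = (1 : ℂ) • w
      rw [← h1 _ (1 : A).2, OneMemClass.coe_one, mul_one, hinvmul, one_smul, Module.End.one_apply]
    · change c (ρ g⁻¹ * (a * b : A) * ρ g) • w = (c (ρ g⁻¹ * a * ρ g) * c (ρ g⁻¹ * b * ρ g)) • w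
      rw [mul_comm, mul_smul, ← h1 _ (a * b).2, ← h1 _ a.2, ← map_smul, ← h1 _ b.2]
      simp
  have hK : K.FiniteIndex := by
    refine finiteIndex_of_fun K f hfin fun x y hxy a ha => ?_
    have := congrFun hxy ⟨ρ x * a * ρ x⁻¹, hA x a ha⟩
    simp only [f] at this
    have e1 : ρ x⁻¹ * (ρ x * a * ρ x⁻¹) * ρ x = a := by
      calc ρ x⁻¹ * (ρ x * a * ρ x⁻¹) * ρ x = (ρ x⁻¹ * ρ x) * a * (ρ x⁻¹ * ρ x) := by
            simp only [mul_assoc]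
        _ = a := by rw [hinvmul, one_mul, mul_one]
    rw [e1] at this
    rw [this]
    simp only [mul_inv_rev, inv_inv, map_mul, mul_assoc]
  let U : Submodule ℂ W := ⨅ a ∈ A, LinearMap.ker (a - c a • (1 : Module.End ℂ W))
  have hU : ∀ u, u ∈ U ↔ ∀ a ∈ A, a u = c a • u := fun u => by
    simp [U, Submodule.mem_iInf, sub_eq_zero]
  have hUK : ∀ g ∈ K, ∀ u ∈ U, ρ g u ∈ U := fun g hg u hu => by
    rw [hU] at hu ⊢
    intro a ha
    have h2 := hu _ (hA' g a ha)
    rw [hg a ha] at h2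
    rw [← map_smul, ← h2]
    simp only [Module.End.mul_apply, rho_apply_inv]
  have hUtop := hρ K hK U hUK fun h => hw (by
    rw [← Submodule.mem_bot ℂ, ← h, hU]; exact hc)
  exact fun a ha => ⟨c a, fun u => (hU u).1 (hUtop ▸ Submodule.mem_top) a ha⟩

/-- As the commutators have finite image, `ρ g` has finitely many conjugates, so its centralizer has
finite index and preserves every eigenspace of `ρ g`; by strong irreducibility a nonzero eigenspace
is everything. -/
lemma exists_eigenspace_top {ρ : Γ →* Module.End ℂ W} [Nontrivial W] (hρ : StronglyIrreducible ρ)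
    (hfin : (ρ '' (commutator Γ : Set Γ)).Finite) (g : Γ) : ∃ c : ℂ, ∀ u, ρ g u = c • u := by
  let K : Subgroup Γ :=
    { carrier := {x | ρ x * ρ g = ρ g * ρ x}
      one_mem' := by simp
      mul_mem' := fun {x y} hx hy => by
        simp only [Set.mem_ofPred_eq, map_mul] at *
        rw [mul_assoc, hy, ← mul_assoc, hx, mul_assoc]
      inv_mem' := fun {x} hx => by
        simp only [Set.mem_ofPred_eq] at *
        calc ρ x⁻¹ * ρ g = ρ x⁻¹ * (ρ g * ρ x) * ρ x⁻¹ := by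
              rw [mul_assoc, mul_assoc, ← map_mul ρ x, mul_inv_cancel, map_one, mul_one]
          _ = (ρ x⁻¹ * ρ x) * ρ g * ρ x⁻¹ := by rw [← hx]; simp only [mul_assoc]
          _ = _ := by rw [← map_mul, inv_mul_cancel, map_one, one_mul] }
  have hK : K.FiniteIndex := by
    refine finiteIndex_of_fun K (fun x => ρ (x * g * x⁻¹ * g⁻¹)) (hfin.subset ?_) ?_
    · rintro _ ⟨x, rfl⟩
      exact ⟨_, Subgroup.commutator_mem_commutator (Subgroup.mem_top x) (Subgroup.mem_top g), rfl⟩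
    · intro x y hxy
      change ρ (x⁻¹ * y) * ρ g = ρ g * ρ (x⁻¹ * y)
      have e : ρ (x * g * x⁻¹) = ρ (y * g * y⁻¹) := by
        have := congrArg (· * ρ g) hxy
        simpa only [← map_mul, inv_mul_cancel_right] using this
      have := congrArg (fun z => ρ x⁻¹ * z * ρ y) e
      simp only [← map_mul] at this ⊢
      rw [show x⁻¹ * y * g = x⁻¹ * (y * g * y⁻¹) * y by group, ← this]
      congr 1; group
  obtain ⟨μ, hμ⟩ := Module.End.exists_eigenvalue (ρ g)
  have := hρ K hK (Module.End.eigenspace (ρ g) μ) (fun x hx u hu => by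
    rw [Module.End.mem_eigenspace_iff] at hu ⊢
    rw [← Module.End.mul_apply, ← (show ρ x * ρ g = ρ g * ρ x from hx), Module.End.mul_apply, hu,
      map_smul]) hμ
  exact ⟨μ, fun u => Module.End.mem_eigenspace_iff.1 (this ▸ Submodule.mem_top)⟩

/-- If a finite-index subgroup of the commutator subgroup acts by scalars, these are roots of
unity, so the commutator subgroup has finite image. -/
lemma finite_image_commutator (ρ : Γ →* Module.End ℂ W) [Nontrivial W] (H : Subgroup Γ)
    (hH : H ≤ commutator Γ) (hHfin : (H.subgroupOf (commutator Γ)).FiniteIndex)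
    (hs : ∀ h ∈ H, ∃ c : ℂ, ∀ u, ρ h u = c • u) : (ρ '' (commutator Γ : Set Γ)).Finite := by
  have hdet : ∀ x ∈ commutator Γ, LinearMap.det (ρ x) = 1 := by
    let δ : Γ →* ℂˣ := ((LinearMap.det : Module.End ℂ W →* ℂ).comp ρ).toHomUnits
    have : commutator Γ ≤ δ.ker := Abelianization.commutator_subset_ker δ
    intro x hx
    exact congrArg Units.val (this hx)
  have hd : 0 < Module.finrank ℂ W := Module.finrank_pos
  have h1 : (ρ '' (H : Set Γ)).Finite := by
    have hroots : {c : ℂ | c ^ Module.finrank ℂ W = 1}.Finite := by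
      refine ((nthRoots (Module.finrank ℂ W) (1 : ℂ)).toFinset.finite_toSet).subset ?_
      intro c hc
      simpa [mem_nthRoots hd] using hc
    refine (hroots.image fun c => c • (1 : Module.End ℂ W)).subset ?_
    rintro _ ⟨h, hh, rfl⟩
    obtain ⟨c, hc⟩ := hs h hh
    have e : ρ h = c • (1 : Module.End ℂ W) := LinearMap.ext fun u => by simp [hc u]
    refine ⟨c, ?_, e.symm⟩
    have := hdet h (hH hh)
    rw [e, LinearMap.det_smul, map_one, mul_one] at this
    exact this
  have : Finite (commutator Γ ⧸ H.subgroupOf (commutator Γ)) := Subgroup.finite_quotient_of_finiteIndex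
  refine ((Set.finite_range fun q : commutator Γ ⧸ H.subgroupOf (commutator Γ) =>
    ρ (q.out : Γ)).mul h1).subset ?_
  rintro _ ⟨x, hx, rfl⟩
  have hq := QuotientGroup.out_eq' (QuotientGroup.mk (s := H.subgroupOf (commutator Γ)) ⟨x, hx⟩)
  rw [QuotientGroup.eq, Subgroup.mem_subgroupOf] at hq
  refine ⟨_, ⟨QuotientGroup.mk (s := H.subgroupOf (commutator Γ)) ⟨x, hx⟩, rfl⟩, _, ⟨_, hq, rfl⟩, ?_⟩
  simp only [← map_mul]
  congr 1
  simp

/-- The algebras generated by the finite-index subgroups of the commutator subgroup have a least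
element, and this one is normalized by the whole group. -/
lemma exists_least_adjoin (ρ : Γ →* Module.End ℂ W) : ∃ H : Subgroup Γ, H ≤ commutator Γ ∧
    H.relIndex (commutator Γ) ≠ 0 ∧
    (∀ H' : Subgroup Γ, H' ≤ commutator Γ → H'.relIndex (commutator Γ) ≠ 0 →
      Algebra.adjoin ℂ (ρ '' (H : Set Γ)) ≤ Algebra.adjoin ℂ (ρ '' (H' : Set Γ))) ∧
    ∀ g, ∀ a ∈ Algebra.adjoin ℂ (ρ '' (H : Set Γ)), ρ g * a * ρ g⁻¹ ∈
      Algebra.adjoin ℂ (ρ '' (H : Set Γ)) := by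
  let 𝒮 : Set (Subgroup Γ) := {H | H ≤ commutator Γ ∧ H.relIndex (commutator Γ) ≠ 0}
  let d : Subgroup Γ → ℕ := fun H => Module.finrank ℂ (Algebra.adjoin ℂ (ρ '' (H : Set Γ)))
  obtain ⟨H, hH, hmin⟩ := (measure d).wf.has_min 𝒮 ⟨commutator Γ, le_rfl, by simp⟩
  have hleast : ∀ H' : Subgroup Γ, H' ≤ commutator Γ → H'.relIndex (commutator Γ) ≠ 0 →
      Algebra.adjoin ℂ (ρ '' (H : Set Γ)) ≤ Algebra.adjoin ℂ (ρ '' (H' : Set Γ)) := by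
    intro H' h1 h2
    have h3 : H ⊓ H' ∈ 𝒮 := ⟨inf_le_left.trans hH.1, Subgroup.relIndex_inf_ne_zero hH.2 h2⟩
    have h4 : ¬ d (H ⊓ H') < d H := hmin _ h3
    have h5 : Algebra.adjoin ℂ (ρ '' ((H ⊓ H' : Subgroup Γ) : Set Γ)) ≤
        Algebra.adjoin ℂ (ρ '' (H : Set Γ)) :=
      Algebra.adjoin_mono (Set.image_mono fun x hx => hx.1)
    have h6 := Submodule.eq_of_le_of_finrank_le
      (S₁ := Subalgebra.toSubmodule (Algebra.adjoin ℂ (ρ '' ((H ⊓ H' : Subgroup Γ) : Set Γ))))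
      (S₂ := Subalgebra.toSubmodule (Algebra.adjoin ℂ (ρ '' (H : Set Γ)))) (Subalgebra.toSubmodule.monotone h5)
      (show d H ≤ d (H ⊓ H') from not_lt.1 h4)
    have h7 := Subalgebra.toSubmodule_injective h6
    rw [← h7]
    exact Algebra.adjoin_mono (Set.image_mono fun x hx => hx.2)
  refine ⟨H, hH.1, hH.2, hleast, fun g a ha => ?_⟩
  let H' : Subgroup Γ := H.map (MulAut.conj g⁻¹).toMonoidHom
  have hc : (commutator Γ).map (MulAut.conj g⁻¹).toMonoidHom = commutator Γ :=
    Subgroup.characteristic_iff_map_eq.1 inferInstance _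
  have h1 : H' ≤ commutator Γ := by rw [← hc]; exact Subgroup.map_mono hH.1
  have h2 : H'.relIndex (commutator Γ) ≠ 0 := by
    rw [← hc, Subgroup.relIndex_map_map_of_injective _ _ (MulEquiv.injective _)]
    exact hH.2
  have h3 := hleast H' h1 h2 ha
  clear ha
  have hinvmul : ρ g⁻¹ * ρ g = 1 := by rw [← map_mul, inv_mul_cancel, map_one]
  have hmulinv : ρ g * ρ g⁻¹ = 1 := by rw [← map_mul, mul_inv_cancel, map_one]
  induction h3 using Algebra.adjoin_induction with
  | mem x hx =>
    obtain ⟨_, ⟨h, hh, rfl⟩, rfl⟩ := hx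
    refine Algebra.subset_adjoin ⟨h, hh, ?_⟩
    rw [← map_mul, ← map_mul]
    congr 1
    simp [mul_assoc]
  | algebraMap r =>
    rw [Algebra.algebraMap_eq_smul_one, mul_smul_comm, mul_one, smul_mul_assoc, hmulinv]
    exact Subalgebra.smul_mem _ (one_mem _) _
  | add x y _ _ hx hy => rw [mul_add, add_mul]; exact add_mem hx hy
  | mul x y _ _ hx hy =>
    have : ρ g * (x * y) * ρ g⁻¹ = (ρ g * x * ρ g⁻¹) * (ρ g * y * ρ g⁻¹) := by
      calc ρ g * (x * y) * ρ g⁻¹ = ρ g * x * 1 * y * ρ g⁻¹ := by simp only [mul_one, mul_assoc]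
        _ = _ := by rw [← hinvmul]; simp only [mul_assoc]
    rw [this]; exact mul_mem hx hy

/-- A strongly irreducible representation is scalar as soon as a subgroup of finite index of the
commutator group has a common eigenvector: some such subgroup then acts by scalars, which makes the
image of the commutator group finite, and `exists_eigenspace_top` applies. -/
lemma StronglyIrreducible.scalar_of_commutator [Nontrivial W] {ρ : Γ →* Module.End ℂ W}
    (hρ : StronglyIrreducible ρ) (hE : ∃ H : Subgroup (commutator Γ), H.FiniteIndex ∧
      ∃ w : W, w ≠ 0 ∧ ∀ h ∈ H, ∃ c : ℂ, ρ h w = c • w) (g : Γ) :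
    ∃ c : ℂ, ∀ u, ρ g u = c • u := by
  obtain ⟨H, hH, hHi, hleast, hnorm⟩ := exists_least_adjoin ρ
  obtain ⟨H0, hH0, w, hw, hH0w⟩ := hE
  have h1 := hleast (H0.map (commutator Γ).subtype) (Subgroup.map_subtype_le _) (by
    rw [Subgroup.relIndex, Subgroup.subgroupOf, Subgroup.comap_map_eq_self_of_injective
      (Subgroup.subtype_injective _)]
    exact hH0.index_ne_zero)
  have h2 : ∀ a ∈ Algebra.adjoin ℂ (ρ '' (H : Set Γ)), ∃ c : ℂ, a w = c • w := by
    intro a ha'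
    have ha := h1 ha'
    clear ha'
    induction ha using Algebra.adjoin_induction with
    | mem x hx => obtain ⟨_, ⟨h, hh, rfl⟩, rfl⟩ := hx; exact hH0w h hh
    | algebraMap r => exact ⟨r, by simp [Algebra.algebraMap_eq_smul_one]⟩
    | add x y _ _ hx hy =>
      obtain ⟨s, hs⟩ := hx; obtain ⟨t, ht⟩ := hy
      exact ⟨s + t, by rw [LinearMap.add_apply, hs, ht, add_smul]⟩
    | mul x y _ _ hx hy =>
      obtain ⟨s, hs⟩ := hx; obtain ⟨t, ht⟩ := hy
      exact ⟨t * s, by rw [Module.End.mul_apply, ht, map_smul, hs, mul_smul]⟩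
  have h3 := hρ.scalar _ hnorm hw h2
  exact exists_eigenspace_top hρ (finite_image_commutator ρ H hH ⟨hHi⟩
    fun h hh => h3 _ (Algebra.subset_adjoin ⟨h, hh, rfl⟩)) g

/-- The representation of a subgroup on an invariant subspace. -/
def restrictRep (ρ : Γ →* Module.End ℂ W) (K : Subgroup Γ) (U : Submodule ℂ W)
    (h : ∀ g ∈ K, ∀ u ∈ U, ρ g u ∈ U) : K →* Module.End ℂ U where
  toFun g := (ρ g).restrict (h g g.2)
  map_one' := by ext; simp
  map_mul' x y := by ext; simp

lemma map_derivedSeries_commutator (Γ : Type*) [Group Γ] (n : ℕ) :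
    (derivedSeries (commutator Γ) n).map (commutator Γ).subtype ≤ derivedSeries Γ (n + 1) := by
  induction n with
  | zero =>
    rw [derivedSeries_one]; exact Subgroup.map_subtype_le _
  | succ n ih =>
    rw [derivedSeries_succ, derivedSeries_succ, Subgroup.map_commutator]
    exact Subgroup.commutator_mono ih ih

/-- A solvable group of linear automorphisms of a complex vector space has a common eigenvector,
up to finite index. -/
theorem exists_eigenvector (l : ℕ) : ∀ {Γ : Type*} [Group Γ] {W : Type*} [AddCommGroup W]
    [Module ℂ W] [FiniteDimensional ℂ W] [Nontrivial W] (ρ : Γ →* Module.End ℂ W),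
    derivedSeries Γ l = ⊥ → ∃ K : Subgroup Γ, K.FiniteIndex ∧ ∃ w : W, w ≠ 0 ∧
      ∀ g ∈ K, ∃ c : ℂ, ρ g w = c • w := by
  induction l with
  | zero =>
    intro Γ _ W _ _ _ _ ρ h
    obtain ⟨w, hw⟩ := exists_ne (0 : W)
    refine ⟨⊥, ⟨?_⟩, w, hw, ?_⟩
    · rw [← h, derivedSeries_zero, Subgroup.index_top]; exact one_ne_zero
    · intro g hg
      rw [Subgroup.mem_bot.1 hg]
      exact ⟨1, by simp⟩
  | succ l ih =>
    intro Γ _ W _ _ _ _ ρ h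
    -- on an invariant subspace of least dimension, the action is strongly irreducible, and then
    -- scalar because the commutator subgroup has a common eigenvector by induction
    let 𝒮 : Set (Subgroup Γ × Submodule ℂ W) :=
      {p | p.1.FiniteIndex ∧ p.2 ≠ ⊥ ∧ ∀ g ∈ p.1, ∀ u ∈ p.2, ρ g u ∈ p.2}
    let d : Subgroup Γ × Submodule ℂ W → ℕ := fun p => Module.finrank ℂ p.2
    obtain ⟨⟨K, U⟩, ⟨hK, hU, hKU⟩, hmin⟩ := (measure d).wf.has_min 𝒮
      ⟨(⊤, ⊤), inferInstance, top_ne_bot, fun _ _ _ _ => Submodule.mem_top⟩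
    dsimp only at hK hU hKU
    have : Nontrivial U := Submodule.nontrivial_iff_ne_bot.2 hU
    have hirr : StronglyIrreducible (restrictRep ρ K U hKU) := by
      intro K' hK' U' hinv hU'
      have h1 : (K'.map K.subtype, U'.map U.subtype) ∈ 𝒮 := by
        refine ⟨?_, ?_, ?_⟩
        · exact ⟨by
            rw [Subgroup.index_map_subtype]
            exact mul_ne_zero hK'.index_ne_zero hK.index_ne_zero⟩
        · intro h0
          exact hU' (Submodule.map_injective_of_injective U.injective_subtype
            (h0.trans (Submodule.map_bot _).symm))
        · rintro _ ⟨g, hg, rfl⟩ _ ⟨u, hu, rfl⟩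
          exact ⟨_, hinv g hg u hu, rfl⟩
      have h2 : ¬ d (K'.map K.subtype, U'.map U.subtype) < d (K, U) := hmin _ h1
      have h3 : Module.finrank ℂ (U'.map U.subtype) = Module.finrank ℂ U' :=
        LinearEquiv.finrank_eq (Submodule.equivMapOfInjective _ U.injective_subtype U').symm
      simp only [d, h3, not_lt] at h2
      exact Submodule.eq_top_of_finrank_eq (le_antisymm (Submodule.finrank_le _) h2)
    have hKs : derivedSeries K (l + 1) = ⊥ := by
      rw [← (Subgroup.map_eq_bot_iff_of_injective _ K.subtype_injective), eq_bot_iff, ← h]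
      exact map_derivedSeries_le_derivedSeries _ _
    have hcs : derivedSeries (commutator K) l = ⊥ := by
      rw [← (Subgroup.map_eq_bot_iff_of_injective _ (commutator K).subtype_injective), eq_bot_iff,
        ← hKs]
      exact map_derivedSeries_commutator K l
    have hsc := hirr.scalar_of_commutator
      (ih ((restrictRep ρ K U hKU).comp (commutator K).subtype) hcs)
    obtain ⟨w, hw⟩ := exists_ne (0 : U)
    refine ⟨K, hK, w, by simpa using hw, fun g hg => ?_⟩
    obtain ⟨c, hc⟩ := hsc ⟨g, hg⟩
    exact ⟨c, congrArg Subtype.val (hc w)⟩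

end LieKolchin

section Triangular

/-- The real algebra generated by a group of units. -/
def alg {B : Type*} [Ring B] [Algebra ℝ B] (Γ : Subgroup Bˣ) : Subalgebra ℝ B :=
  Algebra.adjoin ℝ (Units.val '' (Γ : Set Bˣ))

/-- The two-sided ideal of `alg Γ` generated by the commutators. -/
def commIdeal {B : Type*} [Ring B] [Algebra ℝ B] (Γ : Subgroup Bˣ) : Submodule ℝ B :=
  Submodule.span ℝ {x | ∃ a ∈ alg Γ, ∃ b ∈ alg Γ, ∃ c ∈ alg Γ, ∃ d ∈ alg Γ,
    x = a * (b * c - c * b) * d}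

variable {B : Type*} [Ring B] [Algebra ℝ B]

lemma mem_alg {Γ : Subgroup Bˣ} {u : Bˣ} (hu : u ∈ Γ) : (u : B) ∈ alg Γ :=
  Algebra.subset_adjoin ⟨u, hu, rfl⟩

lemma alg_mono {Γ Γ' : Subgroup Bˣ} (h : Γ ≤ Γ') : alg Γ ≤ alg Γ' :=
  Algebra.adjoin_mono (Set.image_mono h)

lemma commIdeal_mono {Γ Γ' : Subgroup Bˣ} (h : Γ ≤ Γ') : commIdeal Γ ≤ commIdeal Γ' := by
  refine Submodule.span_mono ?_
  rintro _ ⟨a, ha, b, hb, c, hc, d, hd, rfl⟩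
  exact ⟨a, alg_mono h ha, b, alg_mono h hb, c, alg_mono h hc, d, alg_mono h hd, rfl⟩

lemma commIdeal_nilIdeal_aux (Γ : Subgroup Bˣ) :
    (∀ j ∈ commIdeal Γ, j ∈ alg Γ) ∧ (∀ x ∈ alg Γ, ∀ j ∈ commIdeal Γ, x * j ∈ commIdeal Γ) ∧
    (∀ x ∈ alg Γ, ∀ j ∈ commIdeal Γ, j * x ∈ commIdeal Γ) := by
  refine ⟨fun j hj => ?_, fun x hx j hj => ?_, fun x hx j hj => ?_⟩
  · have : commIdeal Γ ≤ Subalgebra.toSubmodule (alg Γ) := by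
      refine Submodule.span_le.2 ?_
      rintro _ ⟨a, ha, b, hb, c, hc, d, hd, rfl⟩
      exact (alg Γ).mul_mem ((alg Γ).mul_mem ha (sub_mem ((alg Γ).mul_mem hb hc)
        ((alg Γ).mul_mem hc hb))) hd
    exact this hj
  · induction hj using Submodule.span_induction with
    | mem y hy =>
      obtain ⟨a, ha, b, hb, c, hc, d, hd, rfl⟩ := hy
      exact Submodule.subset_span ⟨x * a, mul_mem hx ha, b, hb, c, hc, d, hd,
        by simp only [mul_assoc]⟩
    | zero => rw [mul_zero]; exact zero_mem _
    | add y z _ _ hy hz => rw [mul_add]; exact add_mem hy hz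
    | smul t y _ hy => rw [mul_smul_comm]; exact Submodule.smul_mem _ _ hy
  · induction hj using Submodule.span_induction with
    | mem y hy =>
      obtain ⟨a, ha, b, hb, c, hc, d, hd, rfl⟩ := hy
      exact Submodule.subset_span ⟨a, ha, b, hb, c, hc, d * x, mul_mem hd hx,
        by simp only [mul_assoc]⟩
    | zero => rw [zero_mul]; exact zero_mem _
    | add y z _ _ hy hz => rw [add_mul]; exact add_mem hy hz
    | smul t y _ hy => rw [smul_mul_assoc]; exact Submodule.smul_mem _ _ hy

lemma commutator_mem_commIdeal {Γ : Subgroup Bˣ} {b c : B} (hb : b ∈ alg Γ) (hc : c ∈ alg Γ) :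
    b * c - c * b ∈ commIdeal Γ :=
  Submodule.subset_span ⟨1, one_mem _, b, hb, c, hc, 1, one_mem _, by simp⟩

lemma conj_mem_alg {Γ : Subgroup Bˣ} {g : Bˣ} (hg : ∀ u ∈ Γ, g * u * g⁻¹ ∈ Γ) :
    ∀ a ∈ alg Γ, (g : B) * a * ↑g⁻¹ ∈ alg Γ := by
  intro a ha
  induction ha using Algebra.adjoin_induction with
  | mem x hx => obtain ⟨u, hu, rfl⟩ := hx; exact mem_alg (hg u hu)
  | algebraMap r =>
    rw [Algebra.algebraMap_eq_smul_one, mul_smul_comm, mul_one, smul_mul_assoc, Units.mul_inv]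
    exact Subalgebra.smul_mem _ (one_mem _) _
  | add x y _ _ hx hy => rw [mul_add, add_mul]; exact add_mem hx hy
  | mul x y _ _ hx hy =>
    have : (g : B) * (x * y) * ↑g⁻¹ = (g * x * ↑g⁻¹) * (g * y * ↑g⁻¹) := by
      simp only [mul_assoc, Units.inv_mul_cancel_left]
    rw [this]; exact mul_mem hx hy

lemma conj_mem_commIdeal {Γ : Subgroup Bˣ} {g : Bˣ} (hg : ∀ u ∈ Γ, g * u * g⁻¹ ∈ Γ) :
    ∀ a ∈ commIdeal Γ, (g : B) * a * ↑g⁻¹ ∈ commIdeal Γ := by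
  intro j hj
  have hc := conj_mem_alg hg
  induction hj using Submodule.span_induction with
  | mem y hy =>
    obtain ⟨a, ha, b, hb, c, hc', d, hd, rfl⟩ := hy
    refine Submodule.subset_span ⟨_, hc a ha, _, hc b hb, _, hc c hc', _, hc d hd, ?_⟩
    simp only [mul_assoc, mul_sub, sub_mul, Units.inv_mul_cancel_left]
  | zero => simp
  | add y z _ _ hy hz => rw [mul_add, add_mul]; exact add_mem hy hz
  | smul t y _ hy => rw [mul_smul_comm, smul_mul_assoc]; exact Submodule.smul_mem _ _ hy

variable {V : Type*} [NormedAddCommGroup V] [NormedSpace ℝ V] [FiniteDimensional ℝ V]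

/-- The contragredient action on complex-valued functionals of an invariant subspace. -/
noncomputable def dualRep (K : Subgroup (V →L[ℝ] V)ˣ) (U : Submodule ℝ V)
    (h : ∀ g ∈ K, ∀ u ∈ U, (g : V →L[ℝ] V) u ∈ U) : K →* Module.End ℂ (U →ₗ[ℝ] ℂ) where
  toFun g :=
    { toFun := fun φ => φ ∘ₗ
        ((g⁻¹ : (V →L[ℝ] V)ˣ) : V →L[ℝ] V).toLinearMap.restrict (h _ (inv_mem g.2))
      map_add' := fun φ ψ => by ext; simp
      map_smul' := fun c φ => by ext; simp }
  map_one' := by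
    ext φ u
    simp only [LinearMap.coe_mk, AddHom.coe_mk, LinearMap.comp_apply]
    congr 1
  map_mul' x y := by
    ext φ u
    simp only [Module.End.mul_apply, LinearMap.coe_mk, AddHom.coe_mk, LinearMap.comp_apply]
    congr 1

/-- A solvable subgroup of `GL(V)` has a subgroup of finite index for which the ideal generated
by the commutators is nilpotent. -/
theorem exists_commIdeal_pow (Γ : Subgroup (V →L[ℝ] V)ˣ) [Group.IsSolvable Γ] :
    ∃ K ≤ Γ, K.relIndex Γ ≠ 0 ∧ ∃ n, commIdeal K ^ n = ⊥ := by
  -- a minimal subspace into which some power of the ideal maps `V`; were it nonzero, a common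
  -- eigenvector of the contragredient action would cut out a smaller one
  let 𝒮 : Set (Subgroup (V →L[ℝ] V)ˣ × Submodule ℝ V) :=
    {p | p.1 ≤ Γ ∧ p.1.relIndex Γ ≠ 0 ∧ (∀ g ∈ p.1, ∀ u ∈ p.2, (g : V →L[ℝ] V) u ∈ p.2) ∧
      ∃ n, ∀ j ∈ commIdeal p.1 ^ n, ∀ v, j v ∈ p.2}
  let d : Subgroup (V →L[ℝ] V)ˣ × Submodule ℝ V → ℕ := fun p => Module.finrank ℝ p.2
  obtain ⟨⟨K, U⟩, ⟨hKΓ, hK, hKU, n, hn⟩, hmin⟩ := (measure d).wf.has_min 𝒮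
    ⟨(Γ, ⊤), le_rfl, by simp, fun _ _ _ _ => Submodule.mem_top,
      0, fun _ _ _ => Submodule.mem_top⟩
  dsimp only at hKΓ hK hKU hn
  refine ⟨K, hKΓ, hK, n, ?_⟩
  by_cases hU : U = ⊥
  · rw [eq_bot_iff]
    intro j hj
    rw [Submodule.mem_bot]
    ext v
    simpa [hU] using hn j hj v
  exfalso
  have hKs : Group.IsSolvable K := Group.isSolvable_of_isSolvable_injective (f := Subgroup.inclusion hKΓ)
    (Subgroup.inclusion_injective hKΓ)
  have : Nontrivial U := Submodule.nontrivial_iff_ne_bot.2 hU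
  have : FiniteDimensional ℂ (U →ₗ[ℝ] ℂ) := Module.Finite.of_restrictScalars_finite ℝ ℂ _
  have : Nontrivial (U →ₗ[ℝ] ℂ) := by
    obtain ⟨u, hu⟩ := exists_ne (0 : U)
    obtain ⟨f, hf⟩ : ∃ f : Module.Dual ℝ U, f u ≠ 0 := by
      by_contra! h
      exact hu ((Module.forall_dual_apply_eq_zero_iff ℝ u).1 h)
    refine ⟨0, Complex.ofRealCLM.toLinearMap ∘ₗ f, fun h => hf ?_⟩
    have := LinearMap.congr_fun h u
    simpa using this.symm
  obtain ⟨l, hl⟩ := hKs.solvable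
  obtain ⟨K1, hK1, φ, hφ, hφK⟩ := exists_eigenvector l (dualRep K U hKU) hl
  let IsChar : (V →L[ℝ] V) → ℂ → Prop := fun b β => ∀ u : U, ∃ h : b u ∈ U, φ ⟨b u, h⟩ = β * φ u
  have hadd : ∀ {b c β γ}, IsChar b β → IsChar c γ → IsChar (b + c) (β + γ) := by
    intro b c β γ hb hc u
    obtain ⟨h1, h2⟩ := hb u
    obtain ⟨h3, h4⟩ := hc u
    refine ⟨add_mem h1 h3, ?_⟩
    rw [add_mul, ← h2, ← h4, ← map_add]; rfl
  have hmul : ∀ {b c β γ}, IsChar b β → IsChar c γ → IsChar (b * c) (β * γ) := by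
    intro b c β γ hb hc u
    obtain ⟨h3, h4⟩ := hc u
    obtain ⟨h1, h2⟩ := hb ⟨c u, h3⟩
    refine ⟨h1, ?_⟩
    rw [mul_assoc, ← h4, ← h2]; rfl
  have hsmul : ∀ (r : ℝ) {b β}, IsChar b β → IsChar (r • b) (r * β) := by
    intro r b β hb u
    obtain ⟨h1, h2⟩ := hb u
    refine ⟨U.smul_mem r h1, ?_⟩
    rw [mul_assoc, ← h2, ← Complex.real_smul, ← map_smul]; rfl
  have hsub : ∀ {b c β γ}, IsChar b β → IsChar c γ → IsChar (b - c) (β - γ) := by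
    intro b c β γ hb hc
    have := hadd hb (hsmul (-1) hc)
    simpa [sub_eq_add_neg] using this
  have hone : IsChar 1 1 := fun u => ⟨u.2, by simp⟩
  let K' := K1.map K.subtype
  have halg : ∀ b ∈ alg K', ∃ β, IsChar b β := by
    intro b hb
    induction hb using Algebra.adjoin_induction with
    | mem x hx =>
      obtain ⟨_, ⟨g, hg, rfl⟩, rfl⟩ := hx
      obtain ⟨c, hc⟩ := hφK g⁻¹ (inv_mem hg)
      refine ⟨c, fun u => ⟨hKU g g.2 u u.2, ?_⟩⟩
      have := LinearMap.congr_fun hc u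
      rw [LinearMap.smul_apply, smul_eq_mul] at this
      rw [← this]
      simp only [dualRep, MonoidHom.coe_mk, OneHom.coe_mk, LinearMap.coe_mk, AddHom.coe_mk,
        LinearMap.comp_apply]
      congr 1
    | algebraMap r =>
      exact ⟨r * 1, by rw [Algebra.algebraMap_eq_smul_one]; exact hsmul r hone⟩
    | add x y _ _ hx hy => exact ⟨_, hadd hx.choose_spec hy.choose_spec⟩
    | mul x y _ _ hx hy => exact ⟨_, hmul hx.choose_spec hy.choose_spec⟩
  have hJ : ∀ j ∈ commIdeal K', IsChar j 0 := by
    intro j hj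
    induction hj using Submodule.span_induction with
    | mem y hy =>
      obtain ⟨a, ha, b, hb, c, hc, d, hd, rfl⟩ := hy
      obtain ⟨α, hα⟩ := halg a ha
      obtain ⟨β, hβ⟩ := halg b hb
      obtain ⟨γ, hγ⟩ := halg c hc
      obtain ⟨δ, hδ⟩ := halg d hd
      have := hmul (hmul hα (hsub (hmul hβ hγ) (hmul hγ hβ))) hδ
      rwa [mul_comm β γ, sub_self, mul_zero, zero_mul] at this
    | zero => exact fun u => ⟨U.zero_mem, by rw [zero_mul]; exact map_zero φ⟩
    | add y z _ _ hy hz => simpa using hadd hy hz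
    | smul t y _ hy => simpa using hsmul t hy
  let U' : Submodule ℝ V := (LinearMap.ker φ).map U.subtype
  have hU'U : U' ≤ U := Submodule.map_subtype_le _ _
  have hlt : U' < U := by
    refine lt_of_le_of_ne hU'U fun h => hφ ?_
    ext u
    have : (u : V) ∈ U' := by rw [h]; exact u.2
    obtain ⟨u', hu', e⟩ := this
    rw [← Subtype.ext e]
    exact hu'
  have hK'K : K' ≤ K := Subgroup.map_subtype_le _
  refine hmin (K', U') ⟨hK'K.trans hKΓ, ?_, ?_, n + 1, ?_⟩ (Submodule.finrank_lt_finrank_of_lt hlt)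
  · refine Subgroup.relIndex_ne_zero_trans (K := K) ?_ hK
    rw [Subgroup.relIndex, Subgroup.subgroupOf, Subgroup.comap_map_eq_self_of_injective
      (Subgroup.subtype_injective _)]
    exact hK1.index_ne_zero
  · rintro g hg _ ⟨u, hu, rfl⟩
    obtain ⟨β, hβ⟩ := halg g (mem_alg hg)
    obtain ⟨h1, h2⟩ := hβ u
    exact ⟨⟨_, h1⟩, by rw [SetLike.mem_coe, LinearMap.mem_ker, h2, LinearMap.mem_ker.1 hu, mul_zero], rfl⟩
  · intro j hj v
    dsimp only at hj ⊢
    rw [pow_succ'] at hj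
    induction hj using Submodule.mul_induction_on' with
    | mem_mul_mem a ha b hb =>
      obtain ⟨h1, h2⟩ := hJ a ha ⟨b v, hn b (pow_le_pow_left' (commIdeal_mono hK'K) n hb) v⟩
      exact ⟨⟨_, h1⟩, by rw [SetLike.mem_coe, LinearMap.mem_ker, h2, zero_mul], rfl⟩
    | add x _ y _ hx hy => exact add_mem hx hy

end Triangular

/-! ### Generating a group which is abelian modulo a normal subgroup -/

section CentMod
variable {G : Type*} [Group G]

lemma conj_mem_of_normalizer {N : Subgroup G} {x n : G}
    (hx : x ∈ Subgroup.normalizer (N : Set G)) (hn : n ∈ N) : x * n * x⁻¹ ∈ N :=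
  (Subgroup.mem_normalizer_iff.1 hx n).1 hn

lemma mem_normalizer_of {N : Subgroup G} {x : G} (h1 : ∀ n ∈ N, x * n * x⁻¹ ∈ N)
    (h2 : ∀ n ∈ N, x⁻¹ * n * x⁻¹⁻¹ ∈ N) : x ∈ Subgroup.normalizer (N : Set G) := by
  refine Subgroup.mem_normalizer_iff.2 fun n => ⟨h1 n, fun hn => ?_⟩
  have := h2 _ hn
  convert this using 1
  group

/-- The elements of the normalizer of `N` which commute with `s` modulo `N`. -/
def centMod (N : Subgroup G) (s : G) : Subgroup G where
  carrier := {y | y ∈ Subgroup.normalizer (N : Set G) ∧ s * y * s⁻¹ * y⁻¹ ∈ N}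
  one_mem' := ⟨one_mem _, by simp⟩
  mul_mem' := by
    rintro y z ⟨hy, h1⟩ ⟨hz, h2⟩
    refine ⟨mul_mem hy hz, ?_⟩
    convert N.mul_mem h1 (conj_mem_of_normalizer hy h2) using 1
    group
  inv_mem' := by
    rintro y ⟨hy, h1⟩
    refine ⟨inv_mem hy, ?_⟩
    convert conj_mem_of_normalizer (inv_mem hy) (N.inv_mem h1) using 1
    group

lemma centMod_symm {N : Subgroup G} {s y : G} (hs : s ∈ Subgroup.normalizer (N : Set G))
    (h : y ∈ centMod N s) : s ∈ centMod N y := by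
  refine ⟨hs, ?_⟩
  convert N.inv_mem h.2 using 1
  group

lemma commMod_closure (N : Subgroup G) (T : Set G)
    (hT : ∀ t ∈ T, t ∈ Subgroup.normalizer (N : Set G))
    (hc : ∀ s ∈ T, ∀ t ∈ T, s * t * s⁻¹ * t⁻¹ ∈ N) : CommMod (Subgroup.closure (N ∪ T)) N := by
  have hgen : ∀ t ∈ (N ∪ T : Set G), t ∈ Subgroup.normalizer (N : Set G) := by
    rintro t (ht | ht)
    · exact Subgroup.le_normalizer ht
    · exact hT t ht
  have hN : ∀ x ∈ Subgroup.normalizer (N : Set G), ∀ n ∈ N, n ∈ centMod N x := fun x hx n hn =>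
    ⟨Subgroup.le_normalizer hn, N.mul_mem (conj_mem_of_normalizer hx hn) (N.inv_mem hn)⟩
  have hQ : ∀ x ∈ Subgroup.closure (N ∪ T : Set G), x ∈ Subgroup.normalizer (N : Set G) :=
    (Subgroup.closure_le _).2 hgen
  have h1 : ∀ s ∈ (N ∪ T : Set G), ∀ y ∈ Subgroup.closure (N ∪ T : Set G), y ∈ centMod N s := by
    intro s hs
    refine (Subgroup.closure_le _).2 ?_
    rintro t (ht | ht)
    · exact hN s (hgen s hs) t ht
    rcases hs with hs | hs
    · exact centMod_symm (hT t ht) (hN t (hT t ht) s hs)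
    · exact ⟨hT t ht, hc s hs t ht⟩
  refine ⟨fun n hn => Subgroup.subset_closure (Or.inl hn), fun x hx y hy => ?_⟩
  have : Subgroup.closure (N ∪ T : Set G) ≤ centMod N x :=
    (Subgroup.closure_le _).2 fun s hs => centMod_symm (hgen s hs) (h1 s hs x hx)
  exact (this hy).2

end CentMod

section Curves
variable {B : Type*} [NormedRing B] [NormedAlgebra ℝ B] [FiniteDimensional ℝ B] [CompleteSpace B]

/-- A curve of units which is exponential-polynomial with real exponents, as well as its
inverse. -/
def ExpCurve (F : ℝ → Bˣ) : Prop :=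
  ExpPoly (fun t => (F t : B)) ∧ ExpPoly (fun t => (↑(F t)⁻¹ : B))

lemma ExpCurve.const (u : Bˣ) : ExpCurve fun _ => u := ⟨.const _, .const _⟩

lemma ExpCurve.mul {F F' : ℝ → Bˣ} (h : ExpCurve F) (h' : ExpCurve F') :
    ExpCurve fun t => F t * F' t :=
  ⟨by simpa using h.1.mul h'.1, by simpa using h'.2.mul h.2⟩

lemma ExpCurve.inv {F : ℝ → Bˣ} (h : ExpCurve F) : ExpCurve fun t => (F t)⁻¹ :=
  ⟨h.2, by simpa using h.1⟩

lemma ExpCurve.of {a : B} (ha : RealType a) : ExpCurve fun t => expU (t • a) := by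
  refine ⟨ha, ?_⟩
  have : ExpPoly _ := ha.neg
  simpa [← expU_neg, ← smul_neg] using this

lemma ExpCurve.mem {L : Subgroup Bˣ} {F : ℝ → Bˣ} (hF : ExpCurve F)
    (h : ∀ n : ℕ, F n ∈ zarHull L) (t : ℝ) : F t ∈ zarHull L := hF.1.mem_zarHull hF.2 h t

lemma ell_inv (x : Bˣ) : ell x⁻¹ = (ell x)⁻¹ ∧ hyp x⁻¹ = -hyp x := by
  refine jordan_unique ?_ (elliptic_ell x).inv (realType_hyp x).neg ?_
  · have h := eq_ell_mul x
    have hc : ell x * expU (hyp x) = expU (hyp x) * ell x := Units.ext (ell_commute_hyp x).exp_right.eq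
    rw [expU_neg, ← mul_inv_rev, ← hc, ← h]
  · exact ((ell_commute_hyp x).units_inv_left).neg_right

lemma expU_nat_smul (n : ℕ) (a : B) : expU ((n : ℝ) • a) = expU a ^ n := by
  rw [Nat.cast_smul_eq_nsmul, expU_nsmul]

lemma expU_hyp (x : Bˣ) : expU (hyp x) = (ell x)⁻¹ * x := by
  conv_rhs => rw [eq_ell_mul x]
  rw [← eq_ell_mul, eq_inv_mul_iff_mul_eq, ← eq_ell_mul]

variable {J : Submodule ℝ B} {K : ℕ} {L : Subgroup Bˣ}

lemma NilSub.ell_normalizer (hJ : NilSub J K) (hL : ∀ u ∈ L, (u : B) - 1 ∈ J) {x : Bˣ}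
    (hx : x ∈ Subgroup.normalizer (zarHull L : Set Bˣ)) :
    ell x ∈ Subgroup.normalizer (zarHull L : Set Bˣ) := by
  have key : ∀ y ∈ Subgroup.normalizer (zarHull L : Set Bˣ), ∀ n ∈ zarHull L,
      ell y * n * (ell y)⁻¹ ∈ zarHull L := by
    intro y hy n hn
    obtain ⟨a, ha, rfl⟩ := hJ.exists_zarLie hL hn
    rw [← expU_conj]
    exact expU_mem_of_zarLie (Ad_ell_mem (zarLie_conj fun n hn => conj_mem_of_normalizer hy hn) a ha)
  refine mem_normalizer_of (key x hx) ?_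
  rw [← (ell_inv x).1]
  exact key _ (inv_mem hx)

lemma NilSub.hyp_normalizer (hJ : NilSub J K) (hL : ∀ u ∈ L, (u : B) - 1 ∈ J) {x : Bˣ}
    (hx : x ∈ Subgroup.normalizer (zarHull L : Set Bˣ)) (t : ℝ) :
    expU (t • hyp x) ∈ Subgroup.normalizer (zarHull L : Set Bˣ) := by
  have hb : expU (hyp x) ∈ Subgroup.normalizer (zarHull L : Set Bˣ) := by
    rw [expU_hyp]; exact mul_mem (inv_mem (hJ.ell_normalizer hL hx)) hx
  have key : ∀ t : ℝ, ∀ n ∈ zarHull L,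
      expU (t • hyp x) * n * (expU (t • hyp x))⁻¹ ∈ zarHull L := by
    intro t n hn
    have hE := ExpCurve.of (realType_hyp x)
    refine ((hE.mul (.const n)).mul hE.inv).mem (fun k => ?_) t
    rw [expU_nat_smul]
    exact conj_mem_of_normalizer (Subgroup.pow_mem _ hb k) hn
  refine mem_normalizer_of (key t) ?_
  rw [← expU_neg, ← neg_smul]
  exact key (-t)

/-- One-parameter groups commute modulo `zarHull L` as soon as their time-one maps do. -/
lemma expU_commutator_mem {a b : B} (ha : RealType a) (hb : RealType b)
    (hna : expU a ∈ Subgroup.normalizer (zarHull L : Set Bˣ))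
    (hnb : expU b ∈ Subgroup.normalizer (zarHull L : Set Bˣ))
    (h : expU a * expU b * (expU a)⁻¹ * (expU b)⁻¹ ∈ zarHull L) (s t : ℝ) :
    expU (s • a) * expU (t • b) * (expU (s • a))⁻¹ * (expU (t • b))⁻¹ ∈ zarHull L := by
  have hA := ExpCurve.of ha
  have hB := ExpCurve.of hb
  refine (((hA.mul (.const (expU (t • b)))).mul hA.inv).mul (.const (expU (t • b))⁻¹)).mem
    (fun k => ?_) s
  refine ((((ExpCurve.const (expU ((k : ℝ) • a))).mul hB).mul
    (.const (expU ((k : ℝ) • a))⁻¹)).mul hB.inv).mem (fun l => ?_) t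
  rw [expU_nat_smul, expU_nat_smul]
  have h1 : expU b ^ l ∈ centMod (zarHull L) (expU a) :=
    Subgroup.pow_mem _ (show expU b ∈ centMod (zarHull L) (expU a) from ⟨hnb, h⟩) l
  have h2 : expU a ^ k ∈ centMod (zarHull L) (expU b ^ l) :=
    Subgroup.pow_mem _ (centMod_symm hna h1) k
  exact (centMod_symm h1.1 h2).2

end Curves

/-! ### Hull of a triangular group -/

section Hull
variable {B : Type*} [NormedRing B] [NormedAlgebra ℝ B] [FiniteDimensional ℝ B] [CompleteSpace B]

lemma exists_mul_mem {G : Type*} [Group G] {N R : Subgroup G} {T : Set G} (hTR : T ⊆ R)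
    (hn : ∀ x ∈ Subgroup.closure (N ∪ T : Set G), ∀ n ∈ N, x * n * x⁻¹ ∈ N) {x : G}
    (hx : x ∈ Subgroup.closure (N ∪ T : Set G)) : ∃ n ∈ N, n * x ∈ R := by
  induction hx using Subgroup.closure_induction with
  | mem x hx =>
    rcases hx with hx | hx
    · exact ⟨x⁻¹, inv_mem hx, by simp⟩
    · exact ⟨1, one_mem _, by simpa using hTR hx⟩
  | one => exact ⟨1, one_mem _, by simp⟩
  | mul x y hx hy ihx ihy =>
    obtain ⟨n, hnN, h1⟩ := ihx
    obtain ⟨m, hm, h2⟩ := ihy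
    refine ⟨n * (x * m * x⁻¹), mul_mem hnN (hn x hx m hm), ?_⟩
    convert mul_mem h1 h2 using 1
    group
  | inv x hx ih =>
    obtain ⟨n, hnN, h1⟩ := ih
    refine ⟨x⁻¹ * n⁻¹ * x⁻¹⁻¹, hn _ (inv_mem hx) _ (inv_mem hnN), ?_⟩
    convert inv_mem h1 using 1
    group

/-- `Γ` is a group of units of the subalgebra `S`, which is commutative modulo the nilpotent
ideal `J`. -/
structure TriGroup (S : Subalgebra ℝ B) (J : Submodule ℝ B) (K : ℕ) (Γ : Subgroup Bˣ) : Prop where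
  ideal : NilIdeal S J K
  mem : ∀ γ ∈ Γ, (γ : B) ∈ S
  comm : ∀ a ∈ S, ∀ b ∈ S, a * b - b * a ∈ J

namespace TriGroup
variable {S : Subalgebra ℝ B} {J : Submodule ℝ B} {K : ℕ} {Γ : Subgroup Bˣ}

/-- The unipotent elements of `Γ`. -/
def uni (h : TriGroup S J K Γ) : Subgroup Bˣ := Γ ⊓ oneAdd J h.ideal.mul_le

/-- The Zariski closure of the group of unipotent elements of `Γ`. -/
noncomputable def N (h : TriGroup S J K Γ) : Subgroup Bˣ := zarHull h.uni

/-- The group generated by `Γ` and `N`. -/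
noncomputable def M (h : TriGroup S J K Γ) : Subgroup Bˣ := Subgroup.closure (h.N ∪ Γ : Set Bˣ)

lemma uni_sub (h : TriGroup S J K Γ) : ∀ u ∈ h.uni, (u : B) - 1 ∈ J := fun _ hu => hu.2.1

lemma mem_of_sub (h : TriGroup S J K Γ) {b : B} (hb : b - 1 ∈ J) : b ∈ S := by
  simpa using S.add_mem (h.ideal.le _ hb) S.one_mem

lemma N_sub (h : TriGroup S J K Γ) {n : Bˣ} (hn : n ∈ h.N) : (n : B) - 1 ∈ J :=
  sub_one_mem_of_zarHull h.uni_sub hn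

lemma N_mem (h : TriGroup S J K Γ) {n : Bˣ} (hn : n ∈ h.N) : (n : B) ∈ S := h.mem_of_sub (h.N_sub hn)

lemma isClosed_N (h : TriGroup S J K Γ) : IsClosed (h.N : Set Bˣ) := isClosed_zarHull _

/-- `g` normalises `Γ` and `J`. -/
def Norm (_ : TriGroup S J K Γ) (g : Bˣ) : Prop :=
  (∀ γ : Bˣ, γ ∈ Γ → g * γ * g⁻¹ ∈ Γ) ∧ ∀ j : B, j ∈ J → (g : B) * j * ↑g⁻¹ ∈ J

lemma norm_of_mem (h : TriGroup S J K Γ) {g : Bˣ} (hg : g ∈ Γ) : h.Norm g :=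
  ⟨fun _ hγ => mul_mem (mul_mem hg hγ) (inv_mem hg), fun _ hj =>
    h.ideal.right _ (h.mem _ (inv_mem hg)) _ (h.ideal.left _ (h.mem _ hg) _ hj)⟩

lemma Norm.conj_N {h : TriGroup S J K Γ} {g : Bˣ} (hg : h.Norm g) : ∀ n ∈ h.N, g * n * g⁻¹ ∈ h.N := by
  refine zarHull_conj g fun u hu => ⟨hg.1 u hu.1, ?_, ?_⟩
  · have := hg.2 _ hu.2.1
    simpa [mul_sub, sub_mul] using this
  · have := hg.2 _ hu.2.2
    simpa [mul_sub, sub_mul, mul_assoc] using this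

lemma mem_normalizer (h : TriGroup S J K Γ) {γ : Bˣ} (hγ : γ ∈ Γ) :
    γ ∈ Subgroup.normalizer (h.N : Set Bˣ) :=
  mem_normalizer_of (h.norm_of_mem hγ).conj_N (h.norm_of_mem (inv_mem hγ)).conj_N

lemma commutator_mem (h : TriGroup S J K Γ) {x y : Bˣ} (hx : (x : B) ∈ S) (hy : (y : B) ∈ S) :
    x * y * x⁻¹ * y⁻¹ ∈ oneAdd J h.ideal.mul_le := by
  have key : ∀ x y : Bˣ, (x : B) ∈ S → (y : B) ∈ S → ((x * y * x⁻¹ * y⁻¹ : Bˣ) : B) - 1 ∈ J := by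
    intro x y hx hy
    have e : ((x * y * x⁻¹ * y⁻¹ : Bˣ) : B) - 1 = ((x : B) * y - y * x) * (↑x⁻¹ * ↑y⁻¹) := by
      simp [sub_mul, mul_assoc]
    rw [e]
    exact h.ideal.right _ (S.mul_mem (inv_mem_subalgebra S hx) (inv_mem_subalgebra S hy)) _
      (h.comm _ hx _ hy)
  refine ⟨key x y hx hy, ?_⟩
  have e : (x * y * x⁻¹ * y⁻¹)⁻¹ = y * x * y⁻¹ * x⁻¹ := by group
  rw [e]
  exact key y x hy hx

lemma commMod_M (h : TriGroup S J K Γ) : CommMod h.M h.N :=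
  commMod_closure _ _ (fun _ => h.mem_normalizer) fun s hs t ht => le_zarHull _
    ⟨Γ.mul_mem (Γ.mul_mem (Γ.mul_mem hs ht) (Γ.inv_mem hs)) (Γ.inv_mem ht),
      h.commutator_mem (h.mem s hs) (h.mem t ht)⟩

lemma le_M (h : TriGroup S J K Γ) : Γ ≤ h.M := fun _ hx => Subgroup.subset_closure (Or.inr hx)

lemma M_mem (h : TriGroup S J K Γ) {x : Bˣ} (hx : x ∈ h.M) : (x : B) ∈ S := by
  unfold M at hx
  induction hx using Subgroup.closure_induction with
  | mem x hx =>
    rcases hx with hx | hx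
    · exact h.N_mem hx
    · exact h.mem x hx
  | one => exact S.one_mem
  | mul x y _ _ hx hy => exact S.mul_mem hx hy
  | inv x _ hx => exact inv_mem_subalgebra S hx

lemma exists_M (h : TriGroup S J K Γ) {x : Bˣ} (hx : x ∈ h.M) : ∃ n ∈ h.N, n * x ∈ Γ :=
  exists_mul_mem le_rfl (fun _ hx _ => h.commMod_M.conj hx) hx

lemma M_normalizer (h : TriGroup S J K Γ) {x : Bˣ} (hx : x ∈ h.M) :
    x ∈ Subgroup.normalizer (h.N : Set Bˣ) :=
  mem_normalizer_of (fun _ => h.commMod_M.conj hx) fun _ => h.commMod_M.conj (inv_mem hx)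

/-- The subalgebra `D` meets every coset of `N` in `M`, and it centralizes the elliptic parts of
the elements of `M` it contains. -/
structure Red (h : TriGroup S J K Γ) (D : Subalgebra ℝ B) : Prop where
  le : D ≤ S
  surj : ∀ x ∈ h.M, ∃ n ∈ h.N, ((n * x : Bˣ) : B) ∈ D
  central : ∀ δ ∈ h.M, (δ : B) ∈ D → ∀ y ∈ D, Commute (ell δ : B) y

/-- A subalgebra of minimal dimension meeting every coset of `N` centralizes its elliptic
parts. -/
lemma exists_red (h : TriGroup S J K Γ) : ∃ D, h.Red D := by
  let 𝒮 : Set (Subalgebra ℝ B) := {D | D ≤ S ∧ ∀ x ∈ h.M, ∃ n ∈ h.N, ((n * x : Bˣ) : B) ∈ D}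
  have h0 : S ∈ 𝒮 := ⟨le_rfl, fun x hx => ⟨1, one_mem _, by simpa using h.M_mem hx⟩⟩
  obtain ⟨D, ⟨hDS, hD⟩, hmin⟩ := (measure fun D : Subalgebra ℝ B => Module.finrank ℝ D).wf.has_min 𝒮 ⟨S, h0⟩
  refine ⟨D, hDS, hD, fun δ hδ hδD y hy => ?_⟩
  let D' := D ⊓ Subalgebra.centralizer ℝ {(ell δ : B)}
  have hD' : D' ∈ 𝒮 := by
    refine ⟨inf_le_left.trans hDS, fun x hx => ?_⟩
    obtain ⟨n, hn, hy⟩ := hD x hx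
    set y := n * x with hydef
    have hyM : y ∈ h.M := mul_mem (h.commMod_M.le hn) hx
    have hν : y * δ * y⁻¹ * δ⁻¹ ∈ h.N := h.commMod_M.comm y hyM δ hδ
    have hνD : ((y * δ * y⁻¹ * δ⁻¹ : Bˣ) : B) ∈ D :=
      D.mul_mem (D.mul_mem (D.mul_mem hy hδD) (inv_mem_subalgebra D hy)) (inv_mem_subalgebra D hδD)
    obtain ⟨m, hm, hmD, he⟩ := h.ideal.ell_mul (L := h.uni) inf_le_right hDS hδD
      (fun n hn => h.commMod_M.conj hδ hn) hν hνD
    rw [inv_mul_cancel_right, ell_conj] at he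
    refine ⟨m⁻¹ * n, mul_mem (inv_mem hm) hn, ?_⟩
    rw [mul_assoc, ← hydef]
    refine ⟨D.mul_mem (inv_mem_subalgebra D hmD) hy, mem_centralizer_singleton ?_⟩
    have e : ell δ * (m⁻¹ * y) = (m⁻¹ * y) * ell δ := by
      have : m⁻¹ * (y * ell δ * y⁻¹) * y = m⁻¹ * (m * ell δ * m⁻¹) * y := by rw [he]
      calc ell δ * (m⁻¹ * y) = m⁻¹ * (m * ell δ * m⁻¹) * y := by group
        _ = m⁻¹ * (y * ell δ * y⁻¹) * y := this.symm
        _ = _ := by group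
    have : ((ell δ * (m⁻¹ * y) : Bˣ) : B) = (m⁻¹ * y * ell δ : Bˣ) := congrArg Units.val e
    rwa [Units.val_mul, Units.val_mul] at this
  have hle : D' ≤ D := inf_le_left
  have hfr : Module.finrank ℝ D ≤ Module.finrank ℝ D' := not_lt.1 (hmin D' hD')
  have heq : D' = D := Subalgebra.eq_of_le_of_finrank_le hle hfr
  have hyD' : y ∈ D' := heq ▸ hy
  exact commute_of_mem_centralizer hyD'.2

end TriGroup
end Hull

section Hull
variable {B : Type*} [NormedRing B] [NormedAlgebra ℝ B] [FiniteDimensional ℝ B] [CompleteSpace B]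

lemma CommMod.pow {G : Type*} [Group G] {Q N : Subgroup G} (h : CommMod Q N) {x y : G} (hy : y ∈ Q)
    (h1 : x * y⁻¹ ∈ N) (k : ℕ) : x ^ k * (y ^ k)⁻¹ ∈ N := by
  induction k with
  | zero => simp
  | succ k ih =>
    rw [_root_.pow_succ, _root_.pow_succ]
    exact h.mul (Q.pow_mem hy k) ih h1

lemma commutator_mul_left {G : Type*} [Group G] {e x y : G} (hx : Commute e x) (hy : Commute e y) :
    e * x * y * (e * x)⁻¹ * y⁻¹ = x * y * x⁻¹ * y⁻¹ := by
  have h : Commute e (x * y * x⁻¹) := (hx.mul_right hy).mul_right hx.inv_right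
  calc e * x * y * (e * x)⁻¹ * y⁻¹ = e * (x * y * x⁻¹) * e⁻¹ * y⁻¹ := by group
    _ = _ := by rw [h.eq]; group

lemma commutator_mul_right {G : Type*} [Group G] {e x y : G} (hx : Commute e x) :
    x * (e * y) * x⁻¹ * (e * y)⁻¹ = e * (x * y * x⁻¹ * y⁻¹) * e⁻¹ := by
  calc x * (e * y) * x⁻¹ * (e * y)⁻¹ = x * e * y * x⁻¹ * y⁻¹ * e⁻¹ := by group
    _ = _ := by rw [← hx.eq]; group

namespace TriGroup
variable {S : Subalgebra ℝ B} {J : Submodule ℝ B} {K : ℕ} {Γ : Subgroup Bˣ}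

/-- The elliptic parts, and the one-parameter groups of the hyperbolic parts, of the elements of
`M` lying in `D`. -/
def T (h : TriGroup S J K Γ) (D : Subalgebra ℝ B) : Set Bˣ :=
  {u | ∃ δ ∈ h.M, (δ : B) ∈ D ∧ (u = ell δ ∨ ∃ t : ℝ, u = expU (t • hyp δ))}

/-- The hull of `Γ` (up to closure). -/
def Q (h : TriGroup S J K Γ) (D : Subalgebra ℝ B) : Subgroup Bˣ :=
  Subgroup.closure (h.N ∪ h.T D : Set Bˣ)

variable {D : Subalgebra ℝ B} {h : TriGroup S J K Γ}

lemma expU_mem (D : Subalgebra ℝ B) {a : B} (ha : a ∈ D) (t : ℝ) : (expU (t • a) : B) ∈ D := by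
  rw [val_expU]; exact exp_mem' D (D.smul_mem ha t)

lemma T_mem {u : Bˣ} (hu : u ∈ h.T D) : (u : B) ∈ D := by
  obtain ⟨δ, -, hδ, rfl | ⟨t, rfl⟩⟩ := hu
  · exact ell_mem hδ
  · exact expU_mem D (hyp_mem hδ) t

lemma Red.commMod (hD : h.Red D) : CommMod (h.Q D) h.N := by
  have hcen : ∀ δ ∈ h.M, (δ : B) ∈ D → ∀ y : Bˣ, (y : B) ∈ D → Commute (ell δ) y :=
    fun δ h1 h2 y hy => Units.ext (hD.central δ h1 h2 y hy).eq
  refine commMod_closure _ _ ?_ ?_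
  · rintro _ ⟨δ, hδ, -, rfl | ⟨t, rfl⟩⟩
    · exact h.ideal.nilSub.ell_normalizer h.uni_sub (h.M_normalizer hδ)
    · exact h.ideal.nilSub.hyp_normalizer h.uni_sub (h.M_normalizer hδ) t
  · intro s hs t ht
    have hs' := T_mem hs
    have ht' := T_mem ht
    obtain ⟨δ, hδ, hδD, rfl | ⟨a, rfl⟩⟩ := hs
    · rw [(hcen δ hδ hδD t ht').eq]; simp
    obtain ⟨ε, hε, hεD, rfl | ⟨b, rfl⟩⟩ := ht
    · rw [← (hcen ε hε hεD _ hs').eq]; simp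
    refine expU_commutator_mem (realType_hyp δ) (realType_hyp ε) ?_ ?_ ?_ a b
    · simpa using h.ideal.nilSub.hyp_normalizer h.uni_sub (h.M_normalizer hδ) 1
    · simpa using h.ideal.nilSub.hyp_normalizer h.uni_sub (h.M_normalizer hε) 1
    have hp : (expU (hyp δ) : B) ∈ D := by simpa using expU_mem D (hyp_mem hδD) 1
    have hq : (expU (hyp ε) : B) ∈ D := by simpa using expU_mem D (hyp_mem hεD) 1
    have h1 := h.commMod_M.comm δ hδ ε hε
    have c1 := hcen δ hδ hδD
    have c2 := hcen ε hε hεD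
    rw [eq_ell_mul δ, eq_ell_mul ε] at h1
    rw [commutator_mul_left (c1 _ hp) ((c1 _ (ell_mem hεD)).mul_right (c1 _ hq)),
      commutator_mul_right (c2 _ hp)] at h1
    have c3 : Commute (ell ε) (expU (hyp δ) * expU (hyp ε) * (expU (hyp δ))⁻¹ * (expU (hyp ε))⁻¹) :=
      (((c2 _ hp).mul_right (c2 _ hq)).mul_right (c2 _ hp).inv_right).mul_right (c2 _ hq).inv_right
    rwa [c3.eq, mul_inv_cancel_right] at h1

lemma Red.ell_mem_Q' (_ : h.Red D) {δ : Bˣ} (hδ : δ ∈ h.M) (hδD : (δ : B) ∈ D) : ell δ ∈ h.Q D :=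
  Subgroup.subset_closure (Or.inr ⟨δ, hδ, hδD, .inl rfl⟩)

lemma Red.hyp_mem_Q' (_ : h.Red D) {δ : Bˣ} (hδ : δ ∈ h.M) (hδD : (δ : B) ∈ D) (t : ℝ) :
    expU (t • hyp δ) ∈ h.Q D :=
  Subgroup.subset_closure (Or.inr ⟨δ, hδ, hδD, .inr ⟨t, rfl⟩⟩)

lemma Red.M_le (hD : h.Red D) : h.M ≤ h.Q D := by
  intro x hx
  obtain ⟨n, hn, hxD⟩ := hD.surj x hx
  have hδ : n * x ∈ h.M := mul_mem (h.commMod_M.le hn) hx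
  have h1 : n * x ∈ h.Q D := by
    rw [eq_ell_mul (n * x)]
    exact mul_mem (hD.ell_mem_Q' hδ hxD) (by simpa using hD.hyp_mem_Q' hδ hxD 1)
  simpa using mul_mem (inv_mem (hD.commMod.le hn)) h1

lemma Red.ell_sub (hD : h.Red D) {x n : Bˣ} (hx : x ∈ h.M) (hn : n ∈ h.N)
    (hxD : ((n * x : Bˣ) : B) ∈ D) : ell x * (ell (n * x))⁻¹ ∈ h.N := by
  have hδ : n * x ∈ h.M := mul_mem (h.commMod_M.le hn) hx
  obtain ⟨m, hm, -, he⟩ := h.ideal.ell_mul (L := h.uni) inf_le_right le_rfl (h.M_mem hδ)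
    (fun n hn => h.commMod_M.conj hδ hn) (inv_mem hn) (h.N_mem (inv_mem hn))
  rw [inv_mul_cancel_left] at he
  rw [he]
  have := h.N.mul_mem hm (hD.commMod.conj (hD.ell_mem_Q' hδ hxD) (inv_mem hm))
  convert this using 1
  group

lemma Red.hyp_sub (hD : h.Red D) {x n : Bˣ} (hx : x ∈ h.M) (hn : n ∈ h.N)
    (hxD : ((n * x : Bˣ) : B) ∈ D) (t : ℝ) :
    expU (t • hyp x) * (expU (t • hyp (n * x)))⁻¹ ∈ h.N := by
  have hδ : n * x ∈ h.M := mul_mem (h.commMod_M.le hn) hx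
  have hQ := hD.commMod
  refine ((ExpCurve.of (realType_hyp x)).mul (ExpCurve.of (realType_hyp (n * x))).inv).mem
    (fun k => ?_) t
  rw [expU_nat_smul, expU_nat_smul]
  refine hQ.pow (by simpa using hD.hyp_mem_Q' hδ hxD 1) ?_ k
  rw [expU_hyp, expU_hyp]
  refine hQ.mul (inv_mem (hD.ell_mem_Q' hδ hxD)) (hQ.inv (hD.ell_mem_Q' hδ hxD) (hD.ell_sub hx hn hxD)) ?_
  simpa using hn

lemma Red.ell_mem_Q (hD : h.Red D) {x : Bˣ} (hx : x ∈ h.M) : ell x ∈ h.Q D := by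
  obtain ⟨n, hn, hxD⟩ := hD.surj x hx
  have hδ : n * x ∈ h.M := mul_mem (h.commMod_M.le hn) hx
  simpa using mul_mem (hD.commMod.le (hD.ell_sub hx hn hxD)) (hD.ell_mem_Q' hδ hxD)

lemma Red.hyp_mem_Q (hD : h.Red D) {x : Bˣ} (hx : x ∈ h.M) (t : ℝ) :
    expU (t • hyp x) ∈ h.Q D := by
  obtain ⟨n, hn, hxD⟩ := hD.surj x hx
  have hδ : n * x ∈ h.M := mul_mem (h.commMod_M.le hn) hx
  simpa using mul_mem (hD.commMod.le (hD.hyp_sub hx hn hxD t)) (hD.hyp_mem_Q' hδ hxD t)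

lemma Red.Q_mem (hD : h.Red D) {x : Bˣ} (hx : x ∈ h.Q D) : (x : B) ∈ S := by
  unfold Q at hx
  induction hx using Subgroup.closure_induction with
  | mem x hx =>
    rcases hx with hx | hx
    · exact h.N_mem hx
    · exact hD.le (T_mem hx)
  | one => exact S.one_mem
  | mul x y _ _ hx hy => exact S.mul_mem hx hy
  | inv x _ hx => exact inv_mem_subalgebra S hx

lemma closure_conj {G : Type*} [Group G] {X : Set G} {R : Subgroup G} {g : G}
    (h : ∀ x ∈ X, g * x * g⁻¹ ∈ R) {x : G} (hx : x ∈ Subgroup.closure X) : g * x * g⁻¹ ∈ R := by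
  have : Subgroup.closure X ≤ R.comap (MulAut.conj g).toMonoidHom :=
    (Subgroup.closure_le _).2 fun x hx => by simpa using h x hx
  simpa using this hx

lemma Norm.conj_M {g : Bˣ} (hg : h.Norm g) : ∀ x ∈ h.M, g * x * g⁻¹ ∈ h.M := by
  refine fun x hx => closure_conj ?_ hx
  rintro x (hx | hx)
  · exact h.commMod_M.le (hg.conj_N x hx)
  · exact h.le_M (hg.1 x hx)

/-- The hull is stable under the symmetries of `Γ`, although `D` need not be. -/
lemma Red.conj_Q (hD : h.Red D) {g : Bˣ} (hg : h.Norm g) : ∀ x ∈ h.Q D, g * x * g⁻¹ ∈ h.Q D := by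
  refine fun x hx => closure_conj ?_ hx
  rintro x (hx | ⟨δ, hδ, -, rfl | ⟨t, rfl⟩⟩)
  · exact hD.commMod.le (hg.conj_N x hx)
  · rw [← ell_conj]; exact hD.ell_mem_Q (hg.conj_M δ hδ)
  · have := hD.hyp_mem_Q (hg.conj_M δ hδ) t
    rw [hyp_conj] at this
    rw [← expU_conj]
    simpa [mul_assoc] using this

end TriGroup
end Hull

/-! ### Commuting elliptic elements -/

section Characters

lemma exists_char {A : Type*} [CommRing A] [Algebra ℝ A] [FiniteDimensional ℝ A] {x : A}
    (hx : ¬ IsNilpotent x) : ∃ φ : A →ₐ[ℝ] ℂ, φ x ≠ 0 := by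
  rw [nilpotent_iff_mem_prime] at hx
  push Not at hx
  obtain ⟨P, hP, hxP⟩ := hx
  have : IsArtinianRing A := isArtinian_of_tower ℝ inferInstance
  have hm : P.IsMaximal := inferInstance
  let _ : Field (A ⧸ P) := Ideal.Quotient.field P
  have : FiniteDimensional ℝ (A ⧸ P) := inferInstance
  have : Algebra.IsAlgebraic ℝ (A ⧸ P) := inferInstance
  let φ : (A ⧸ P) →ₐ[ℝ] ℂ := IsAlgClosed.lift
  refine ⟨φ.comp (Ideal.Quotient.mkₐ ℝ P), fun h => hxP ?_⟩
  have h1 : (Ideal.Quotient.mkₐ ℝ P) x = 0 := (map_eq_zero φ).1 h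
  exact Ideal.Quotient.eq_zero_iff_mem.1 h1

lemma norm_char_eq_one {A : Type*} [Ring A] [Algebra ℝ A] (φ : A →ₐ[ℝ] ℂ) {e : Aˣ} {C : ℝ}
    (h : ∀ m : ℤ, ‖φ ((e ^ m : Aˣ) : A)‖ ≤ C) : ‖φ e‖ ≤ 1 := by
  by_contra! h1
  obtain ⟨m, hm⟩ := pow_unbounded_of_one_lt C h1
  have := h m
  rw [zpow_natCast, Units.val_pow_eq_pow_val, map_pow, norm_pow] at this
  linarith

end Characters

section Ell
variable {B : Type*} [NormedRing B] [NormedAlgebra ℝ B] [FiniteDimensional ℝ B] [CompleteSpace B]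

lemma semis_isSemisimple {b : B} (hb : Semis b) : Module.End.IsSemisimple (LinearMap.mulLeft ℝ b) := by
  obtain ⟨q, hq, h⟩ := hb
  refine Module.End.isSemisimple_of_squarefree_aeval_eq_zero hq ?_
  have : aeval (Algebra.lmul ℝ B b) q = Algebra.lmul ℝ B (aeval b q) :=
    aeval_algHom_apply (Algebra.lmul ℝ B) b q
  rw [h, map_zero] at this
  exact this

variable {X : Set Bˣ}

lemma adjoin_commute (hc : ∀ x ∈ X, ∀ y ∈ X, Commute x y) {a b : B}
    (ha : a ∈ Algebra.adjoin ℝ (Units.val '' X)) (hb : b ∈ Algebra.adjoin ℝ (Units.val '' X)) :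
    Commute a b := by
  refine Algebra.commute_of_mem_adjoin_of_forall_mem_commute hb ?_
  rintro _ ⟨y, hy, rfl⟩
  refine (Algebra.commute_of_mem_adjoin_of_forall_mem_commute ha ?_).symm
  rintro _ ⟨x, hx, rfl⟩
  exact (hc y hy x hx).map (Units.coeHom B)

lemma adjoin_isSemisimple (hc : ∀ x ∈ X, ∀ y ∈ X, Commute x y) (hs : ∀ x ∈ X, Semis (x : B)) {a : B}
    (ha : a ∈ Algebra.adjoin ℝ (Units.val '' X)) : Module.End.IsSemisimple (LinearMap.mulLeft ℝ a) := by
  induction ha using Algebra.adjoin_induction with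
  | mem x hx =>
    obtain ⟨x, hx, rfl⟩ := hx
    exact semis_isSemisimple (hs x hx)
  | algebraMap r =>
    refine semis_isSemisimple ⟨Polynomial.X - Polynomial.C r, (irreducible_X_sub_C r).squarefree, ?_⟩
    simp
  | add x y hx hy h1 h2 =>
    have e : LinearMap.mulLeft ℝ (x + y) = LinearMap.mulLeft ℝ x + LinearMap.mulLeft ℝ y :=
      map_add (Algebra.lmul ℝ B) x y
    rw [e]
    exact Module.End.IsSemisimple.add_of_commute ((adjoin_commute hc hx hy).map (Algebra.lmul ℝ B)) h1 h2
  | mul x y hx hy h1 h2 =>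
    have e : LinearMap.mulLeft ℝ (x * y) = LinearMap.mulLeft ℝ x * LinearMap.mulLeft ℝ y :=
      map_mul (Algebra.lmul ℝ B) x y
    rw [e]
    exact Module.End.IsSemisimple.mul_of_commute ((adjoin_commute hc hx hy).map (Algebra.lmul ℝ B)) h1 h2

lemma eq_zero_of_isNilpotent (hc : ∀ x ∈ X, ∀ y ∈ X, Commute x y) (hs : ∀ x ∈ X, Semis (x : B)) {a : B}
    (ha : a ∈ Algebra.adjoin ℝ (Units.val '' X)) (hn : IsNilpotent a) : a = 0 := by
  have h := Module.End.eq_zero_of_isNilpotent_isSemisimple (hn.map (Algebra.lmul ℝ B))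
    (adjoin_isSemisimple hc hs ha)
  have := congrArg (fun f : Module.End ℝ B => f 1) h
  simpa using this

lemma closure_mem_adjoin {e : Bˣ} (he : e ∈ Subgroup.closure X) :
    (e : B) ∈ Algebra.adjoin ℝ (Units.val '' X) := by
  induction he using Subgroup.closure_induction with
  | mem x hx => exact Algebra.subset_adjoin ⟨x, hx, rfl⟩
  | one => exact one_mem _
  | mul x y _ _ hx hy => exact mul_mem hx hy
  | inv x _ hx => exact inv_mem_subalgebra _ hx

lemma closure_elliptic (hc : ∀ x ∈ X, ∀ y ∈ X, Commute x y) (hX : ∀ x ∈ X, Elliptic x) {e : Bˣ}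
    (he : e ∈ Subgroup.closure X) : Elliptic e := by
  induction he using Subgroup.closure_induction with
  | mem x hx => exact hX x hx
  | one => exact ⟨‖(1 : B)‖, fun m => by simp⟩
  | mul x y hx hy h1 h2 =>
    exact h1.mul h2 (Units.ext (adjoin_commute hc (closure_mem_adjoin hx) (closure_mem_adjoin hy)).eq)
  | inv x _ hx => exact hx.inv

/-- A group generated by commuting semisimple elliptic elements is bounded: the characters of the
commutative algebra it generates separate points and are unimodular on it. -/
lemma exists_bound (hc : ∀ x ∈ X, ∀ y ∈ X, Commute x y) (hs : ∀ x ∈ X, Semis (x : B))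
    (hX : ∀ x ∈ X, Elliptic x) : ∃ C : ℝ, ∀ e ∈ Subgroup.closure X, ‖(e : B)‖ ≤ C := by
  let A := Algebra.adjoin ℝ (Units.val '' X : Set B)
  have hsep : ∀ x : A, x ≠ 0 → ∃ φ : A →ₐ[ℝ] ℂ, φ x ≠ 0 := by
    intro x hx
    let _ : CommRing A := { (inferInstance : Ring A) with
      mul_comm := fun a b => Subtype.ext (adjoin_commute hc a.2 b.2).eq }
    refine exists_char fun hn => hx ?_
    exact Subtype.ext (eq_zero_of_isNilpotent hc hs x.2 (hn.map A.val))
  let Φ : A →ₗ[ℝ] ((A →ₐ[ℝ] ℂ) → ℂ) := LinearMap.pi fun φ => φ.toLinearMap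
  have hΦ : ∀ x, Φ x = 0 → x = 0 := by
    intro x hx
    by_contra h
    obtain ⟨φ, hφ⟩ := hsep x h
    exact hφ (congrFun hx φ)
  have hle : ∀ e ∈ Subgroup.closure X, ∀ (h : (e : B) ∈ A) (φ : A →ₐ[ℝ] ℂ), ‖φ ⟨e, h⟩‖ ≤ 1 := by
    intro e he h φ
    let e' : Aˣ := ⟨⟨e, h⟩, ⟨↑e⁻¹, inv_mem_subalgebra A h⟩, Subtype.ext (by simp), Subtype.ext (by simp)⟩
    obtain ⟨C, hC⟩ := closure_elliptic hc hX he
    have he' : Units.map (A.val : A →* B) e' = e := Units.ext rfl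
    let φc := φ.toLinearMap.toContinuousLinearMap
    refine norm_char_eq_one φ (e := e') (C := ‖φc‖ * C) fun m => ?_
    refine (φc.le_opNorm _).trans (mul_le_mul_of_nonneg_left ?_ (norm_nonneg _))
    have : ((e' ^ m : Aˣ) : A).1 = ((e ^ m : Bˣ) : B) := by
      rw [← he', ← map_zpow]; rfl
    change ‖((e' ^ m : Aˣ) : A).1‖ ≤ C
    rw [this]
    exact hC m
  have : Finite (A →ₐ[ℝ] ℂ) := Finite.algHom ℝ A ℂ
  have : Fintype (A →ₐ[ℝ] ℂ) := Fintype.ofFinite _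
  obtain ⟨K, -, hK⟩ := (Φ.exists_antilipschitzWith (LinearMap.ker_eq_bot'.2 hΦ))
  refine ⟨K, fun e he => ?_⟩
  have h := hK.le_mul_norm_sub ⟨e, closure_mem_adjoin he⟩ 0
  rw [map_zero, add_zero, add_zero, norm_neg, norm_neg] at h
  refine h.trans ((mul_le_mul_of_nonneg_left (?_ : _ ≤ (1 : ℝ)) K.2).trans_eq (mul_one _))
  exact (pi_norm_le_iff_of_nonneg zero_le_one).2 fun φ => hle e he _ φ

lemma isCompact_closure_of_bounded {E : Subgroup Bˣ} {C : ℝ} (h : ∀ e ∈ E, ‖(e : B)‖ ≤ C) :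
    IsCompact (closure (E : Set Bˣ)) := by
  have : ProperSpace B := FiniteDimensional.proper ℝ B
  have hc : IsCompact (Units.embedProduct B ⁻¹'
      (Metric.closedBall (0 : B) C ×ˢ (MulOpposite.opHomeomorph '' Metric.closedBall (0 : B) C))) :=
    Units.isClosedEmbedding_embedProduct.isCompact_preimage
      ((isCompact_closedBall _ _).prod ((isCompact_closedBall _ _).image (Homeomorph.continuous _)))
  refine hc.closure_of_subset fun e he => ⟨?_, ⟨↑e⁻¹, ?_, rfl⟩⟩
  · simpa using h e he
  · simpa using h _ (inv_mem he)

end Ell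

/-! ### Components of a compact commutative group -/

section AddClosed
variable {W : Type*} [NormedAddCommGroup W] [NormedSpace ℝ W] [FiniteDimensional ℝ W]

/-- The small elements of a closed additive subgroup of a vector space lie on lines contained in
that subgroup. -/
lemma exists_submodule_of_isClosed (A : AddSubgroup W) (hA : IsClosed (A : Set W)) :
    ∃ W0 : Submodule ℝ W, (W0 : Set W) ⊆ A ∧ ∃ ε > 0, ∀ a ∈ A, ‖a‖ < ε → a ∈ W0 := by
  have : ProperSpace W := FiniteDimensional.proper ℝ W
  let W0 : Submodule ℝ W :=
    { carrier := {a | ∀ t : ℝ, t • a ∈ A}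
      zero_mem' := fun t => by rw [smul_zero]; exact A.zero_mem
      add_mem' := fun ha hb t => by rw [smul_add]; exact A.add_mem (ha t) (hb t)
      smul_mem' := fun c a ha t => by rw [smul_smul]; exact ha _ }
  have hW0 : ∀ a ∈ W0, a ∈ A := fun a ha => by simpa using ha 1
  refine ⟨W0, hW0, ?_⟩
  by_contra! hcon
  obtain ⟨W1, hc⟩ := W0.exists_isCompl
  let p := (W1.projection W0 hc.symm).toContinuousLinearMap
  have hp1 : ∀ a, p a ∈ W1 := fun a => Submodule.projection_apply_mem _ a
  have hp0 : ∀ a, a - p a ∈ W0 := fun a => Submodule.sub_projection_mem hc.symm a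
  choose a ha ha' ha0 using fun k : ℕ => hcon (1 / ((k : ℝ) + 1)) Nat.one_div_pos_of_nat
  have haz : Tendsto a atTop (𝓝 0) := squeeze_zero_norm (fun k => (ha' k).le)
    tendsto_one_div_add_atTop_nhds_zero_nat
  let w : ℕ → W := fun k => p (a k)
  have hwz : Tendsto w atTop (𝓝 0) := by
    have := (p.continuous.tendsto 0).comp haz
    rwa [map_zero] at this
  have hwA : ∀ k, w k ∈ A := fun k => by
    have := A.sub_mem (ha k) (hW0 _ (hp0 (a k)))
    rwa [sub_sub_cancel] at this
  have hw0 : ∀ k, ‖w k‖ ≠ 0 := fun k h => by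
    have h1 := hp0 (a k)
    rw [show p (a k) = 0 from norm_eq_zero.1 h, sub_zero] at h1
    exact ha0 k h1
  let v : ℕ → W := fun k => ‖w k‖⁻¹ • w k
  have hv : ∀ k, v k ∈ Metric.sphere (0 : W) 1 := fun k => by
    simp only [v, mem_sphere_zero_iff_norm, norm_smul, norm_inv, norm_norm]
    exact inv_mul_cancel₀ (hw0 k)
  obtain ⟨u, hu, φ, hφ, hlim⟩ := (isCompact_sphere (0 : W) 1).tendsto_subseq hv
  have hu1 : u ∈ W1 := (Submodule.closed_of_finiteDimensional W1).mem_of_tendsto hlim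
    (Eventually.of_forall fun k => W1.smul_mem _ (hp1 _))
  have hu0 : u ∈ W0 := by
    intro t
    -- `t • u` is a limit of integer multiples of the short vectors `w k`
    refine hA.mem_of_tendsto (f := fun k => ⌊t / ‖w (φ k)‖⌋ • w (φ k)) (b := atTop) ?_
      (Eventually.of_forall fun k => A.zsmul_mem (hwA _) _)
    have h1 : Tendsto (fun k => t • v (φ k)) atTop (𝓝 (t • u)) := hlim.const_smul t
    have h2 : Tendsto (fun k => Int.fract (t / ‖w (φ k)‖) • w (φ k)) atTop (𝓝 0) := by
      refine squeeze_zero_norm (a := fun k => ‖w (φ k)‖) (fun k => ?_) ?_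
      · rw [norm_smul, Real.norm_of_nonneg (Int.fract_nonneg _)]
        exact mul_le_of_le_one_left (norm_nonneg _) (Int.fract_lt_one _).le
      · simpa using (hwz.comp hφ.tendsto_atTop).norm
    have h3 := h1.sub h2
    rw [sub_zero] at h3
    refine h3.congr fun k => ?_
    rw [← Int.cast_smul_eq_zsmul ℝ]
    simp only [v]
    rw [smul_smul, ← div_eq_mul_inv, ← sub_smul, Int.self_sub_fract]
  have : u = 0 := Submodule.disjoint_def.1 hc.disjoint u hu0 hu1
  rw [this] at hu
  simp at hu

end AddClosed

section Components
variable {B : Type*} [NormedRing B] [NormedAlgebra ℝ B] [FiniteDimensional ℝ B] [CompleteSpace B]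

/-- A commutative group `E` with compact closure is covered by finitely many translates of a
connected subset of its closure, namely of the image under `exp` of the largest vector space
mapped into the closure of `E`. -/
lemma exists_components {A : Subalgebra ℝ B} (hA : ∀ a ∈ A, ∀ b ∈ A, Commute a b) {E : Subgroup Bˣ}
    (hE : ∀ e ∈ E, (e : B) ∈ A) (hcpt : IsCompact (closure (E : Set Bˣ))) :
    ∃ L : Set Bˣ, L ⊆ closure (E : Set Bˣ) ∧ IsPreconnected L ∧ 1 ∈ L ∧
      ∃ F : Set Bˣ, F.Finite ∧ F ⊆ E ∧ ∀ e ∈ E, ∃ l ∈ L, ∃ f ∈ F, e = l * f := by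
  have : CompleteSpace A := FiniteDimensional.complete ℝ A
  let 𝔩 : AddSubgroup A :=
    { carrier := {a | expU (a : B) ∈ E.topologicalClosure}
      zero_mem' := by simp [expU_zero, one_mem]
      add_mem' := fun {a b} ha hb => by
        have : expU (a + b : B) ∈ E.topologicalClosure := by
          rw [expU_add (hA a a.2 b b.2)]; exact mul_mem ha hb
        exact this
      neg_mem' := fun {a} ha => by
        have : expU (-a : B) ∈ E.topologicalClosure := by rw [expU_neg]; exact inv_mem ha
        exact this }
  have hcont : Continuous fun a : A => expU (a : B) := continuous_expU.comp continuous_subtype_val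
  have h𝔩 : IsClosed (𝔩 : Set A) := E.isClosed_topologicalClosure.preimage hcont
  obtain ⟨W0, hW0, ε, hε, hsmall⟩ := exists_submodule_of_isClosed 𝔩 h𝔩
  let L : Set Bˣ := (fun a : A => expU (a : B)) '' W0
  have hnear : ∀ᶠ x in 𝓝 (1 : A), ∃ a ∈ Metric.ball (0 : A) ε, exp a = x := by
    have h1 : HasStrictFDerivAt (exp : A → A) (1 : A →L[ℝ] A) 0 := hasStrictFDerivAt_exp_zero
    have h2 := h1.map_nhds_eq_of_surj (LinearMap.range_eq_top.2 Function.surjective_id)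
    rw [exp_zero] at h2
    rw [← h2]
    exact Filter.image_mem_map (Metric.ball_mem_nhds _ hε)
  obtain ⟨δ, hδ, hball⟩ := Metric.eventually_nhds_iff.1 hnear
  have hL : ∀ u ∈ E, ‖(u : B) - 1‖ < δ → u ∈ L := by
    intro u hu hud
    obtain ⟨a, ha, hau⟩ := hball (y := ⟨u, hE u hu⟩) (by rw [dist_eq_norm]; exact hud)
    have hau' : expU (a : B) = u := by
      refine Units.ext ?_
      rw [val_expU]
      have : exp (a : B) = ((exp a : A) : B) := (map_exp' A.val continuous_subtype_val a).symm
      rw [this, hau]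
    refine ⟨a, hsmall a ?_ (by simpa using ha), hau'⟩
    have : expU (a : B) ∈ E.topologicalClosure := hau' ▸ E.le_topologicalClosure hu
    exact this
  refine ⟨L, ?_, ?_, ⟨0, W0.zero_mem, by simp [expU_zero]⟩, ?_⟩
  · rintro _ ⟨a, ha, rfl⟩
    exact hW0 ha
  · exact (W0.convex (𝕜 := ℝ)).isPreconnected.image _ hcont.continuousOn
  · let U : Set Bˣ := {u | ‖(u : B) - 1‖ < δ}
    have hU : IsOpen U := isOpen_lt ((Units.continuous_val.sub continuous_const).norm) continuous_const
    obtain ⟨t, ht⟩ := hcpt.elim_finite_subcover (fun f : E => (fun u : Bˣ => u * (f : Bˣ)⁻¹) ⁻¹' U)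
      (fun f => hU.preimage (continuous_mul_const _)) (by
        intro u hu
        have ho : IsOpen ((fun f : Bˣ => u * f⁻¹) ⁻¹' U) :=
          hU.preimage (continuous_const.mul continuous_inv)
        obtain ⟨f, hf, hfE⟩ := mem_closure_iff.1 hu _ ho (by simp [U, hδ])
        exact Set.mem_iUnion.2 ⟨⟨f, hfE⟩, hf⟩)
    refine ⟨Subtype.val '' (t : Set E), t.finite_toSet.image _, ?_, fun e he => ?_⟩
    · rintro _ ⟨f, -, rfl⟩
      exact f.2
    · obtain ⟨f, hft, hf⟩ := Set.mem_iUnion₂.1 (ht (subset_closure he))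
      exact ⟨e * (f : Bˣ)⁻¹, hL _ (mul_mem he (inv_mem f.2)) hf, f, ⟨f, hft, rfl⟩, by simp⟩

end Components

/-! ### Cocompactness and components of the hull of a triangular group -/

section Hull
variable {B : Type*} [NormedRing B] [NormedAlgebra ℝ B] [FiniteDimensional ℝ B] [CompleteSpace B]

lemma CommMod.mul_mul_mul_comm {G : Type*} [Group G] {Q N : Subgroup G} (h : CommMod Q N)
    {a b c d : G} (ha : a ∈ Q) (hb : b ∈ Q) (hc : c ∈ Q) :
    a * b * (c * d) * (a * c * (b * d))⁻¹ ∈ N := by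
  convert h.conj ha (h.comm b hb c hc) using 1
  group

namespace TriGroup
variable {S : Subalgebra ℝ B} {J : Submodule ℝ B} {K : ℕ} {Γ : Subgroup Bˣ}

/-- The group generated by the elliptic parts of the elements of `M` lying in `D`. -/
def E (h : TriGroup S J K Γ) (D : Subalgebra ℝ B) : Subgroup Bˣ :=
  Subgroup.closure {u | ∃ δ ∈ h.M, (δ : B) ∈ D ∧ u = ell δ}

/-- The logarithms of the hyperbolic parts of the elements of `M` lying in `D`. -/
def X (h : TriGroup S J K Γ) (D : Subalgebra ℝ B) : Set B :=
  {a | ∃ δ ∈ h.M, (δ : B) ∈ D ∧ a = hyp δ}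

variable {D : Subalgebra ℝ B} {h : TriGroup S J K Γ}

lemma Red.E_le (hD : h.Red D) : h.E D ≤ h.Q D := by
  refine (Subgroup.closure_le _).2 ?_
  rintro _ ⟨δ, hδ, hδD, rfl⟩
  exact hD.ell_mem_Q' hδ hδD

lemma Red.E_mem (_ : h.Red D) {e : Bˣ} (he : e ∈ h.E D) : (e : B) ∈ D := by
  unfold E at he
  induction he using Subgroup.closure_induction with
  | mem x hx =>
    obtain ⟨δ, -, hδD, rfl⟩ := hx
    exact ell_mem hδD
  | one => exact D.one_mem
  | mul x y _ _ hx hy => exact D.mul_mem hx hy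
  | inv x _ hx => exact inv_mem_subalgebra D hx

lemma Red.E_commute (hD : h.Red D) {e y : Bˣ} (he : e ∈ h.E D) (hy : (y : B) ∈ D) :
    Commute e y := by
  unfold E at he
  induction he using Subgroup.closure_induction with
  | mem x hx =>
    obtain ⟨δ, hδ, hδD, rfl⟩ := hx
    exact Units.ext (hD.central δ hδ hδD y hy).eq
  | one => exact Commute.one_left _
  | mul x z _ _ hx hz => exact hx.mul_left hz
  | inv x _ hx => exact hx.inv_left

lemma Red.X_lie (hD : h.Red D) : h.X D ⊆ hD.commMod.lie h.isClosed_N := by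
  rintro _ ⟨δ, hδ, hδD, rfl⟩ t
  exact hD.hyp_mem_Q' hδ hδD t

lemma Red.span_lie (hD : h.Red D) {d : B} (hd : d ∈ Submodule.span ℝ (h.X D)) :
    d ∈ hD.commMod.lie h.isClosed_N := Submodule.span_le.2 hD.X_lie hd

lemma Red.expU_mem_Q (hD : h.Red D) {d : B} (hd : d ∈ Submodule.span ℝ (h.X D)) :
    expU d ∈ h.Q D := hD.commMod.expU_mem h.isClosed_N (hD.span_lie hd)

lemma Red.expU_mem_D (_ : h.Red D) {d : B} (hd : d ∈ Submodule.span ℝ (h.X D)) :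
    (expU d : B) ∈ D := by
  have : Submodule.span ℝ (h.X D) ≤ Subalgebra.toSubmodule D := by
    refine Submodule.span_le.2 ?_
    rintro _ ⟨δ, -, hδD, rfl⟩
    exact hyp_mem hδD
  simpa using expU_mem D (this hd) 1

/-- Modulo `N`, the hull is the product of the vector group `exp (span X)` and `E`. -/
lemma Red.exists_expU_mul (hD : h.Red D) {u : Bˣ} (hu : u ∈ h.Q D) :
    ∃ d ∈ Submodule.span ℝ (h.X D), ∃ e ∈ h.E D, u * (expU d * e)⁻¹ ∈ h.N := by
  have hQ := hD.commMod
  unfold Q at hu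
  induction hu using Subgroup.closure_induction with
  | mem x hx =>
    rcases hx with hx | ⟨δ, hδ, hδD, rfl | ⟨t, rfl⟩⟩
    · exact ⟨0, zero_mem _, 1, one_mem _, by simpa [expU_zero] using hx⟩
    · exact ⟨0, zero_mem _, _, Subgroup.subset_closure ⟨δ, hδ, hδD, rfl⟩, by simp [expU_zero]⟩
    · exact ⟨t • hyp δ, Submodule.smul_mem _ _ (Submodule.subset_span ⟨δ, hδ, hδD, rfl⟩), 1,
        one_mem _, by simp⟩
  | one => exact ⟨0, zero_mem _, 1, one_mem _, by simp [expU_zero]⟩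
  | mul x y _ _ hx hy =>
    obtain ⟨d, hd, e, he, h1⟩ := hx
    obtain ⟨d', hd', e', he', h2⟩ := hy
    refine ⟨d + d', add_mem hd hd', e * e', mul_mem he he', ?_⟩
    refine hQ.trans (hQ.mul (mul_mem (hD.expU_mem_Q hd) (hD.E_le he)) h1 h2) ?_
    refine hQ.trans (hQ.mul_mul_mul_comm (hD.expU_mem_Q hd) (hD.E_le he) (hD.expU_mem_Q hd')) ?_
    exact hQ.mul (hD.expU_mem_Q (add_mem hd hd'))
      (hQ.symm (hQ.expU_add h.isClosed_N (hD.span_lie hd) (hD.span_lie hd'))) (by simp)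
  | inv x _ hx =>
    obtain ⟨d, hd, e, he, h1⟩ := hx
    refine ⟨-d, neg_mem hd, e⁻¹, inv_mem he, ?_⟩
    have := hQ.inv (mul_mem (hD.expU_mem_Q hd) (hD.E_le he)) h1
    rwa [(hD.E_commute he (hD.expU_mem_D hd)).symm.eq, mul_inv_rev e, ← expU_neg] at this

/-- The group generated by the hyperbolic parts lies in `E * M`. -/
lemma Red.exists_ell_mul (hD : h.Red D) {l : Bˣ} (hl : l ∈ Subgroup.closure (expU '' h.X D)) :
    ∃ e ∈ h.E D, ∃ m ∈ h.M, (m : B) ∈ D ∧ l = e * m := by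
  induction hl using Subgroup.closure_induction with
  | mem x hx =>
    obtain ⟨_, ⟨δ, hδ, hδD, rfl⟩, rfl⟩ := hx
    exact ⟨(ell δ)⁻¹, inv_mem (Subgroup.subset_closure ⟨δ, hδ, hδD, rfl⟩), δ, hδ, hδD, expU_hyp δ⟩
  | one => exact ⟨1, one_mem _, 1, one_mem _, D.one_mem, by simp⟩
  | mul x y _ _ hx hy =>
    obtain ⟨e, he, m, hm, hmD, rfl⟩ := hx
    obtain ⟨e', he', m', hm', hmD', rfl⟩ := hy
    exact ⟨e * e', mul_mem he he', m * m', mul_mem hm hm', D.mul_mem hmD hmD',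
      (hD.E_commute he' hmD).symm.mul_mul_mul_comm e m'⟩
  | inv x _ hx =>
    obtain ⟨e, he, m, hm, hmD, rfl⟩ := hx
    exact ⟨e⁻¹, inv_mem he, m⁻¹, inv_mem hm, inv_mem_subalgebra D hmD,
      by rw [(hD.E_commute he hmD).eq, mul_inv_rev]⟩

/-- Modulo `N`, the group `E` lies in `exp (span X) * M`. -/
lemma Red.exists_expU_mul_M (hD : h.Red D) {e : Bˣ} (he : e ∈ h.E D) :
    ∃ d ∈ Submodule.span ℝ (h.X D), ∃ m ∈ h.M, e * (expU d * m)⁻¹ ∈ h.N := by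
  have hQ := hD.commMod
  unfold E at he
  induction he using Subgroup.closure_induction with
  | mem x hx =>
    obtain ⟨δ, hδ, hδD, rfl⟩ := hx
    have hd : hyp δ ∈ Submodule.span ℝ (h.X D) := Submodule.subset_span ⟨δ, hδ, hδD, rfl⟩
    refine ⟨-hyp δ, neg_mem hd, δ, hδ, ?_⟩
    have : expU (-hyp δ) * δ = ell δ := by
      have hc : Commute (ell δ) (expU (hyp δ)) := Units.ext (ell_commute_hyp δ).exp_right.eq
      rw [expU_neg, inv_mul_eq_iff_eq_mul, ← hc.eq, ← eq_ell_mul]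
    rw [this]; simp
  | one => exact ⟨0, zero_mem _, 1, one_mem _, by simp [expU_zero]⟩
  | mul x y _ _ hx hy =>
    obtain ⟨d, hd, m, hm, h1⟩ := hx
    obtain ⟨d', hd', m', hm', h2⟩ := hy
    refine ⟨d + d', add_mem hd hd', m * m', mul_mem hm hm', ?_⟩
    refine hQ.trans (hQ.mul (mul_mem (hD.expU_mem_Q hd) (hD.M_le hm)) h1 h2) ?_
    refine hQ.trans (hQ.mul_mul_mul_comm (hD.expU_mem_Q hd) (hD.M_le hm) (hD.expU_mem_Q hd')) ?_
    exact hQ.mul (hD.expU_mem_Q (add_mem hd hd'))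
      (hQ.symm (hQ.expU_add h.isClosed_N (hD.span_lie hd) (hD.span_lie hd'))) (by simp)
  | inv x _ hx =>
    obtain ⟨d, hd, m, hm, h1⟩ := hx
    refine ⟨-d, neg_mem hd, m⁻¹, inv_mem hm, ?_⟩
    have h2 := hQ.inv (mul_mem (hD.expU_mem_Q hd) (hD.M_le hm)) h1
    rw [mul_inv_rev, ← expU_neg] at h2
    exact hQ.trans h2 (hQ.mul_comm (inv_mem (hD.M_le hm)) (hD.expU_mem_Q (neg_mem hd)))

lemma Red.isCompact_closure_E (hD : h.Red D) : IsCompact (closure (h.E D : Set Bˣ)) := by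
  obtain ⟨C, hC⟩ : ∃ C : ℝ, ∀ e ∈ h.E D, ‖(e : B)‖ ≤ C := by
    refine exists_bound (fun x hx y hy => ?_) ?_ ?_
    · exact hD.E_commute (Subgroup.subset_closure hx) (hD.E_mem (Subgroup.subset_closure hy))
    · rintro _ ⟨δ, -, -, rfl⟩; exact semis_ell δ
    · rintro _ ⟨δ, -, -, rfl⟩; exact elliptic_ell δ
  exact isCompact_closure_of_bounded hC

/-- `Γ` is cocompact in its hull. -/
lemma Red.exists_compact (hD : h.Red D) : ∃ C : Set Bˣ, IsCompact C ∧
    ∀ u ∈ h.Q D, ∃ c ∈ C, ∃ γ ∈ Γ, u = c * γ := by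
  have hQ := hD.commMod
  obtain ⟨C₁, hC₁Q, hC₁, hspan⟩ := hQ.exists_compact h.isClosed_N hD.X_lie
  obtain ⟨C₂, -, hC₂, huni⟩ := exists_compact_zarHull h.ideal.mul_le h.ideal.pow h.uni inf_le_right
  refine ⟨(fun p : (Bˣ × Bˣ) × Bˣ => p.1.1 * p.1.2 * p.2) '' ((C₁ ×ˢ closure (h.E D : Set Bˣ)) ×ˢ C₂),
    ((hC₁.prod hD.isCompact_closure_E).prod hC₂).image (by fun_prop), fun u hu => ?_⟩
  obtain ⟨d, hd, e, he, h1⟩ := hD.exists_expU_mul hu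
  obtain ⟨c, hc, l, hl, hlQ, h2⟩ := hspan d hd
  obtain ⟨e', he', m, hm, hmD, rfl⟩ := hD.exists_ell_mul hl
  obtain ⟨n, hn, hγ⟩ := h.exists_M hm
  have hcQ : c ∈ h.Q D := hC₁Q hc
  have hce : c * (e' * e) ∈ h.Q D := mul_mem hcQ (hD.E_le (mul_mem he' he))
  have h3 : u * (c * (e' * e) * m)⁻¹ ∈ h.N := by
    have h4 := hQ.trans h1 (hQ.mul (mul_mem hcQ hlQ) h2 (show e * e⁻¹ ∈ h.N by simp))
    have e1 : c * (e' * m) * e = c * (e' * e) * m := by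
      rw [mul_assoc c, mul_assoc e', ← (hD.E_commute he hmD).eq]; simp only [mul_assoc]
    rwa [e1] at h4
  have h5 : (c * (e' * e))⁻¹ * (u * (c * (e' * e) * m)⁻¹) * (c * (e' * e))⁻¹⁻¹ * n⁻¹ ∈ h.N :=
    h.N.mul_mem (hQ.conj (inv_mem hce) h3) (inv_mem hn)
  obtain ⟨c', hc', l, hl', h6⟩ := huni _ h5
  refine ⟨_, ⟨((c, e' * e), c'), ⟨⟨hc, subset_closure (mul_mem he' he)⟩, hc'⟩, rfl⟩, l * (n * m),
    mul_mem hl'.1 hγ, ?_⟩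
  have h7 : c' = (c * (e' * e))⁻¹ * (u * (c * (e' * e) * m)⁻¹) * (c * (e' * e))⁻¹⁻¹ * n⁻¹ * l⁻¹ := by
    rw [h6]; group
  change u = c * (e' * e) * c' * (l * (n * m))
  rw [h7]
  group

/-- The set `N * exp (span X)`, presented as the image of a product of vector spaces, which makes
it connected. Each of its translates by an element of `E` meets `Γ`. -/
def R (h : TriGroup S J K Γ) (D : Subalgebra ℝ B) : Set Bˣ :=
  (fun p : B × B => expU p.1 * expU p.2) ''
    ((zarLie h.uni : Set B) ×ˢ (Submodule.span ℝ (h.X D) : Set B))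

lemma isPreconnected_R : IsPreconnected (h.R D) :=
  (((zarLie h.uni).convex (𝕜 := ℝ)).isPreconnected.prod
    ((Submodule.span ℝ (h.X D)).convex (𝕜 := ℝ)).isPreconnected).image _
    ((continuous_expU.comp continuous_fst).mul (continuous_expU.comp continuous_snd)).continuousOn

lemma mul_mem_R {n : Bˣ} (hn : n ∈ h.N) {d : B} (hd : d ∈ Submodule.span ℝ (h.X D)) :
    n * expU d ∈ h.R D := by
  obtain ⟨a, ha, rfl⟩ := h.ideal.nilSub.exists_zarLie h.uni_sub hn
  exact ⟨(a, d), ⟨ha, hd⟩, rfl⟩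

lemma Red.R_le (hD : h.Red D) {r : Bˣ} (hr : r ∈ h.R D) : r ∈ h.Q D := by
  obtain ⟨⟨a, d⟩, ⟨ha, hd⟩, rfl⟩ := hr
  exact mul_mem (hD.commMod.le (expU_mem_of_zarLie ha)) (hD.expU_mem_Q hd)

lemma Red.exists_R_mul (hD : h.Red D) {u : Bˣ} (hu : u ∈ h.Q D) :
    ∃ r ∈ h.R D, ∃ e ∈ h.E D, u = r * e := by
  obtain ⟨d, hd, e, he, h1⟩ := hD.exists_expU_mul hu
  exact ⟨_, mul_mem_R h1 hd, e, he, by group⟩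

lemma Red.exists_R_mul_mem (hD : h.Red D) {e : Bˣ} (he : e ∈ h.E D) :
    ∃ r ∈ h.R D, r * e ∈ Γ := by
  obtain ⟨d, hd, m, hm, h1⟩ := hD.exists_expU_mul_M he
  obtain ⟨n, hn, hγ⟩ := h.exists_M hm
  have hQ := hD.commMod
  refine ⟨_, mul_mem_R (n := n * ((expU d)⁻¹ * (e * (expU d * m)⁻¹)⁻¹ * (expU d)⁻¹⁻¹))
    (h.N.mul_mem hn (hQ.conj (inv_mem (hD.expU_mem_Q hd)) (inv_mem h1))) (neg_mem hd), ?_⟩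
  convert hγ using 1
  rw [expU_neg]
  group

/-- The hull is covered by finitely many connected subsets of its closure, each of which meets
`Γ`. -/
lemma Red.exists_components (hD : h.Red D) : ∃ 𝒞 : Set (Set Bˣ), 𝒞.Finite ∧
    (∀ P ∈ 𝒞, IsPreconnected P ∧ P ⊆ (h.Q D).topologicalClosure ∧ (P ∩ Γ).Nonempty) ∧
    (h.Q D : Set Bˣ) ⊆ ⋃₀ 𝒞 := by
  have hc : ∀ x ∈ (h.E D : Set Bˣ), ∀ y ∈ (h.E D : Set Bˣ), Commute x y :=
    fun x hx y hy => hD.E_commute hx (hD.E_mem hy)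
  obtain ⟨L, hL, hLc, h1, F, hF, hFE, hcov⟩ := SyndeticHull.exists_components
    (A := Algebra.adjoin ℝ (Units.val '' (h.E D : Set Bˣ)))
    (fun a ha b hb => adjoin_commute hc ha hb) (fun e he => Algebra.subset_adjoin ⟨e, he, rfl⟩)
    hD.isCompact_closure_E
  refine ⟨(fun f => (fun p : Bˣ × Bˣ => p.1 * p.2 * f) '' (h.R D ×ˢ L)) '' F, hF.image _, ?_, ?_⟩
  · rintro _ ⟨f, hf, rfl⟩
    refine ⟨(isPreconnected_R.prod hLc).image _ (by fun_prop), ?_, ?_⟩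
    · rintro _ ⟨⟨r, l⟩, ⟨hr, hl⟩, rfl⟩
      have hle := (h.Q D).le_topologicalClosure
      exact mul_mem (mul_mem (hle (hD.R_le hr)) (closure_mono hD.E_le (hL hl)))
        (hle (hD.E_le (hFE hf)))
    · obtain ⟨r, hr, hrf⟩ := hD.exists_R_mul_mem (hFE hf)
      exact ⟨r * 1 * f, ⟨(r, 1), ⟨hr, h1⟩, rfl⟩, by simpa using hrf⟩
  · intro u hu
    obtain ⟨r, hr, e, he, rfl⟩ := hD.exists_R_mul hu
    obtain ⟨l, hl, f, hf, rfl⟩ := hcov e he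
    exact ⟨_, ⟨f, hf, rfl⟩, (r, l), ⟨hr, hl⟩, mul_assoc _ _ _⟩

end TriGroup
end Hull

/-! ### Solvability of the ambient group -/

section Solv

lemma isSolvable_of_commutator {G : Type*} [Group G] {P R : Subgroup G} [Group.IsSolvable R]
    (h : ∀ x ∈ P, ∀ y ∈ P, x * y * x⁻¹ * y⁻¹ ∈ R) : Group.IsSolvable P := by
  have hle : (commutator P).map P.subtype ≤ R := by
    rw [Subgroup.map_le_iff_le_comap, commutator_def, Subgroup.commutator_le]
    intro x _ y _
    exact h x x.2 y y.2
  let f : commutator P →* R :=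
    (P.subtype.comp (commutator P).subtype).codRestrict R fun x => hle ⟨x, x.2, rfl⟩
  have : Group.IsSolvable (commutator P) := Group.isSolvable_of_isSolvable_injective (f := f) fun x y hxy =>
    Subtype.ext (Subtype.ext (congrArg (fun r : R => (r : G)) hxy))
  refine Group.isSolvable_of_ker_le_range (commutator P).subtype (Abelianization.of (G := P)) ?_
  rw [Subgroup.range_subtype, Abelianization.ker_of]

variable {B : Type*} [NormedRing B] [NormedAlgebra ℝ B] [FiniteDimensional ℝ B] [CompleteSpace B]

lemma isSolvable_oneAdd {J : Submodule ℝ B} {K : ℕ} (hJ : J * J ≤ J) (hK : J ^ K = ⊥) :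
    Group.IsSolvable (oneAdd J hJ) := by
  have key : ∀ j k (hk : 1 ≤ k), K ≤ k + j →
      Group.IsSolvable (oneAdd (J ^ k) (pow_mul_pow_le hJ hk)) := by
    intro j
    induction j with
    | zero =>
      intro k hk hKk
      have h0 : J ^ k = ⊥ := by
        obtain ⟨l, rfl⟩ := Nat.exists_eq_add_of_le (show K ≤ k from hKk)
        rw [pow_add, hK, Submodule.bot_mul]
      have : Subsingleton (oneAdd (J ^ k) (pow_mul_pow_le hJ hk)) := by
        refine ⟨fun x y => Subtype.ext (Units.ext ?_)⟩
        have h1 : ∀ z : oneAdd (J ^ k) (pow_mul_pow_le hJ hk), ((z : Bˣ) : B) = 1 := fun z =>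
          sub_eq_zero.1 ((Submodule.mem_bot ℝ).1 (h0.le z.2.1))
        rw [h1, h1]
      infer_instance
    | succ j ih =>
      intro k hk hKk
      have := ih (k + 1) (by omega) (by omega)
      exact isSolvable_of_commutator fun x hx y hy => commutator_mem_oneAdd hJ hk hx hy
  have h1 := key K 1 le_rfl (by omega)
  have e : oneAdd (J ^ 1) (pow_mul_pow_le hJ le_rfl) = oneAdd J hJ := by
    ext u
    change ((u : B) - 1 ∈ J ^ 1 ∧ (↑u⁻¹ : B) - 1 ∈ J ^ 1) ↔ ((u : B) - 1 ∈ J ∧ (↑u⁻¹ : B) - 1 ∈ J)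
    rw [pow_one]
  rwa [e] at h1

/-- The group of units of the subalgebra `S`. -/
def unitsOf (S : Subalgebra ℝ B) : Subgroup Bˣ where
  carrier := {u | (u : B) ∈ S}
  one_mem' := S.one_mem
  mul_mem' hx hy := S.mul_mem hx hy
  inv_mem' hx := inv_mem_subalgebra S hx

lemma isClosed_unitsOf (S : Subalgebra ℝ B) : IsClosed (unitsOf S : Set Bˣ) :=
  (isClosed_subalgebra S).preimage Units.continuous_val

lemma TriGroup.isSolvable_unitsOf {S : Subalgebra ℝ B} {J : Submodule ℝ B} {K : ℕ} {Γ : Subgroup Bˣ}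
    (h : TriGroup S J K Γ) : Group.IsSolvable (unitsOf S) := by
  have := isSolvable_oneAdd h.ideal.mul_le h.ideal.pow
  exact isSolvable_of_commutator fun x hx y hy => h.commutator_mem hx hy

end Solv

/-! ### Extension by a finite group and closure -/

section Assembly
variable {X : Type*} [Group X] [TopologicalSpace X] [IsTopologicalGroup X] [LocallyCompactSpace X]

/-- A subgroup `Γ` of finite index in `G` with a cocompact overgroup `Q` normalised by `G` yields
the closed overgroup `closure (Q G)` of `G`. -/
lemma exists_hull {Γ G Q R : Subgroup X} (hΓG : Γ ≤ G) (hΓQ : Γ ≤ Q)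
    (hT : ∃ T : Set X, T.Finite ∧ T ⊆ G ∧ ∀ g ∈ G, ∃ γ ∈ Γ, ∃ t ∈ T, g = γ * t)
    (hQ : ∀ g ∈ G, ∀ x ∈ Q, g * x * g⁻¹ ∈ Q)
    (hC : ∃ C : Set X, IsCompact C ∧ ∀ u ∈ Q, ∃ c ∈ C, ∃ γ ∈ Γ, u = c * γ)
    (h𝒞 : ∃ 𝒞 : Set (Set X), 𝒞.Finite ∧
      (∀ P ∈ 𝒞, IsPreconnected P ∧ P ⊆ Q.topologicalClosure ∧ (P ∩ Γ).Nonempty) ∧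
      (Q : Set X) ⊆ ⋃₀ 𝒞)
    (hR : IsClosed (R : Set X)) (hQR : Q ≤ R) [Group.IsSolvable R] :
    ∃ H : Subgroup X,
      G ≤ H ∧
      IsClosed (H : Set X) ∧
      (∃ H' : Subgroup ↥H, H'.FiniteIndex ∧ Group.IsSolvable ↥H') ∧
      Finite (ConnectedComponents ↥H) ∧
      (∀ x : ↥H, ∃ y : ↥H, y ∈ connectedComponent x ∧ (y : X) ∈ G) ∧
      (∃ K : Set X, K ⊆ (H : Set X) ∧ IsCompact K ∧ ∀ h ∈ H, ∃ k ∈ K, ∃ g ∈ G, h = k * g) := by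
  obtain ⟨T, hTfin, hTG, hT⟩ := hT
  obtain ⟨C, hC, hCΓ⟩ := hC
  obtain ⟨𝒞, h𝒞fin, h𝒞, hcov⟩ := h𝒞
  let H₁ := Subgroup.closure (Q ∪ G : Set X)
  have hQ₁ : Q ≤ H₁ := fun x hx => Subgroup.subset_closure (Or.inl hx)
  have hG₁ : G ≤ H₁ := fun x hx => Subgroup.subset_closure (Or.inr hx)
  have hnorm : H₁ ≤ Subgroup.normalizer (Q : Set X) := by
    refine (Subgroup.closure_le _).2 ?_
    rintro x (hx | hx)
    · exact Subgroup.le_normalizer hx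
    · exact mem_normalizer_of (hQ x hx) (hQ _ (inv_mem hx))
  have hmul : ∀ x ∈ H₁, ∃ q ∈ Q, ∃ t ∈ T, x = q * t := by
    intro x hx
    obtain ⟨n, hn, hg⟩ := exists_mul_mem (N := Q) (T := G) (R := G) le_rfl
      (fun x hx n hn => (Subgroup.mem_normalizer_iff.1 (hnorm hx) n).1 hn) hx
    obtain ⟨γ, hγ, t, ht, e⟩ := hT _ hg
    exact ⟨n⁻¹ * γ, mul_mem (inv_mem hn) (hΓQ hγ), t, ht, by rw [mul_assoc, ← e]; simp⟩
  let H := H₁.topologicalClosure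
  have hH₁ : H₁ ≤ H := H₁.le_topologicalClosure
  have hH : IsClosed (H : Set X) := H₁.isClosed_topologicalClosure
  have hGH : G ≤ H := hG₁.trans hH₁
  have hQH : Q.topologicalClosure ≤ H := closure_mono hQ₁
  -- `R * T` is closed and contains `Q * G`, hence it contains `H`
  have hHQ : ∀ x ∈ H, ∃ t ∈ T, x * t⁻¹ ∈ R := by
    have hcl : IsClosed (⋃ t ∈ T, (fun x => x * t⁻¹) ⁻¹' (R : Set X)) :=
      hTfin.isClosed_biUnion fun t _ => hR.preimage (continuous_mul_const _)
    have hsub : (H₁ : Set X) ⊆ ⋃ t ∈ T, (fun x => x * t⁻¹) ⁻¹' (R : Set X) := by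
      intro x hx
      obtain ⟨q, hq, t, ht, rfl⟩ := hmul x hx
      exact Set.mem_biUnion ht (by simpa using hQR hq)
    intro x hx
    simpa using closure_minimal hsub hcl hx
  -- a finite cover of `H` by connected sets meeting `G`
  let 𝒲 : Set (Set X) := (fun p : Set X × X => closure ((fun x => x * p.2) '' p.1)) '' (𝒞 ×ˢ T)
  have h𝒲fin : 𝒲.Finite := (h𝒞fin.prod hTfin).image _
  have h𝒲 : ∀ W ∈ 𝒲, IsPreconnected W ∧ W ⊆ H ∧ (W ∩ G).Nonempty := by
    rintro _ ⟨⟨P, t⟩, ⟨hP, ht⟩, rfl⟩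
    obtain ⟨h1, h2, γ, hγP, hγ⟩ := h𝒞 P hP
    refine ⟨(h1.image _ (continuous_mul_const _).continuousOn).closure, ?_, γ * t,
      subset_closure ⟨γ, hγP, rfl⟩, mul_mem (hΓG hγ) (hTG ht)⟩
    refine closure_minimal ?_ hH
    rintro _ ⟨x, hx, rfl⟩
    exact mul_mem (hQH (h2 hx)) (hGH (hTG ht))
  have h𝒲cov : ∀ x ∈ H, ∃ W ∈ 𝒲, x ∈ W := by
    have hcl : IsClosed (⋃₀ 𝒲) := by
      rw [Set.sUnion_eq_biUnion]
      refine h𝒲fin.isClosed_biUnion ?_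
      rintro _ ⟨p, -, rfl⟩
      exact isClosed_closure
    have hsub : (H₁ : Set X) ⊆ ⋃₀ 𝒲 := by
      intro x hx
      obtain ⟨q, hq, t, ht, rfl⟩ := hmul x hx
      obtain ⟨P, hP, hqP⟩ := hcov hq
      exact ⟨_, ⟨(P, t), ⟨hP, ht⟩, rfl⟩, subset_closure ⟨q, hqP, rfl⟩⟩
    exact fun x hx => closure_minimal hsub hcl hx
  have hconn : ∀ W ∈ 𝒲, ∀ x y : H, (x : X) ∈ W → (y : X) ∈ W → y ∈ connectedComponent x := by
    intro W hW x y hx hy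
    have h1 : IsPreconnected (Subtype.val ⁻¹' W : Set H) := by
      refine Topology.IsInducing.subtypeVal.isPreconnected_image.1 ?_
      have e : (Subtype.val '' (Subtype.val ⁻¹' W : Set H) : Set X) = W :=
        Set.image_preimage_eq_of_subset (by
          rw [Subtype.range_coe]; exact (h𝒲 W hW).2.1)
      exact (congrArg IsPreconnected e).mpr (h𝒲 W hW).1
    exact h1.subset_connectedComponent hx hy
  choose! p hp using fun W hW => (h𝒲 W hW).2.2
  refine ⟨H, hGH, hH, ⟨R.subgroupOf H, ?_, ?_⟩, ?_, ?_, ?_⟩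
  · choose! τ hτ hτR using hHQ
    refine finiteIndex_of_fun _ (fun x : H => τ (x⁻¹ : X)) (hTfin.subset ?_) fun x y hxy => ?_
    · rintro _ ⟨x, rfl⟩
      exact hτ _ (inv_mem x.2)
    · have h1 := mul_mem (hτR _ (inv_mem x.2)) (inv_mem (hτR _ (inv_mem y.2)))
      rw [Subgroup.mem_subgroupOf]
      convert h1 using 1
      rw [show τ (x⁻¹ : X) = τ (y⁻¹ : X) from hxy]
      simp
  · let f : R.subgroupOf H →* R :=
      (H.subtype.comp (R.subgroupOf H).subtype).codRestrict R fun x => x.2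
    exact Group.isSolvable_of_isSolvable_injective (f := f) fun x y hxy =>
      Subtype.ext (Subtype.ext (congrArg (fun r : R => (r : X)) hxy))
  · have : Finite 𝒲 := h𝒲fin
    refine Finite.of_surjective
      (fun W : 𝒲 => ((⟨p W, hGH (hp W W.2).2⟩ : H) : ConnectedComponents H)) fun c => ?_
    obtain ⟨x, rfl⟩ := ConnectedComponents.surjective_coe c
    obtain ⟨W, hW, hx⟩ := h𝒲cov x x.2
    exact ⟨⟨W, hW⟩, ConnectedComponents.coe_eq_coe'.2 (hconn W hW x _ hx (hp W hW).1)⟩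
  · intro x
    obtain ⟨W, hW, hx⟩ := h𝒲cov x x.2
    exact ⟨⟨p W, hGH (hp W hW).2⟩, hconn W hW x _ hx (hp W hW).1, (hp W hW).2⟩
  · obtain ⟨V, hV, hV1⟩ := exists_compact_mem_nhds (1 : X)
    refine ⟨((fun p : X × X => p.1 * p.2) '' (V ×ˢ C)) ∩ H, Set.inter_subset_right,
      ((hV.prod hC).image continuous_mul).inter_right hH, fun x hx => ?_⟩
    have hnear : (fun y => x * y⁻¹) ⁻¹' V ∈ 𝓝 x := by
      refine (continuous_const.mul continuous_inv).continuousAt.preimage_mem_nhds ?_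
      simpa using hV1
    obtain ⟨y, hyV, hy⟩ := mem_closure_iff_nhds.1 hx _ hnear
    obtain ⟨q, hq, t, ht, rfl⟩ := hmul y hy
    obtain ⟨c, hc, γ, hγ, rfl⟩ := hCΓ q hq
    have hg : γ * t ∈ G := mul_mem (hΓG hγ) (hTG ht)
    have e : x = x * (c * γ * t)⁻¹ * c * (γ * t) := by group
    refine ⟨_, ⟨⟨(x * (c * γ * t)⁻¹, c), ⟨hyV, hc⟩, rfl⟩, ?_⟩, γ * t, hg, e⟩
    have : x * (c * γ * t)⁻¹ * c = x * (γ * t)⁻¹ := by group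
    change x * (c * γ * t)⁻¹ * c ∈ H
    rw [this]
    exact mul_mem hx (inv_mem (hGH hg))

/-- A subgroup of finite index contains one that is normal. -/
lemma exists_normal_finite {G K : Subgroup X} (hK : K.relIndex G ≠ 0) : ∃ Γ ≤ K, Γ ≤ G ∧
    (∀ g ∈ G, ∀ γ ∈ Γ, g * γ * g⁻¹ ∈ Γ) ∧
    ∃ T : Set X, T.Finite ∧ T ⊆ G ∧ ∀ g ∈ G, ∃ γ ∈ Γ, ∃ t ∈ T, g = γ * t := by
  have : (K.subgroupOf G).FiniteIndex := ⟨hK⟩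
  let N := (K.subgroupOf G).normalCore
  have : Finite (G ⧸ N) := inferInstance
  refine ⟨N.map G.subtype, ?_, ?_, ?_, Set.range fun q : G ⧸ N => ((q.out⁻¹ : G) : X),
    Set.finite_range _, ?_, fun g hg => ?_⟩
  · rintro _ ⟨x, hx, rfl⟩
    exact Subgroup.normalCore_le (K.subgroupOf G) hx
  · rintro _ ⟨x, hx, rfl⟩
    exact x.2
  · rintro g hg _ ⟨x, hx, rfl⟩
    exact ⟨⟨g, hg⟩ * x * ⟨g, hg⟩⁻¹, (Subgroup.normalCore_normal _).conj_mem x hx _, rfl⟩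
  · rintro _ ⟨q, rfl⟩
    exact (q.out⁻¹).2
  · let q : G ⧸ N := ((⟨g, hg⟩⁻¹ : G) : G ⧸ N)
    have h1 : (⟨g, hg⟩⁻¹ : G)⁻¹ * q.out ∈ N := QuotientGroup.eq.1 (QuotientGroup.out_eq' q).symm
    refine ⟨_, ⟨_, h1, rfl⟩, _, ⟨q, rfl⟩, ?_⟩
    simp

end Assembly

section Final
variable {V : Type*} [NormedAddCommGroup V] [NormedSpace ℝ V] [FiniteDimensional ℝ V]

/-- A virtually solvable linear group has a normal subgroup of finite index which is
triangular. -/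
lemma exists_triGroup (G : Subgroup (V →L[ℝ] V)ˣ)
    (hG : ∃ G' : Subgroup ↥G, G'.FiniteIndex ∧ Group.IsSolvable ↥G') :
    ∃ Γ ≤ G, (∃ S J n, ∃ h : TriGroup S J n Γ, ∀ g ∈ G, h.Norm g) ∧
      ∃ T : Set (V →L[ℝ] V)ˣ, T.Finite ∧ T ⊆ G ∧ ∀ g ∈ G, ∃ γ ∈ Γ, ∃ t ∈ T, g = γ * t := by
  obtain ⟨G', hG', hsolv⟩ := hG
  let G₀ := G'.map G.subtype
  have hG₀ : Group.IsSolvable G₀ := Group.isSolvable_of_surjective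
    (f := G.subtype.subgroupMap G') (G.subtype.subgroupMap_surjective G')
  have h1 : G₀.relIndex G ≠ 0 := by
    have : G₀.subgroupOf G = G' :=
      Subgroup.comap_map_eq_self_of_injective G.subtype_injective G'
    rw [Subgroup.relIndex, this]
    exact hG'.index_ne_zero
  obtain ⟨K, hKG, hK, n, hn⟩ := exists_commIdeal_pow G₀
  obtain ⟨Γ, hΓK, hΓG, hnorm, hT⟩ := exists_normal_finite (Subgroup.relIndex_ne_zero_trans hK h1)
  obtain ⟨i1, i2, i3⟩ := commIdeal_nilIdeal_aux Γ
  refine ⟨Γ, hΓG, ⟨alg Γ, commIdeal Γ, n, ⟨⟨i1, i2, i3, ?_⟩, fun γ hγ => mem_alg hγ,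
    fun a ha b hb => commutator_mem_commIdeal ha hb⟩, fun g hg =>
      ⟨hnorm g hg, conj_mem_commIdeal (hnorm g hg)⟩⟩, hT⟩
  rw [eq_bot_iff, ← hn]
  exact pow_le_pow_left' (commIdeal_mono hΓK) n

end Final

end SyndeticHull

/-- Syndetic hull (Fried–Goldman / Witte Morris): every virtually solvable subgroup `G` of
`GL(V)`, `V` a finite-dimensional real vector space, is contained in a closed virtually
solvable subgroup `H` with finitely many connected components, each of which meets `G`,
such that `H = K·G` for some compact `K ⊆ H`. -/
theorem exists_syndetic_hull
    {V : Type*} [NormedAddCommGroup V] [NormedSpace ℝ V] [FiniteDimensional ℝ V]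
    (G : Subgroup (V →L[ℝ] V)ˣ)
    (hGsolv : ∃ G' : Subgroup ↥G, G'.FiniteIndex ∧ IsSolvable ↥G') :
    ∃ H : Subgroup (V →L[ℝ] V)ˣ,
      G ≤ H ∧
      IsClosed (H : Set (V →L[ℝ] V)ˣ) ∧
      (∃ H' : Subgroup ↥H, H'.FiniteIndex ∧ IsSolvable ↥H') ∧
      Finite (ConnectedComponents ↥H) ∧
      (∀ x : ↥H, ∃ y : ↥H, y ∈ connectedComponent x ∧ (y : (V →L[ℝ] V)ˣ) ∈ G) ∧
      (∃ K : Set (V →L[ℝ] V)ˣ, K ⊆ (H : Set (V →L[ℝ] V)ˣ) ∧ IsCompact K ∧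
        ∀ h ∈ H, ∃ k ∈ K, ∃ g ∈ G, h = k * g) := by
  have : FiniteDimensional ℝ (V →L[ℝ] V) := inferInstance
  have : CompleteSpace (V →L[ℝ] V) := FiniteDimensional.complete ℝ _
  have : ProperSpace (V →L[ℝ] V) := FiniteDimensional.proper ℝ _
  have : LocallyCompactSpace (V →L[ℝ] V)ˣ := Units.isOpenEmbedding_val.locallyCompactSpace
  obtain ⟨Γ, hΓG, ⟨S, J, n, h, hnorm⟩, hT⟩ := SyndeticHull.exists_triGroup G hGsolv
  obtain ⟨D, hD⟩ := h.exists_red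
  have := h.isSolvable_unitsOf
  exact SyndeticHull.exists_hull hΓG (h.le_M.trans hD.M_le) hT (fun g hg => hD.conj_Q (hnorm g hg))
    hD.exists_compact hD.exists_components (SyndeticHull.isClosed_unitsOf S) fun x hx => hD.Q_mem hx
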